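/- There exist uniform constants C ≥ 1 and C₃ ≥ 1 (independent of q, ε, and the chosen points) with the following property. Let r = 3, let q be a prime power, and fix pairwise distinct c₁,c₂,c₃ ∈ 𝔽_q and pairwise distinct c₁′,c₂′,c₃′ ∈ 𝔽_q. For a sufficiently small rational ε > 0, define the cone 𝒞_ε ⊆ N₃⊗ℝ of nef classes α = (a,a′,k₁,k₂,k₃) satisfying 2a − Σk_i ≥ 32εh(α), 2a′ − Σk_i ≥ 32εh(α), and k_i ≥ εh(α) for i = 1,2,3, and set N(𝒞_ε, d) = (q−1)^{−2} Σ #M̃(a,a′,𝐤), the sum over lattice points α ∈ 𝒞_ε ∩ N₃ with 0 < h(α) ≤ d (all of which have a, a′ ≥ 1 and k_i ≥ 1). If q^ε > C and q > C₃, then the limit α(𝒞_ε) := lim_{d→∞} q^{−d} d^{−4} Σ_{α ∈ 𝒞_ε ∩ N₃, 0 < h(α) ≤ d} q^{h(α)} exists and is positive, and N(𝒞_ε, d) / (q^d d^4) → α(𝒞_ε) · τ₃(q) as d → ∞, where τ₃(q) = q²(1−q^{−1})^{−5} ∏_c (1−q^{−|c|})^{5}(1 + 5q^{−|c|} + q^{−2|c|}).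 -/

import Mathlib

/-!
The proof passes to the universal torsor of the quintic del Pezzo surface. A quadruple
`(s₁, s₂, t₁, t₂)` is written as `s₁ - cᵢ s₂ = gᵢ yᵢ`, `t₁ - cᵢ' t₂ = gᵢ yᵢ'` with
`gᵢ = gcd (s₁ - cᵢ s₂) (t₁ - cᵢ' t₂)`, so that `deg gᵢ = kᵢ`, `deg yᵢ = a - kᵢ` and
`deg yᵢ' = a' - kᵢ`. The triples `(g, y, y')` are determined up to rescaling each `gᵢ`, and they are
characterised by one linear relation `∑ γᵢ gᵢ yᵢ = 0`, a second one for `y'`, and coprimality conditions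
at every closed point of `ℙ¹` (`card_Mtilde`).

For fixed `g` the solutions `y` of the relation form a space of syzygies `Lam`. By `dichotomy` its
dimension is the expected one, `2 (a + 1) - ∑ kᵢ`, unless `g` has an unusually short syzygy. Triples `g`
with a short syzygy are rare: the products `gᵢ wᵢ` with the short syzygy `w` lie in a small space, and `g`
is recovered from them up to a divisor bound, of size `8 ^ h` (`bad_short`). This is where `q ^ ε` has to be
large. For the remaining `g`, the values of `(g, y, y')` at a fixed finite set of closed points are
equidistributed (`lat_count`, `sum_red_g`), and over a field with `x` elements the local conditions have
`(x - 1) ^ 5 * (x ^ 2 + 5 * x + 1)` solutions (`sum_locSet`). Hence imposing the conditions at finitely many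
points produces a partial Euler product. The remaining points contribute little: primes of moderate degree
are counted directly, those of large degree again through the divisor bound (`tailA`, `tailB`). Letting
the set of points grow gives the count for a single class, uniformly in the class (`main_bound`, `asymp`),
except when `a - kᵢ` or `a' - kᵢ` is bounded. There the upper bound `cX_le` suffices.

It remains to sum over the cone. The classes of height `n` in `𝒞_ε` are, after projection, the points of
`n⁻¹ ℤ⁴` in a polytope of volume `V > 0`, so their number is asymptotic to `V n⁴` (`slice_asymp`), and
`O(n³)` of them are close to a facet `a = kᵢ` or `a' = kᵢ`. Both limits then follow from the convergence of
`q ^ (-d) d⁻⁴ ∑_{n ≤ d} q ^ n uₙ` to `V / (1 - q⁻¹)` when `uₙ / n⁴ → V` (`geom_average`), together with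
`q ^ 7 / (q - 1) ^ 5 = q² (1 - q⁻¹)⁻⁵`.
-/

open scoped BigOperators
open Filter

noncomputable section

/-- Binary forms live in the polynomial ring in two variables. -/
abbrev BForm (K : Type) [Field K] := MvPolynomial (Fin 2) K

/-- The counting set `M̃(a, a', 𝐤)`: quadruples `(s₁, s₂, t₁, t₂)` of binary forms with
`s₁, s₂` homogeneous of degree `a` and `t₁, t₂` homogeneous of degree `a'`, such that
`gcd (s₁, s₂)` and `gcd (t₁, t₂)` are nonzero constants and, for each `i`, the nonzero
forms `s₁ − cᵢ s₂` and `t₁ − cᵢ′ t₂` have a gcd which is homogeneous of degree exactly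
`kᵢ`. -/
def MtildeSet (K : Type) [Field K] (r : ℕ) (c c' : Fin r → K) (a a' : ℕ)
    (k : Fin r → ℕ) : Set (BForm K × BForm K × BForm K × BForm K) :=
  {x | MvPolynomial.IsHomogeneous x.1 a ∧ MvPolynomial.IsHomogeneous x.2.1 a ∧
       MvPolynomial.IsHomogeneous x.2.2.1 a' ∧ MvPolynomial.IsHomogeneous x.2.2.2 a' ∧
       (∀ d : BForm K, d ∣ x.1 → d ∣ x.2.1 → IsUnit d) ∧
       (∀ d : BForm K, d ∣ x.2.2.1 → d ∣ x.2.2.2 → IsUnit d) ∧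
       ∀ i : Fin r,
         x.1 - MvPolynomial.C (c i) * x.2.1 ≠ 0 ∧
         x.2.2.1 - MvPolynomial.C (c' i) * x.2.2.2 ≠ 0 ∧
         ∃ g : BForm K, MvPolynomial.IsHomogeneous g (k i) ∧
           (g ∣ x.1 - MvPolynomial.C (c i) * x.2.1) ∧
           (g ∣ x.2.2.1 - MvPolynomial.C (c' i) * x.2.2.2) ∧
           ∀ d : BForm K, d ∣ x.1 - MvPolynomial.C (c i) * x.2.1 →
             d ∣ x.2.2.1 - MvPolynomial.C (c' i) * x.2.2.2 → d ∣ g}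

/-- Closed points of ℙ¹ over a field: monic irreducible polynomials together with the
point at infinity. -/
def ClosedPoint (K : Type) [Field K] : Type :=
  {p : Polynomial K // p.Monic ∧ Irreducible p} ⊕ Unit

/-- The degree `|c|` of a closed point. -/
def cpDeg {K : Type} [Field K] : ClosedPoint K → ℕ
  | Sum.inl p => p.1.natDegree
  | Sum.inr _ => 1

/-- The local Euler factor `(1 − q^{−n})^{r+2} (1 + (r+2) q^{−n} + q^{−2n})` of the
Tamagawa number at a closed point of degree `n`. -/
def tauFactor (q r n : ℕ) : ℝ :=
  (1 - ((q : ℝ)⁻¹) ^ n) ^ (r + 2) *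
    (1 + (r + 2) * ((q : ℝ)⁻¹) ^ n + ((q : ℝ)⁻¹) ^ (2 * n))

/-- Peyre's Tamagawa number
`τ_r(q) = q² (1−q^{−1})^{−r−2} ∏_c (1−q^{−|c|})^{r+2} (1 + (r+2) q^{−|c|} + q^{−2|c|})`. -/
def tauNumber (K : Type) [Field K] [Fintype K] (r : ℕ) : ℝ :=
  (Fintype.card K : ℝ) ^ 2 * ((1 - (Fintype.card K : ℝ)⁻¹) ^ (r + 2))⁻¹ *
    ∏' cp : ClosedPoint K, tauFactor (Fintype.card K) r (cpDeg cp)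

/-- The intersection form on `N_r = ℤf ⊕ ℤf′ ⊕ ℤe₁ ⊕ ⋯ ⊕ ℤe_r` (coordinates
`(f, f′, e₁, …, e_r)`): `f·f = f′·f′ = 0`, `f·f′ = 1`, `f·eᵢ = f′·eᵢ = 0`,
`eᵢ·eⱼ = −δᵢⱼ`. -/
def inter (r : ℕ) (x y : Fin (r + 2) → ℤ) : ℤ :=
  x 0 * y 1 + x 1 * y 0 -
    ∑ i ∈ Finset.univ.filter fun i : Fin (r + 2) => 2 ≤ (i : ℕ), x i * y i

/-- The anticanonical class `−K = 2f + 2f′ − (e₁ + ⋯ + e_r)`. -/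
def antiK (r : ℕ) : Fin (r + 2) → ℤ := fun i => if (i : ℕ) < 2 then 2 else -1

/-- A `(−1)`-class: `v·v = −1` and `v·(−K) = 1`. -/
def minusOneClass (r : ℕ) (v : Fin (r + 2) → ℤ) : Prop :=
  inter r v v = -1 ∧ inter r v (antiK r) = 1

/-- A class is nef if it pairs nonnegatively with every `(−1)`-class. -/
def nefVec (r : ℕ) (α : Fin (r + 2) → ℤ) : Prop :=
  ∀ v : Fin (r + 2) → ℤ, minusOneClass r v → 0 ≤ inter r α v

/-- The class `α = a′f + af′ − Σᵢ kᵢeᵢ` with invariants `(a, a′, 𝐤)`. -/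
def vecOf (r : ℕ) (a a' : ℕ) (k : Fin r → ℕ) : Fin (r + 2) → ℤ := fun i =>
  if h0 : (i : ℕ) = 0 then (a' : ℤ)
  else if h1 : (i : ℕ) = 1 then (a : ℤ)
  else -(k ⟨(i : ℕ) - 2, by have := i.isLt; omega⟩ : ℤ)

/-- The height `h(α) = 2a + 2a′ − Σᵢ kᵢ` of the class with invariants
`x = (a, a′, 𝐤)`, as a rational number. -/
def hQ (r : ℕ) (x : ℕ × ℕ × (Fin r → ℕ)) : ℚ :=
  2 * x.1 + 2 * x.2.1 - ∑ i, (x.2.2 i : ℚ)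

/-- The height `h(α) = 2a + 2a′ − Σᵢ kᵢ` of the class with invariants
`x = (a, a′, 𝐤)`, as a natural number. -/
def hN (r : ℕ) (x : ℕ × ℕ × (Fin r → ℕ)) : ℕ :=
  2 * x.1 + 2 * x.2.1 - ∑ i, x.2.2 i

/-- Lattice points of the cone of nef classes `α = (a, a′, 𝐤)` with
`2a − Σkᵢ ≥ ε₁ h(α)`, `2a′ − Σkᵢ ≥ ε₁ h(α)`, `kᵢ ≥ ε₂ h(α)` for all `i`,
together with the counting condition `0 < h(α) ≤ d`. -/
def coneSet (r : ℕ) (ε₁ ε₂ : ℚ) (d : ℕ) : Set (ℕ × ℕ × (Fin r → ℕ)) :=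
  {x | nefVec r (vecOf r x.1 x.2.1 x.2.2) ∧
    ε₁ * hQ r x ≤ 2 * x.1 - ∑ i, (x.2.2 i : ℚ) ∧
    ε₁ * hQ r x ≤ 2 * x.2.1 - ∑ i, (x.2.2 i : ℚ) ∧
    (∀ i, ε₂ * hQ r x ≤ (x.2.2 i : ℚ)) ∧
    0 < hQ r x ∧ hQ r x ≤ d}

/-! ### Syzygies of three binary forms -/

namespace dP5
open Polynomial

/-- The syzygies of the triple `G`, graded by `B`: triples `y` with `deg y i < B - k i` and
`∑ G i * y i = 0`. When the `G i` are dehomogenised forms of degrees `k i`, all products `G i * y i`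
are forms of degree `B - 1`. For `B < k i` the truncated subtraction forces `y i = 0`. -/
def Lam {K : Type} [Field K] (k : Fin 3 → ℕ) (G : Fin 3 → K[X]) (B : ℕ) :
    Submodule K (Fin 3 → K[X]) where
  carrier := {y | (∀ i, y i ∈ degreeLT K (B - k i)) ∧ ∑ i, G i * y i = 0}
  add_mem' := by
    rintro x y ⟨hx, hx'⟩ ⟨hy, hy'⟩
    refine ⟨fun i => Submodule.add_mem _ (hx i) (hy i), ?_⟩
    simp [mul_add, Finset.sum_add_distrib, hx', hy']
  zero_mem' := ⟨fun i => Submodule.zero_mem _, by simp⟩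
  smul_mem' := by
    rintro r x ⟨hx, hx'⟩
    refine ⟨fun i => Submodule.smul_mem _ _ (hx i), ?_⟩
    simp [← Finset.smul_sum, hx']


variable {K : Type} [Field K]

lemma mem_Lam {k : Fin 3 → ℕ} {G : Fin 3 → K[X]} {B : ℕ} {y : Fin 3 → K[X]} :
    y ∈ Lam k G B ↔ (∀ i, y i ∈ degreeLT K (B - k i)) ∧ ∑ i, G i * y i = 0 := Iff.rfl

lemma natDegree_le_of_mem {n : ℕ} {f : K[X]} (hf : f ∈ degreeLT K n) : f.natDegree ≤ n - 1 := by
  rw [mem_degreeLT] at hf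
  by_cases h : f = 0
  · simp [h]
  · have := (natDegree_lt_iff_degree_lt h).2 hf
    omega

lemma eq_zero_of_mem_zero {f : K[X]} (hf : f ∈ degreeLT K 0) : f = 0 := by
  rw [mem_degreeLT] at hf
  by_contra h
  have := (natDegree_lt_iff_degree_lt h).2 hf
  omega

lemma mem_degreeLT_iff {n : ℕ} {f : K[X]} : f ∈ degreeLT K n ↔ f = 0 ∨ f.natDegree < n := by
  rw [mem_degreeLT]
  by_cases h : f = 0
  · simp [h]
  · simp [h, natDegree_lt_iff_degree_lt h]

lemma X_mul_mem_iff {n : ℕ} {f : K[X]} : X * f ∈ degreeLT K n ↔ f ∈ degreeLT K (n - 1) := by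
  rw [mem_degreeLT_iff, mem_degreeLT_iff]
  by_cases h : f = 0
  · simp [h]
  · rw [natDegree_X_mul h]; simp [h]; omega

lemma mul_mem_degreeLT {n m : ℕ} {f g : K[X]} (hf : f ∈ degreeLT K (n + 1))
    (hg : g ∈ degreeLT K m) : f * g ∈ degreeLT K (n + m) := by
  rw [mem_degreeLT_iff] at *
  by_cases h : f = 0
  · simp [h]
  by_cases h' : g = 0
  · simp [h']
  right
  rw [natDegree_mul h h']
  simp [h, h'] at hf hg
  omega

lemma mem_of_mul_mem {n : ℕ} {f g : K[X]} (hf : f ≠ 0)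
    (h : f * g ∈ degreeLT K n) : g ∈ degreeLT K (n - f.natDegree) := by
  rw [mem_degreeLT_iff] at *
  by_cases h' : g = 0
  · simp [h']
  right
  rw [natDegree_mul hf h'] at h
  simp [hf, h'] at h
  omega

lemma finrank_degreeLT (n : ℕ) : Module.finrank K (degreeLT K n) = n := by
  rw [(degreeLTEquiv K n).finrank_eq]; simp

instance (n : ℕ) : FiniteDimensional K (degreeLT K n) :=
  Module.Finite.equiv (degreeLTEquiv K n).symm

/-- The space of triples with prescribed degree bounds. -/
abbrev Box (K : Type) [Field K] (k : Fin 3 → ℕ) (B : ℕ) := ∀ i, degreeLT K (B - k i)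

/-- The inclusion of the syzygies into the finite-dimensional space of triples with the same degree
bounds. -/
def lamToBox (k : Fin 3 → ℕ) (G : Fin 3 → K[X]) (B : ℕ) : Lam k G B →ₗ[K] Box K k B where
  toFun y i := ⟨y.1 i, y.2.1 i⟩
  map_add' _ _ := rfl
  map_smul' _ _ := rfl

lemma lamToBox_inj (k : Fin 3 → ℕ) (G : Fin 3 → K[X]) (B : ℕ) :
    Function.Injective (lamToBox k G B) := by
  intro x y h
  ext1; funext i
  exact congrArg Subtype.val (congrFun h i)

instance (k : Fin 3 → ℕ) (G : Fin 3 → K[X]) (B : ℕ) : FiniteDimensional K (Lam k G B) :=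
  Module.Finite.of_injective _ (lamToBox_inj k G B)

/-- The dimension of the space of syzygies of level `B`. -/
def dL (k : Fin 3 → ℕ) (G : Fin 3 → K[X]) (B : ℕ) : ℕ := Module.finrank K (Lam k G B)

/-- All products `G i * y i` have degree `< B`, so the relation imposes at most `B` linear conditions. -/
lemma dL_lower (k : Fin 3 → ℕ) (G : Fin 3 → K[X]) (hG : ∀ i, G i ∈ degreeLT K (k i + 1)) (B : ℕ) :
    2 * B ≤ dL k G B + ∑ i, k i := by
  have hmul : ∀ (i : Fin 3) (f : K[X]), f ∈ degreeLT K (B - k i) → G i * f ∈ degreeLT K B := by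
    intro i f hf
    by_cases h : k i ≤ B
    · have := mul_mem_degreeLT (hG i) hf
      rwa [Nat.add_sub_cancel' h] at this
    · rw [Nat.sub_eq_zero_of_le (by omega)] at hf
      rw [eq_zero_of_mem_zero hf, mul_zero]; exact Submodule.zero_mem _
  let φ : Box K k B →ₗ[K] degreeLT K B :=
    { toFun := fun y => ⟨∑ i, G i * (y i).1, Submodule.sum_mem _ fun i _ => hmul i _ (y i).2⟩
      map_add' := by intro x y; ext1; simp [mul_add, Finset.sum_add_distrib]
      map_smul' := by intro r x; ext1; simp [Finset.smul_sum] }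
  have h1 := LinearMap.finrank_range_add_finrank_ker φ
  have h2 : Module.finrank K (LinearMap.range φ) ≤ B := by
    have := Submodule.finrank_le (LinearMap.range φ)
    rwa [finrank_degreeLT] at this
  have h3 : Module.finrank K (LinearMap.ker φ) ≤ dL k G B := by
    let ψ : LinearMap.ker φ →ₗ[K] Lam k G B :=
      { toFun := fun y => ⟨fun i => (y.1 i).1, fun i => (y.1 i).2, by
          have := y.2
          rw [LinearMap.mem_ker] at this
          exact congrArg Subtype.val this⟩
        map_add' := fun _ _ => rfl
        map_smul' := fun _ _ => rfl }
    refine LinearMap.finrank_le_finrank_of_injective (f := ψ) ?_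
    intro x y h
    ext1; funext i; ext1
    exact congrFun (congrArg Subtype.val h) i
  have h4 : Module.finrank K (Box K k B) = ∑ i, (B - k i) := by
    rw [Module.finrank_pi_fintype]
    simp [finrank_degreeLT]
  rw [h4] at h1
  simp only [Fin.sum_univ_three] at *
  omega

lemma Lam_mono (k : Fin 3 → ℕ) (G : Fin 3 → K[X]) {B B' : ℕ} (h : B ≤ B') :
    Lam k G B ≤ Lam k G B' := by
  rintro y ⟨h1, h2⟩
  exact ⟨fun i => degreeLT_mono (by omega) (h1 i), h2⟩

lemma dL_mono (k : Fin 3 → ℕ) (G : Fin 3 → K[X]) {B B' : ℕ} (h : B ≤ B') :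
    dL k G B ≤ dL k G B' := Submodule.finrank_mono (Lam_mono k G h)

lemma Lam_zero (k : Fin 3 → ℕ) (G : Fin 3 → K[X]) : Lam k G 0 = ⊥ := by
  rw [eq_bot_iff]
  rintro y ⟨h1, h2⟩
  rw [Submodule.mem_bot]
  funext i
  exact eq_zero_of_mem_zero (by simpa using h1 i)

/-- multiplication by a polynomial on triples -/
def mulL (f : K[X]) : (Fin 3 → K[X]) →ₗ[K] (Fin 3 → K[X]) where
  toFun y i := f * y i
  map_add' x y := by funext i; simp [mul_add]
  map_smul' r x := by funext i; simp

lemma mulL_inj {f : K[X]} (hf : f ≠ 0) : Function.Injective (mulL f) := by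
  intro x y h
  funext i
  exact mul_left_cancel₀ hf (congrFun h i)

lemma mulL_mem_sum {G y : Fin 3 → K[X]} {f : K[X]} (h : ∑ i, G i * y i = 0) :
    ∑ i, G i * (mulL f y) i = 0 := by
  have : ∑ i, G i * (mulL f y) i = f * ∑ i, G i * y i := by
    rw [Finset.mul_sum]; exact Finset.sum_congr rfl fun i _ => by simp [mulL]; ring
  rw [this, h, mul_zero]

/-- The dimension is a convex function of `B`: `Lam k G (B + 1)` and `X • Lam k G (B + 1)` both lie in
`Lam k G (B + 2)`, and their intersection is contained in `X • Lam k G B`. -/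
lemma dL_convex (k : Fin 3 → ℕ) (G : Fin 3 → K[X]) (B : ℕ) :
    2 * dL k G (B + 1) ≤ dL k G B + dL k G (B + 2) := by
  have hX : Function.Injective (mulL (X : K[X])) := mulL_inj X_ne_zero
  set S := Lam k G (B + 1)
  set T := S.map (mulL (X : K[X]))
  have hT : T ≤ Lam k G (B + 2) := by
    rintro _ ⟨y, ⟨h1, h2⟩, rfl⟩
    refine ⟨fun i => ?_, mulL_mem_sum h2⟩
    exact X_mul_mem_iff.2 (degreeLT_mono (by omega) (h1 i))
  have hinf : S ⊓ T ≤ (Lam k G B).map (mulL (X : K[X])) := by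
    rintro _ ⟨hS, ⟨y, ⟨h1, h2⟩, rfl⟩⟩
    refine ⟨y, ⟨fun i => ?_, h2⟩, rfl⟩
    have := X_mul_mem_iff.1 (hS.1 i)
    exact degreeLT_mono (by omega) this
  have e1 : Module.finrank K T = dL k G (B + 1) := (Submodule.equivMapOfInjective _ hX S).finrank_eq.symm
  have e2 : Module.finrank K ((Lam k G B).map (mulL (X : K[X]))) = dL k G B :=
    (Submodule.equivMapOfInjective _ hX _).finrank_eq.symm
  have : FiniteDimensional K S := inferInstanceAs (FiniteDimensional K (Lam k G (B + 1)))
  have : FiniteDimensional K T := Module.Finite.map _ _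
  have h := Submodule.finrank_sup_add_finrank_inf_eq S T
  have h3 : Module.finrank K ↥(S ⊔ T) ≤ dL k G (B + 2) :=
    Submodule.finrank_mono (sup_le (Lam_mono k G (by omega)) hT)
  have h4 := Submodule.finrank_mono hinf
  rw [e2] at h4
  have h5 : Module.finrank K S = dL k G (B + 1) := rfl
  omega

/-- Dehomogenised triples of forms of degrees `k i`, pairwise without common zero on `ℙ¹`; `inf` is the
condition at the point at infinity. -/
structure Cop (k : Fin 3 → ℕ) (G : Fin 3 → K[X]) : Prop where
  deg : ∀ i, G i ∈ degreeLT K (k i + 1)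
  cop : ∀ i j, i ≠ j → IsCoprime (G i) (G j)
  inf : ∀ i j, i ≠ j → ¬ ((G i).coeff (k i) = 0 ∧ (G j).coeff (k j) = 0)

lemma natDegree_eq_of_coeff {n : ℕ} {f : K[X]} (hf : f ∈ degreeLT K (n + 1)) (h : f.coeff n ≠ 0) :
    f.natDegree = n :=
  le_antisymm (by have := natDegree_le_of_mem hf; omega) (le_natDegree_of_ne_zero h)

lemma syz_zero_aux {a b : ℕ} {B : ℕ} {g h y z : K[X]} (hg : g ∈ degreeLT K (a + 1))
    (hgc : g.coeff a ≠ 0) (hc : IsCoprime g h) (hz : z ∈ degreeLT K (B - b))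
    (he : g * y + h * z = 0) : ∃ f ∈ degreeLT K (B - a - b), y = h * f ∧ z = -(g * f) := by
  have hg0 : g ≠ 0 := by rintro rfl; simp at hgc
  have hd : g ∣ h * z := ⟨-y, by linear_combination he⟩
  obtain ⟨f, hf⟩ := hc.dvd_of_dvd_mul_left hd
  refine ⟨-f, ?_, ?_, ?_⟩
  · rw [hf] at hz
    have := mem_of_mul_mem hg0 hz
    rw [natDegree_eq_of_coeff hg hgc] at this
    rw [Nat.sub_right_comm]
    exact Submodule.neg_mem _ this
  · apply mul_left_cancel₀ hg0
    rw [hf] at he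
    linear_combination he
  · rw [hf]; ring

/-- Syzygies with a vanishing entry are multiples of a Koszul syzygy. -/
lemma syz_zero {k : Fin 3 → ℕ} {G : Fin 3 → K[X]} (hG : Cop k G) {B : ℕ} {y : Fin 3 → K[X]}
    (hy : y ∈ Lam k G B) {i j l : Fin 3} (hij : i ≠ j) (hs : ∀ F : Fin 3 → K[X],
      ∑ i, F i = F i + F j + F l) (hl : y l = 0) :
    ∃ f ∈ degreeLT K (B - k i - k j), y i = G j * f ∧ y j = -(G i * f) := by
  have he := hy.2
  rw [hs, hl, mul_zero, add_zero] at he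
  by_cases h : (G i).coeff (k i) = 0
  · have h' : (G j).coeff (k j) ≠ 0 := fun h' => hG.inf i j hij ⟨h, h'⟩
    obtain ⟨f, hf, h1, h2⟩ := syz_zero_aux (y := y j) (hG.deg j) h' (hG.cop j i hij.symm) (hy.1 i)
      (by linear_combination he)
    refine ⟨-f, ?_, by rw [h2]; ring, by rw [h1]; ring⟩
    rw [Nat.sub_right_comm]; exact Submodule.neg_mem _ hf
  · exact syz_zero_aux (hG.deg i) h (hG.cop i j hij) (hy.1 j) he

/-- For `B` at least `∑ k i` the dimension is at most the expected one. -/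
lemma dL_upper {k : Fin 3 → ℕ} {G : Fin 3 → K[X]} (hG : Cop k G) {B : ℕ} (hB : ∑ i, k i ≤ B) :
    dL k G B + ∑ i, k i ≤ 2 * B := by
  let π : Lam k G B →ₗ[K] degreeLT K (B - k 2) :=
    { toFun := fun y => ⟨y.1 2, y.2.1 2⟩
      map_add' := fun _ _ => rfl
      map_smul' := fun _ _ => rfl }
  have h1 := LinearMap.finrank_range_add_finrank_ker π
  have h2 : Module.finrank K (LinearMap.range π) ≤ B - k 2 := by
    have := Submodule.finrank_le (LinearMap.range π)
    rwa [finrank_degreeLT] at this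
  have h3 : Module.finrank K (LinearMap.ker π) ≤ B - k 0 - k 1 := by
    let ψ : degreeLT K (B - k 0 - k 1) →ₗ[K] (Fin 3 → K[X]) :=
      { toFun := fun f => ![G 1 * f.1, -(G 0 * f.1), 0]
        map_add' := by intro x y; funext i; fin_cases i <;> simp [mul_add, add_comm]
        map_smul' := by intro r x; funext i; fin_cases i <;> simp }
    let χ : LinearMap.ker π →ₗ[K] (Fin 3 → K[X]) := (Lam k G B).subtype ∘ₗ (LinearMap.ker π).subtype
    have hχ : Function.Injective χ := by
      intro x y h; ext1; ext1; exact h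
    have hle : LinearMap.range χ ≤ LinearMap.range ψ := by
      rintro _ ⟨y, rfl⟩
      have hy2 : y.1.1 2 = 0 := congrArg Subtype.val (LinearMap.mem_ker.1 y.2)
      obtain ⟨f, hf, e1, e2⟩ := syz_zero hG y.1.2 (i := 0) (j := 1) (l := 2) (by decide)
        (fun F => Fin.sum_univ_three F) hy2
      refine ⟨⟨f, hf⟩, ?_⟩
      funext i
      fin_cases i
      · exact e1.symm
      · exact e2.symm
      · exact hy2.symm
    calc Module.finrank K (LinearMap.ker π) = Module.finrank K (LinearMap.range χ) :=
          (LinearMap.finrank_range_of_inj hχ).symm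
      _ ≤ Module.finrank K (LinearMap.range ψ) := Submodule.finrank_mono hle
      _ ≤ Module.finrank K (degreeLT K (B - k 0 - k 1)) := LinearMap.finrank_range_le ψ
      _ = _ := finrank_degreeLT _
  have h4 : Module.finrank K (Lam k G B) = dL k G B := rfl
  simp only [Fin.sum_univ_three] at *
  omega

/-- A convex sequence bounded below by, and eventually equal to, an affine function of slope 2. -/
lemma convex_seq {d : ℕ → ℕ} {k : ℕ} (h0 : d 0 = 0) (hc : ∀ B, 2 * d (B + 1) ≤ d B + d (B + 2))
    (hl : ∀ B, 2 * B ≤ d B + k) (hu : ∀ B, k ≤ B → d B + k ≤ 2 * B) (hm : Monotone d) (B : ℕ)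
    (hB : d B + k ≠ 2 * B) (hpos : d B ≠ 0) :
    ∃ m, m + 1 + B ≤ k ∧ m < B ∧ d m = 0 ∧ d (m + 1) = 1 ∧ d B ≤ B - m := by
  have hinc : ∀ j i, i ≤ j → d (i + 1) + d j ≤ d i + d (j + 1) := by
    intro j
    induction j with
    | zero => intro i hi; obtain rfl : i = 0 := by omega
              omega
    | succ j ih =>
      intro i hi
      rcases Nat.lt_or_ge i (j + 1) with h | h
      · have h1 := ih i (by omega); have h2 := hc j
        rw [show j + 1 + 1 = j + 2 from rfl]; omega
      · obtain rfl : i = j + 1 := by omega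
        omega
  have hstep : d (B + 1) ≤ d B + 1 := by
    by_contra hcon
    have : ∀ t, d B + 2 * t ≤ d (B + t) := by
      intro t
      induction t with
      | zero => simp
      | succ t ih => have := hinc (B + t) B (by omega); rw [← add_assoc]; omega
    have h1 := this k
    have h2 := hu (B + k) (by omega)
    have h3 := hl B
    omega
  have hstep' : ∀ i, i ≤ B → d (i + 1) ≤ d i + 1 := fun i hi => by
    have := hinc B i hi; omega
  classical
  have hex : ∃ m, d m ≠ 0 := ⟨B, hpos⟩
  obtain ⟨m, hm'⟩ : ∃ m, Nat.find hex = m + 1 := by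
    refine Nat.exists_eq_succ_of_ne_zero ?_
    intro h
    have := Nat.find_spec hex
    rw [h] at this; exact this h0
  have hm1 : d (m + 1) ≠ 0 := hm' ▸ Nat.find_spec hex
  have hm0 : d m = 0 := by
    by_contra h
    have := Nat.find_min' hex h
    omega
  have hmB : m < B := by
    by_contra h
    have := hm (show B ≤ m by omega)
    omega
  have hsum : ∀ t, m + t ≤ B + 1 → d (m + t) ≤ t := by
    intro t
    induction t with
    | zero => intro _; simp [hm0]
    | succ t ih => intro h; have := ih (by omega); have := hstep' (m + t) (by omega)
                   rw [← add_assoc]; omega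
  refine ⟨m, ?_, hmB, hm0, ?_, ?_⟩
  · have := hsum (B + 1 - m) (by omega)
    rw [show m + (B + 1 - m) = B + 1 by omega] at this
    have := hl (B + 1)
    omega
  · have := hstep' m (by omega); omega
  · have := hsum (B - m) (by omega)
    rwa [show m + (B - m) = B by omega] at this

/-- Either the space of syzygies of level `B` has the expected dimension `2 B - ∑ k i`, or it vanishes
for trivial reasons, or all of it consists of the multiples of one short syzygy `w`. -/
lemma dichotomy {k : Fin 3 → ℕ} {G : Fin 3 → K[X]} (hG : Cop k G) (B : ℕ) :
    dL k G B + ∑ i, k i = 2 * B ∨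
    (dL k G B = 0 ∧ 2 * B < ∑ i, k i) ∨
    ∃ m, ∃ w ∈ Lam k G (m + 1), w ≠ 0 ∧ m + 1 + B ≤ ∑ i, k i ∧ m < B ∧
      ∀ y ∈ Lam k G B, ∃ f ∈ degreeLT K (B - m), y = fun i => f * w i := by
  by_cases hB : dL k G B + ∑ i, k i = 2 * B
  · exact Or.inl hB
  right
  by_cases hpos : dL k G B = 0
  · left
    have := dL_lower k G hG.deg B
    exact ⟨hpos, by omega⟩
  right
  obtain ⟨m, h1, h2, h3, h4, h5⟩ := convex_seq (d := dL k G) (k := ∑ i, k i)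
    (by unfold dL; rw [Lam_zero]; simp) (dL_convex k G) (dL_lower k G hG.deg)
    (fun B hB => dL_upper hG hB) (fun _ _ h => dL_mono k G h) B hB hpos
  have hne : Lam k G (m + 1) ≠ ⊥ := by
    intro h
    unfold dL at h4; rw [h] at h4; simp at h4
  obtain ⟨w, hw, hw0⟩ := Submodule.exists_mem_ne_zero_of_ne_bot hne
  refine ⟨m, w, hw, hw0, h1, h2, ?_⟩
  -- multiples of `w` fill out everything, by dimension
  let ψ : degreeLT K (B - m) →ₗ[K] Lam k G B :=
    { toFun := fun f => ⟨fun i => f.1 * w i, fun i => by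
          obtain ⟨f, hf⟩ := f
          have h := hw.1 i
          rw [mem_degreeLT_iff] at hf h ⊢
          by_cases h0 : f = 0
          · simp [h0]
          by_cases h0' : w i = 0
          · simp [h0']
          simp only [h0, h0', false_or] at hf h
          right
          show (f * w i).natDegree < _
          rw [natDegree_mul h0 h0']
          omega, mulL_mem_sum hw.2⟩
      map_add' := by intro x y; ext1; funext i; simp [add_mul]
      map_smul' := by intro r x; ext1; funext i; simp }
  have hψ : Function.Injective ψ := by
    intro x y h
    obtain ⟨i, hi⟩ := Function.ne_iff.1 hw0
    have := congrFun (congrArg Subtype.val h) i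
    exact Subtype.ext (mul_right_cancel₀ hi this)
  have hr : LinearMap.range ψ = ⊤ := by
    apply Submodule.eq_top_of_finrank_eq
    apply le_antisymm (Submodule.finrank_le _)
    rw [LinearMap.finrank_range_of_inj hψ, finrank_degreeLT]
    exact h5
  intro y hy
  obtain ⟨f, hf⟩ := LinearMap.range_eq_top.1 hr ⟨y, hy⟩
  exact ⟨f.1, f.2, (congrArg Subtype.val hf).symm⟩

end dP5

/-! ### Counting syzygies over a finite field -/

namespace dP5
open Polynomial
open scoped Classical

variable {K : Type} [Field K] [Fintype K]

/-- The cardinality `q` of the field. -/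
abbrev qK (K : Type) [Fintype K] : ℕ := Fintype.card K

instance finite_degreeLT (n : ℕ) : Finite (degreeLT K n) := Module.finite_of_finite K

instance finite_Lam (k : Fin 3 → ℕ) (G : Fin 3 → K[X]) (B : ℕ) : Finite (Lam k G B) :=
  Module.finite_of_finite K

/-- The finset of polynomials of degree `< n`. -/
def PF (K : Type) [Field K] [Fintype K] (n : ℕ) : Finset K[X] :=
  (show ((degreeLT K n : Submodule K K[X]) : Set K[X]).Finite from
    @Set.toFinite _ _ (finite_degreeLT n)).toFinset

lemma mem_PF {n : ℕ} {f : K[X]} : f ∈ PF K n ↔ f ∈ degreeLT K n := by simp [PF]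

lemma card_PF (n : ℕ) : (PF K n).card = qK K ^ n := by
  have h := Module.natCard_eq_pow_finrank (K := K) (V := degreeLT K n)
  rw [finrank_degreeLT, Nat.card_eq_fintype_card (α := K)] at h
  rw [← h, PF, ← Set.ncard_eq_toFinset_card (degreeLT K n : Set K[X]) _]
  rfl

/-- `Lam k G B` as a finset. -/
def LamF (k : Fin 3 → ℕ) (G : Fin 3 → K[X]) (B : ℕ) : Finset (Fin 3 → K[X]) :=
  (show (Lam k G B : Set (Fin 3 → K[X])).Finite from
    @Set.toFinite _ _ (finite_Lam k G B)).toFinset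

lemma mem_LamF {k : Fin 3 → ℕ} {G : Fin 3 → K[X]} {B : ℕ} {y : Fin 3 → K[X]} :
    y ∈ LamF k G B ↔ y ∈ Lam k G B := by simp [LamF]

lemma card_LamF (k : Fin 3 → ℕ) (G : Fin 3 → K[X]) (B : ℕ) :
    (LamF k G B).card = qK K ^ dL k G B := by
  have h := Module.natCard_eq_pow_finrank (K := K) (V := Lam k G B)
  rw [Nat.card_eq_fintype_card (α := K)] at h
  rw [dL, ← h, LamF, ← Set.ncard_eq_toFinset_card (Lam k G B : Set (Fin 3 → K[X])) _]
  rfl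

lemma one_lt_qK : 1 < qK K := Fintype.one_lt_card
lemma qK_pos : 0 < qK K := Fintype.card_pos

/-- Every syzygy of `G` of level `N` has a vanishing entry. -/
def NoShort (k : Fin 3 → ℕ) (G : Fin 3 → K[X]) (N : ℕ) : Prop :=
  ∀ w ∈ Lam k G N, ∃ i, w i = 0

/-- The syzygies of level `B` all of whose entries are non-zero. -/
def LamNZ (k : Fin 3 → ℕ) (G : Fin 3 → K[X]) (B : ℕ) : Finset (Fin 3 → K[X]) :=
  (LamF k G B).filter fun y => ∀ i, y i ≠ 0

lemma mem_LamNZ {k : Fin 3 → ℕ} {G : Fin 3 → K[X]} {B : ℕ} {y : Fin 3 → K[X]} :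
    y ∈ LamNZ k G B ↔ y ∈ Lam k G B ∧ ∀ i, y i ≠ 0 := by simp [LamNZ, mem_LamF]

/-- When `G` has no short syzygy of level `N`, the number of syzygies without vanishing entries is at most
the expected one, or at most `q ^ (B - N)` when all of them are multiples of one syzygy. -/
lemma card_LamNZ {k : Fin 3 → ℕ} {G : Fin 3 → K[X]} (hG : Cop k G) {N : ℕ} (hN : NoShort k G N)
    (B : ℕ) : (LamNZ k G B).card * qK K ^ (∑ i, k i) ≤ qK K ^ (2 * B) ∨
      (LamNZ k G B).card * qK K ^ N ≤ qK K ^ B := by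
  have hle : (LamNZ k G B).card ≤ (LamF k G B).card := Finset.card_filter_le _ _
  rcases dichotomy hG B with h | ⟨h, -⟩ | ⟨m, w, hw, hw0, h1, h2, h3⟩
  · left
    calc _ ≤ (LamF k G B).card * qK K ^ (∑ i, k i) := Nat.mul_le_mul_right _ hle
      _ = _ := by rw [card_LamF, ← pow_add, h]
  · left
    have : (LamNZ k G B).card = 0 := by
      rw [Finset.card_eq_zero, Finset.eq_empty_iff_forall_notMem]
      intro y hy
      rw [mem_LamNZ] at hy
      have hb : Lam k G B = ⊥ := Submodule.finrank_eq_zero.1 h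
      rw [hb] at hy
      exact hy.2 0 (by rw [(Submodule.mem_bot K).1 hy.1]; rfl)
    rw [this, zero_mul]; exact Nat.zero_le _
  · right
    rcases (LamNZ k G B).eq_empty_or_nonempty with he | ⟨y, hy⟩
    · rw [he]; simp
    have hwnz : ∀ i, w i ≠ 0 := by
      intro i hi
      rw [mem_LamNZ] at hy
      obtain ⟨f, -, hf⟩ := h3 y hy.1
      exact hy.2 i (by rw [hf]; simp [hi])
    have hNm : N ≤ m := by
      by_contra hcon
      obtain ⟨i, hi⟩ := hN w (Lam_mono k G (by omega) hw)
      exact hwnz i hi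
    have hc : (LamNZ k G B).card ≤ qK K ^ (B - m) := by
      rw [← card_PF (K := K)]
      calc (LamNZ k G B).card ≤ ((PF K (B - m)).image fun f => fun i => f * w i).card := by
            apply Finset.card_le_card
            intro y hy
            obtain ⟨f, hf, rfl⟩ := h3 y (mem_LamNZ.1 hy).1
            exact Finset.mem_image_of_mem _ (mem_PF.2 hf)
        _ ≤ _ := Finset.card_image_le
    calc _ ≤ qK K ^ (B - m) * qK K ^ N := Nat.mul_le_mul_right _ hc
      _ = qK K ^ (B - m + N) := by rw [pow_add]
      _ ≤ _ := Nat.pow_le_pow_right qK_pos (by omega)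

/-- Syzygies all of whose entries are divisible by `p`: dividing by `p` lowers the level. In this lemma and
the two that follow, the second alternative is the case where all syzygies are multiples of a single
one. -/
lemma card_T1 {k : Fin 3 → ℕ} {G : Fin 3 → K[X]} (hG : Cop k G) {N : ℕ} (hN : NoShort k G N)
    (B : ℕ) {p : K[X]} (hp : p ≠ 0) :
    ((LamNZ k G B).filter fun y => ∀ i, p ∣ y i).card * qK K ^ (∑ i, k i + 2 * p.natDegree)
      ≤ qK K ^ (2 * B) ∨
    ((LamNZ k G B).filter fun y => ∀ i, p ∣ y i).card * qK K ^ N ≤ qK K ^ B := by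
  set S := (LamNZ k G B).filter fun y => ∀ i, p ∣ y i with hS
  set j := p.natDegree with hj
  rcases S.eq_empty_or_nonempty with he | ⟨y, hy⟩
  · rw [he]; simp
  have hjB : j ≤ B := by
    rw [hS, Finset.mem_filter, mem_LamNZ] at hy
    have h1 := natDegree_le_of_dvd (hy.2 0) (hy.1.2 0)
    have h2 := (mem_degreeLT_iff.1 (hy.1.1.1 0)).resolve_left (hy.1.2 0)
    omega
  have hc : S.card ≤ (LamNZ k G (B - j)).card := by
    calc S.card ≤ ((LamNZ k G (B - j)).image (mulL p)).card := by
          apply Finset.card_le_card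
          intro y hy
          rw [hS, Finset.mem_filter, mem_LamNZ] at hy
          obtain ⟨⟨h1, h2⟩, h3⟩ := hy
          choose z hz using h3
          rw [Finset.mem_image]
          refine ⟨z, mem_LamNZ.2 ⟨⟨fun i => ?_, ?_⟩, fun i hi => h2 i (by rw [hz, hi, mul_zero])⟩, ?_⟩
          · have := h1.1 i
            rw [hz] at this
            rw [Nat.sub_right_comm]; exact mem_of_mul_mem hp this
          · have := h1.2
            apply mul_left_cancel₀ hp
            rw [mul_zero, ← this, Finset.mul_sum]
            exact Finset.sum_congr rfl fun i _ => by rw [hz i]; ring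
          · funext i; exact (hz i).symm
      _ ≤ _ := Finset.card_image_le
  rcases card_LamNZ hG hN (B - j) with h | h
  · left
    calc S.card * qK K ^ (∑ i, k i + 2 * j)
        ≤ (LamNZ k G (B - j)).card * qK K ^ (∑ i, k i + 2 * j) := Nat.mul_le_mul_right _ hc
      _ = (LamNZ k G (B - j)).card * qK K ^ (∑ i, k i) * qK K ^ (2 * j) := by rw [pow_add]; ring
      _ ≤ qK K ^ (2 * (B - j)) * qK K ^ (2 * j) := Nat.mul_le_mul_right _ h
      _ = _ := by rw [← pow_add]; congr 1; omega
  · right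
    calc _ ≤ (LamNZ k G (B - j)).card * qK K ^ N := Nat.mul_le_mul_right _ hc
      _ ≤ _ := h
      _ ≤ _ := Nat.pow_le_pow_right qK_pos (by omega)

lemma sum_update (k : Fin 3 → ℕ) (i : Fin 3) (b : ℕ) :
    ∑ l, Function.update k i b l + k i = ∑ l, k l + b := by
  fin_cases i <;> simp [Fin.sum_univ_three, Function.update] <;> ring

/-- Syzygies whose entries other than `y i₀` are divisible by a divisor `p` of `G i₀`: they come from
syzygies of the triple in which `G i₀` is replaced by `G i₀ / p`. -/
lemma card_T2 {k : Fin 3 → ℕ} {G : Fin 3 → K[X]} (hG : Cop k G) {N : ℕ} (hN : NoShort k G N)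
    (B : ℕ) {p : K[X]} (hp : p ≠ 0) (i₀ : Fin 3) (hpG : p ∣ G i₀) (hG0 : G i₀ ≠ 0) :
    ((LamNZ k G B).filter fun y => ∀ i, i ≠ i₀ → p ∣ y i).card *
        qK K ^ (∑ i, k i + p.natDegree) ≤ qK K ^ (2 * B) ∨
    ((LamNZ k G B).filter fun y => ∀ i, i ≠ i₀ → p ∣ y i).card * qK K ^ N ≤ qK K ^ B := by
  set S := (LamNZ k G B).filter fun y => ∀ i, i ≠ i₀ → p ∣ y i with hS
  set j := p.natDegree with hj
  obtain ⟨h, hh⟩ := hpG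
  have hh0 : h ≠ 0 := by rintro rfl; exact hG0 (by rw [hh, mul_zero])
  have hjk : h.natDegree + j = (G i₀).natDegree := by rw [hh, natDegree_mul hp hh0, add_comm]
  have hGk : (G i₀).natDegree ≤ k i₀ := by
    have := natDegree_le_of_mem (hG.deg i₀); omega
  set G' := Function.update G i₀ h with hG'
  set k' := Function.update k i₀ (k i₀ - j) with hk'
  have hsum : ∑ l, k' l + j = ∑ l, k l := by
    have := sum_update k i₀ (k i₀ - j); rw [← hk'] at this; omega
  have e1 : G' i₀ = h := by simp [hG']
  have e2 : k' i₀ = k i₀ - j := by simp [hk']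
  have e3 : ∀ i, i ≠ i₀ → G' i = G i := fun i hi => by simp [hG', hi]
  have e4 : ∀ i, i ≠ i₀ → k' i = k i := fun i hi => by simp [hk', hi]
  have hcoef : (G i₀).coeff (k i₀) ≠ 0 → h.coeff (k i₀ - j) ≠ 0 := by
    intro hc
    have := natDegree_eq_of_coeff (hG.deg i₀) hc
    have h3 : h.natDegree = k i₀ - j := by omega
    rw [← h3]; exact leadingCoeff_ne_zero.2 hh0
  have hG'C : Cop k' G' := by
    refine ⟨fun i => ?_, fun i l hil => ?_, fun i l hil => ?_⟩
    · by_cases hi : i = i₀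
      · subst hi; rw [e1, e2, mem_degreeLT_iff]; right; omega
      · rw [e3 i hi, e4 i hi]; exact hG.deg i
    · by_cases hi : i = i₀
      · subst hi
        rw [e1, e3 l hil.symm]
        have := hG.cop i l hil
        rw [hh] at this; exact this.of_mul_left_right
      · by_cases hl : l = i₀
        · subst hl
          rw [e1, e3 i hil]
          have := hG.cop i l hil
          rw [hh] at this; exact this.of_mul_right_right
        · rw [e3 i hi, e3 l hl]; exact hG.cop i l hil
    · rintro ⟨c1, c2⟩
      apply hG.inf i l hil
      constructor
      · by_cases hi : i = i₀
        · subst hi; rw [e1, e2] at c1; by_contra hc; exact hcoef hc c1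
        · rwa [e3 i hi, e4 i hi] at c1
      · by_cases hi : l = i₀
        · subst hi; rw [e1, e2] at c2; by_contra hc; exact hcoef hc c2
        · rwa [e3 l hi, e4 l hi] at c2
  -- the lift `Lam k' G' m → Lam k G (m + j)`
  let T : (Fin 3 → K[X]) → (Fin 3 → K[X]) := fun z i => if i = i₀ then z i else p * z i
  have hTrel : ∀ z, ∑ i, G i * T z i = p * ∑ i, G' i * z i := by
    intro z
    rw [Finset.mul_sum]
    refine Finset.sum_congr rfl fun i _ => ?_
    by_cases hi : i = i₀
    · subst hi; simp only [T, if_true, e1]; rw [hh]; ring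
    · simp only [T, hi, if_false, e3 i hi]; ring
  have hN' : NoShort k' G' (N - j) := by
    intro w hw
    rcases Nat.lt_or_ge N j with hlt | hge
    · rw [Nat.sub_eq_zero_of_le hlt.le, Lam_zero, Submodule.mem_bot] at hw
      exact ⟨0, by rw [hw]; rfl⟩
    · have hm : T w ∈ Lam k G N := by
        refine ⟨fun i => ?_, by rw [hTrel, hw.2, mul_zero]⟩
        have h1 := hw.1 i
        by_cases hi : i = i₀
        · subst hi
          simp only [T, if_true]
          rw [e2] at h1
          exact degreeLT_mono (by omega) h1
        · simp only [T, hi, if_false]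
          rw [e4 i hi, mem_degreeLT_iff] at h1
          rw [mem_degreeLT_iff]
          rcases h1 with h1 | h1
          · simp [h1]
          · by_cases h0 : w i = 0
            · simp [h0]
            · right; rw [natDegree_mul hp h0]; omega
      obtain ⟨i, hi⟩ := hN (T w) hm
      refine ⟨i, ?_⟩
      by_cases hii : i = i₀
      · simpa [T, hii] using hi
      · simpa [T, hii, hp] using hi
  rcases S.eq_empty_or_nonempty with he | ⟨y, hy⟩
  · rw [he]; simp
  have hjB : j ≤ B := by
    rw [hS, Finset.mem_filter, mem_LamNZ] at hy
    obtain ⟨i, hi⟩ : ∃ i, i ≠ i₀ := exists_ne i₀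
    have h1 := natDegree_le_of_dvd (hy.2 i hi) (hy.1.2 i)
    have h2 := (mem_degreeLT_iff.1 (hy.1.1.1 i)).resolve_left (hy.1.2 i)
    omega
  have hc : S.card ≤ (LamNZ k' G' (B - j)).card := by
    calc S.card ≤ ((LamNZ k' G' (B - j)).image T).card := by
          apply Finset.card_le_card
          intro y hy
          rw [hS, Finset.mem_filter, mem_LamNZ] at hy
          obtain ⟨⟨h1, h2⟩, h3⟩ := hy
          have h3' : ∀ i, ∃ z, y i = if i = i₀ then z else p * z := by
            intro i
            by_cases hi : i = i₀
            · exact ⟨y i, by simp [hi]⟩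
            · obtain ⟨z, hz⟩ := h3 i hi
              exact ⟨z, by simp [hi, hz]⟩
          choose z hz using h3'
          have hTz : T z = y := by funext i; exact (hz i).symm
          rw [Finset.mem_image]
          refine ⟨z, mem_LamNZ.2 ⟨⟨fun i => ?_, ?_⟩, fun i hi => h2 i (by rw [hz, hi]; simp)⟩, hTz⟩
          · have := h1.1 i
            rw [hz] at this
            by_cases hi : i = i₀
            · subst hi
              simp only [if_true] at this
              rw [e2]
              exact degreeLT_mono (by omega) this
            · simp only [hi, if_false] at this
              rw [e4 i hi, Nat.sub_right_comm]; exact mem_of_mul_mem hp this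
          · have := h1.2
            rw [← hTz, hTrel] at this
            exact (mul_eq_zero.1 this).resolve_left hp
      _ ≤ _ := Finset.card_image_le
  rcases card_LamNZ hG'C hN' (B - j) with h | h
  · left
    calc S.card * qK K ^ (∑ i, k i + j)
        ≤ (LamNZ k' G' (B - j)).card * qK K ^ (∑ i, k i + j) := Nat.mul_le_mul_right _ hc
      _ = (LamNZ k' G' (B - j)).card * qK K ^ (∑ i, k' i) * qK K ^ (2 * j) := by
          rw [← hsum, mul_assoc, ← pow_add]; congr 2; ring
      _ ≤ qK K ^ (2 * (B - j)) * qK K ^ (2 * j) := Nat.mul_le_mul_right _ h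
      _ = _ := by rw [← pow_add]; congr 1; omega
  · right
    calc _ ≤ (LamNZ k' G' (B - j)).card * qK K ^ N := Nat.mul_le_mul_right _ hc
      _ ≤ (LamNZ k' G' (B - j)).card * qK K ^ (N - j + j) :=
          Nat.mul_le_mul_left _ (Nat.pow_le_pow_right qK_pos (by omega))
      _ = (LamNZ k' G' (B - j)).card * qK K ^ (N - j) * qK K ^ j := by rw [pow_add]; ring
      _ ≤ qK K ^ (B - j) * qK K ^ j := Nat.mul_le_mul_right _ h
      _ = _ := by rw [← pow_add]; congr 1; omega

/-- Syzygies with `p ∣ y i₀`: they come from syzygies of the triple in which `G i₀` is replaced by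
`p * G i₀`. -/
lemma card_T3 {k : Fin 3 → ℕ} {G : Fin 3 → K[X]} (hG : Cop k G) {N : ℕ} (hN : NoShort k G N)
    (B : ℕ) {p : K[X]} (hp : p ≠ 0) (i₀ : Fin 3) (hpG : ∀ l, l ≠ i₀ → IsCoprime p (G l)) :
    ((LamNZ k G B).filter fun y => p ∣ y i₀).card * qK K ^ (∑ i, k i + p.natDegree)
      ≤ qK K ^ (2 * B) ∨
    ((LamNZ k G B).filter fun y => p ∣ y i₀).card * qK K ^ N ≤ qK K ^ B := by
  set S := (LamNZ k G B).filter fun y => p ∣ y i₀ with hS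
  set j := p.natDegree with hj
  set G' := Function.update G i₀ (p * G i₀) with hG'
  set k' := Function.update k i₀ (k i₀ + j) with hk'
  have hsum : ∑ l, k' l = ∑ l, k l + j := by
    have := sum_update k i₀ (k i₀ + j); rw [← hk'] at this; omega
  have e1 : G' i₀ = p * G i₀ := by simp [hG']
  have e2 : k' i₀ = k i₀ + j := by simp [hk']
  have e3 : ∀ i, i ≠ i₀ → G' i = G i := fun i hi => by simp [hG', hi]
  have e4 : ∀ i, i ≠ i₀ → k' i = k i := fun i hi => by simp [hk', hi]
  have hcoef : (G i₀).coeff (k i₀) ≠ 0 → (p * G i₀).coeff (k i₀ + j) ≠ 0 := by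
    intro hc
    have := natDegree_eq_of_coeff (hG.deg i₀) hc
    have h0 : G i₀ ≠ 0 := by intro h; rw [h] at hc; simp at hc
    rw [show k i₀ + j = (p * G i₀).natDegree by rw [natDegree_mul hp h0]; omega]
    exact leadingCoeff_ne_zero.2 (mul_ne_zero hp h0)
  have hG'C : Cop k' G' := by
    refine ⟨fun i => ?_, fun i l hil => ?_, fun i l hil => ?_⟩
    · by_cases hi : i = i₀
      · subst hi; rw [e1, e2, mem_degreeLT_iff]
        by_cases h0 : G i = 0
        · simp [h0]
        · right
          have := natDegree_le_of_mem (hG.deg i)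
          rw [natDegree_mul hp h0]; omega
      · rw [e3 i hi, e4 i hi]; exact hG.deg i
    · by_cases hi : i = i₀
      · subst hi
        rw [e1, e3 l hil.symm]
        exact (hpG l hil.symm).mul_left (hG.cop i l hil)
      · by_cases hl : l = i₀
        · subst hl
          rw [e1, e3 i hil]
          exact (hpG i hil).symm.mul_right (hG.cop i l hil)
        · rw [e3 i hi, e3 l hl]; exact hG.cop i l hil
    · rintro ⟨c1, c2⟩
      apply hG.inf i l hil
      constructor
      · by_cases hi : i = i₀
        · subst hi; rw [e1, e2] at c1; by_contra hc; exact hcoef hc c1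
        · rwa [e3 i hi, e4 i hi] at c1
      · by_cases hi : l = i₀
        · subst hi; rw [e1, e2] at c2; by_contra hc; exact hcoef hc c2
        · rwa [e3 l hi, e4 l hi] at c2
  let T : (Fin 3 → K[X]) → (Fin 3 → K[X]) := fun z i => if i = i₀ then p * z i else z i
  have hTrel : ∀ z, ∑ i, G i * T z i = ∑ i, G' i * z i := by
    intro z
    refine Finset.sum_congr rfl fun i _ => ?_
    by_cases hi : i = i₀
    · subst hi; simp only [T, if_true, e1]; ring
    · simp only [T, hi, if_false, e3 i hi]
  have hN' : NoShort k' G' N := by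
    intro w hw
    have hm : T w ∈ Lam k G N := by
      refine ⟨fun i => ?_, by rw [hTrel, hw.2]⟩
      have h1 := hw.1 i
      by_cases hi : i = i₀
      · subst hi
        simp only [T, if_true]
        rw [e2, mem_degreeLT_iff] at h1
        rw [mem_degreeLT_iff]
        by_cases h0 : w i = 0
        · simp [h0]
        · right; rw [natDegree_mul hp h0]; have := h1.resolve_left h0; omega
      · simp only [T, hi, if_false]
        rwa [e4 i hi] at h1
    obtain ⟨i, hi⟩ := hN (T w) hm
    refine ⟨i, ?_⟩
    by_cases hii : i = i₀
    · simpa [T, hii, hp] using hi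
    · simpa [T, hii, hp] using hi
  have hc : S.card ≤ (LamNZ k' G' B).card := by
    calc S.card ≤ ((LamNZ k' G' B).image T).card := by
          apply Finset.card_le_card
          intro y hy
          rw [hS, Finset.mem_filter, mem_LamNZ] at hy
          obtain ⟨⟨h1, h2⟩, ⟨z, hz⟩⟩ := hy
          have hTz : T (Function.update y i₀ z) = y := by
            funext i
            by_cases hi : i = i₀
            · subst hi; simp [T, hz]
            · simp [T, hi]
          rw [Finset.mem_image]
          refine ⟨Function.update y i₀ z, mem_LamNZ.2 ⟨⟨fun i => ?_, ?_⟩, fun i hi0 => ?_⟩, hTz⟩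
          · have := h1.1 i
            by_cases hi : i = i₀
            · subst hi
              rw [hz] at this
              rw [e2, ← Nat.sub_sub]; simpa using mem_of_mul_mem hp this
            · rw [e4 i hi]; simpa [hi] using this
          · have := h1.2
            rwa [← hTz, hTrel] at this
          · by_cases hi : i = i₀
            · subst hi
              simp only [Function.update_self] at hi0
              exact h2 i (by rw [hz, hi0, mul_zero])
            · exact h2 i (by simpa [hi] using hi0)
      _ ≤ _ := Finset.card_image_le
  rcases card_LamNZ hG'C hN' B with h | h
  · left
    rw [hsum] at h
    exact (Nat.mul_le_mul_right _ hc).trans h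
  · right
    exact (Nat.mul_le_mul_right _ hc).trans h

end dP5

/-! ### The local count -/

namespace dP5
open scoped Classical

section localcount
variable {F : Type} [Field F] [Fintype F]

/-- The condition satisfied by the values `(g, y, y')` of a torsor point at a closed point: the two linear
relations hold, neither morphism to `ℙ¹` is undefined, and `y i`, `y' i` do not vanish together. -/
def locGood (γ γ' g y y' : Fin 3 → F) : Prop :=
  (∑ i, γ i * g i * y i = 0) ∧ (∑ i, γ' i * g i * y' i = 0) ∧
  (∃ i, g i * y i ≠ 0) ∧ (∃ i, g i * y' i ≠ 0) ∧ ∀ i, ¬ (y i = 0 ∧ y' i = 0)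

/-- The pairs `(y, y')` satisfying the local condition over a given `g`. -/
def locSet (γ γ' g : Fin 3 → F) : Finset ((Fin 3 → F) × (Fin 3 → F)) :=
  Finset.univ.filter fun z => locGood γ γ' g z.1 z.2

/-- The local count when no `g i` vanishes, in terms of the rescaled pairs `(y i, y' i)` for two
indices; the third pair is minus their sum. -/
lemma cnt_generic : ((Finset.univ.filter fun v : (F × F) × (F × F) =>
      (v.1 ≠ 0 ∧ v.2 ≠ 0 ∧ v.1 + v.2 ≠ 0) ∧ ¬ (v.1.1 = 0 ∧ v.2.1 = 0) ∧
        ¬ (v.1.2 = 0 ∧ v.2.2 = 0)).card : ℤ)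
    = ((Fintype.card F : ℤ) - 1) ^ 2 *
      ((Fintype.card F : ℤ) ^ 2 + 2 * Fintype.card F - 2) := by
  set x := Fintype.card F with hx
  have hx2 : 2 ≤ x := Fintype.one_lt_card
  set A := Finset.univ.filter fun v : (F × F) × (F × F) => v.1 ≠ 0 ∧ v.2 ≠ 0 ∧ v.1 + v.2 ≠ 0
    with hA
  -- generic count of pairs of distinct-type vectors
  have key : ∀ (V : Type) [AddCommGroup V] [Fintype V], 2 < Fintype.card V + 1 →
      ((Finset.univ.filter fun v : V × V => v.1 ≠ 0 ∧ v.2 ≠ 0 ∧ v.1 + v.2 ≠ 0).card : ℤ)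
        = ((Fintype.card V : ℤ) - 1) * (Fintype.card V - 2) := by
    intro V _ _ hV
    have : (Finset.univ.filter fun v : V × V => v.1 ≠ 0 ∧ v.2 ≠ 0 ∧ v.1 + v.2 ≠ 0)
        = (Finset.univ.erase (0 : V)).biUnion fun u =>
          (Finset.univ \ {0, -u}).image fun w => (u, w) := by
      ext ⟨u, w⟩
      simp only [Finset.mem_filter, Finset.mem_univ, true_and, Finset.mem_biUnion,
        Finset.mem_erase, and_true, Finset.mem_image, Finset.mem_sdiff, Finset.mem_insert,
        Finset.mem_singleton, not_or, Prod.mk.injEq]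
      constructor
      · rintro ⟨h1, h2, h3⟩
        exact ⟨u, h1, w, ⟨h2, fun h => h3 (by rw [h]; simp)⟩, rfl, rfl⟩
      · rintro ⟨u', h1, w', ⟨h2, h3⟩, rfl, rfl⟩
        exact ⟨h1, h2, fun h => h3 (by rw [eq_neg_iff_add_eq_zero, add_comm]; exact h)⟩
    rw [this, Finset.card_biUnion]
    · have hc : ∀ u ∈ Finset.univ.erase (0 : V),
          ((Finset.univ \ {0, -u}).image fun w => (u, w)).card = Fintype.card V - 2 := by
        intro u hu
        rw [Finset.card_image_of_injective _ (fun a b h => (Prod.mk.inj h).2),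
          Finset.card_sdiff_of_subset (Finset.subset_univ _), Finset.card_univ, Finset.card_pair]
        intro h
        exact (Finset.mem_erase.1 hu).1 (by simpa using h.symm)
      rw [Finset.sum_congr rfl hc, Finset.sum_const, Finset.card_erase_of_mem (Finset.mem_univ _),
        Finset.card_univ, smul_eq_mul]
      push_cast [Nat.cast_sub (show 2 ≤ Fintype.card V by omega),
        Nat.cast_sub (show 1 ≤ Fintype.card V by omega)]
      ring
    · intro u _ u' _ huu
      rw [Function.onFun, Finset.disjoint_left]
      intro z hz hz'
      rw [Finset.mem_image] at hz hz'
      obtain ⟨w, -, rfl⟩ := hz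
      obtain ⟨w', -, h⟩ := hz'
      exact huu (Prod.mk.inj h).1.symm
  have hAc := key (F × F) (by rw [Fintype.card_prod, ← hx]; nlinarith)
  have hBc := key F (by rw [← hx]; omega)
  rw [Fintype.card_prod, ← hx] at hAc
  rw [← hx] at hBc
  set S := Finset.univ.filter fun v : F × F => v.1 ≠ 0 ∧ v.2 ≠ 0 ∧ v.1 + v.2 ≠ 0 with hS
  set B1 := S.image fun v : F × F => (((0 : F), v.1), ((0 : F), v.2)) with hB1
  set B2 := S.image fun v : F × F => ((v.1, (0 : F)), (v.2, (0 : F))) with hB2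
  have c1 : B1.card = S.card := Finset.card_image_of_injective _ (by
    rintro ⟨a, b⟩ ⟨c, d⟩ h; simpa using h)
  have c2 : B2.card = S.card := Finset.card_image_of_injective _ (by
    rintro ⟨a, b⟩ ⟨c, d⟩ h; simpa using h)
  have hd : Disjoint B1 B2 := by
    rw [Finset.disjoint_left]
    intro z hz hz'
    simp only [hB1, hB2, hS, Finset.mem_image, Finset.mem_filter, Finset.mem_univ, true_and] at hz hz'
    obtain ⟨w, hw, rfl⟩ := hz
    obtain ⟨w', hw', h⟩ := hz'
    simp only [Prod.mk.injEq] at h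
    exact hw'.1 h.1.1
  have hsub : B1 ∪ B2 ⊆ A := by
    intro z hz
    simp only [hB1, hB2, hS, hA, Finset.mem_union, Finset.mem_image, Finset.mem_filter,
      Finset.mem_univ, true_and] at hz ⊢
    rcases hz with ⟨⟨a, b⟩, hw, rfl⟩ | ⟨⟨a, b⟩, hw, rfl⟩ <;> simpa using hw
  have heq : (Finset.univ.filter fun v : (F × F) × (F × F) =>
      (v.1 ≠ 0 ∧ v.2 ≠ 0 ∧ v.1 + v.2 ≠ 0) ∧ ¬ (v.1.1 = 0 ∧ v.2.1 = 0) ∧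
        ¬ (v.1.2 = 0 ∧ v.2.2 = 0)) = A \ (B1 ∪ B2) := by
    ext ⟨⟨a, b⟩, ⟨c, d⟩⟩
    simp only [hB1, hB2, hS, hA, Finset.mem_union, Finset.mem_image, Finset.mem_filter,
      Finset.mem_univ, true_and, Finset.mem_sdiff, not_or, not_exists, not_and, Prod.forall,
      Prod.mk.injEq]
    constructor
    · rintro ⟨h1, h2, h3⟩
      refine ⟨h1, ?_, ?_⟩
      · intro e f _ h4 h5 _; exact h2 h4.1.symm h5.symm
      · intro e f _ h4 _ h5; exact h3 h4.2.symm h5.symm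
    · rintro ⟨h1, h2, h3⟩
      refine ⟨h1, ?_, ?_⟩
      · rintro rfl rfl; have := h2 b d (by simpa using h1); simp at this
      · rintro rfl rfl; have := h3 a c (by simpa using h1); simp at this
  rw [heq, Finset.card_sdiff_of_subset hsub,
    Nat.cast_sub (Finset.card_le_card hsub), Finset.card_union_of_disjoint hd, c1, c2]
  push_cast
  rw [hBc, hA]
  have hA' : ((Finset.univ.filter fun v : (F × F) × (F × F) => v.1 ≠ 0 ∧ v.2 ≠ 0 ∧ v.1 + v.2 ≠ 0).card : ℤ) = (((x * x : ℕ) : ℤ) - 1) * (((x * x : ℕ) : ℤ) - 2) := by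
    convert hAc
  rw [hA']
  push_cast
  ring

variable {γ γ' : Fin 3 → F}

lemma locSet_two (hγ : ∀ i, γ i ≠ 0) {g : Fin 3 → F} {i j l : Fin 3} (hl : ∀ m, m = i ∨ m = j ∨ m = l)
    (hij : i ≠ j) (hil : i ≠ l) (hjl : j ≠ l) (hi : g i = 0) (hj : g j = 0) :
    (locSet γ γ' g).card = 0 := by
  rw [Finset.card_eq_zero, Finset.eq_empty_iff_forall_notMem]
  rintro ⟨y, y'⟩ h
  rw [locSet, Finset.mem_filter] at h
  obtain ⟨-, h1, -, ⟨m, hm⟩, -⟩ := h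
  have hu : (Finset.univ : Finset (Fin 3)) = {i, j, l} := by
    ext m; simpa using hl m
  rw [hu, Finset.sum_insert (by simp [hij, hil]), Finset.sum_insert (by simp [hjl]),
    Finset.sum_singleton] at h1
  simp only [hi, hj, mul_zero, zero_mul, zero_add, mul_eq_zero, hγ l, false_or] at h1
  rcases hl m with rfl | rfl | rfl
  · simp [hi] at hm
  · simp [hj] at hm
  · rcases h1 with h1 | h1 <;> simp [h1] at hm

lemma locSet_one (hγ : ∀ i, γ i ≠ 0) (hγ' : ∀ i, γ' i ≠ 0) {g : Fin 3 → F} {i j l : Fin 3}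
    (hl : ∀ m, m = i ∨ m = j ∨ m = l)
    (hij : i ≠ j) (hil : i ≠ l) (hjl : j ≠ l) (hi : g i = 0) (hj : g j ≠ 0) (hgl : g l ≠ 0) :
    (locSet γ γ' g).card = (Fintype.card F ^ 2 - 1) * (Fintype.card F - 1) ^ 2 := by
  have hu : (Finset.univ : Finset (Fin 3)) = {i, j, l} := by
    ext m; simpa using hl m
  have hsum : ∀ f : Fin 3 → F, ∑ m, f m = f i + (f j + f l) := by
    intro f
    rw [hu, Finset.sum_insert (by simp [hij, hil]), Finset.sum_insert (by simp [hjl]),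
      Finset.sum_singleton]
  have hall : ∀ P : Fin 3 → Prop, (∀ m, P m) ↔ P i ∧ P j ∧ P l := by
    intro P
    exact ⟨fun h => ⟨h i, h j, h l⟩, fun h m => by rcases hl m with rfl | rfl | rfl; exacts [h.1, h.2.1, h.2.2]⟩
  have hex : ∀ P : Fin 3 → Prop, (∃ m, P m) ↔ P i ∨ P j ∨ P l := by
    intro P
    exact ⟨fun ⟨m, h⟩ => by rcases hl m with rfl | rfl | rfl <;> simp [h], fun h => by
      rcases h with h | h | h; exacts [⟨i, h⟩, ⟨j, h⟩, ⟨l, h⟩]⟩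
  have hfun : ∀ f f' : Fin 3 → F, f = f' ↔ f i = f' i ∧ f j = f' j ∧ f l = f' l := by
    intro f f'; rw [funext_iff, hall]
  let u : Fin 3 → F → F → F := fun m a b => if m = i then a else if m = j then b else
    -(γ l * g l)⁻¹ * (γ j * g j * b)
  let u' : Fin 3 → F → F → F := fun m a b => if m = i then a else if m = j then b else
    -(γ' l * g l)⁻¹ * (γ' j * g j * b)
  have hcard : (locSet γ γ' g).card = ((Finset.univ.erase (0 : F × F)) ×ˢ
      ((Finset.univ.erase (0 : F)) ×ˢ (Finset.univ.erase (0 : F)))).card := by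
    refine Finset.card_nbij' (fun z => ((z.1 i, z.2 i), (z.1 j, z.2 j)))
      (fun v => (fun m => u m v.1.1 v.2.1, fun m => u' m v.1.2 v.2.2)) ?_ ?_ ?_ ?_
    · rintro ⟨y, y'⟩ h
      simp only [locSet, locGood, Finset.coe_filter, Finset.mem_univ, true_and, Set.mem_ofPred_eq,
        hsum, hex, hall, hi, mul_zero, zero_mul, zero_add, ne_eq, not_true, false_or,
        mul_eq_zero, hj, hgl] at h
      simp only [Finset.coe_product, Finset.coe_erase, Finset.coe_univ, Set.mem_prod,
        Set.mem_sdiff, Set.mem_univ, true_and, Set.mem_singleton_iff, Prod.mk_eq_zero]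
      obtain ⟨h1, h2, h3, h4, h5, h6, h7⟩ := h
      refine ⟨h5, ?_, ?_⟩
      · intro h0
        rw [h0] at h1 h3
        simp [hγ, hgl] at h1
        simp [h1] at h3
      · intro h0
        rw [h0] at h2 h4
        simp [hγ', hgl] at h2
        simp [h2] at h4
    · rintro ⟨⟨a, a'⟩, ⟨b, b'⟩⟩ h
      simp only [Finset.coe_product, Finset.coe_erase, Finset.coe_univ, Set.mem_prod,
        Set.mem_sdiff, Set.mem_univ, true_and, Set.mem_singleton_iff, Prod.mk_eq_zero] at h
      simp only [locSet, locGood, Finset.coe_filter, Finset.mem_univ, true_and, Set.mem_ofPred_eq,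
        hsum, hex, hall, hi, mul_zero, zero_mul, zero_add, ne_eq, not_true, false_or,
        mul_eq_zero, hj, hgl, not_or, not_false_eq_true, true_and, not_true_eq_false, false_and]
      simp only [u, u', if_true, hij.symm, hil.symm, hjl.symm, if_false]
      have := hγ l; have := hγ' l
      refine ⟨by field_simp; ring, by field_simp; ring, Or.inl h.2.1, Or.inl h.2.2, h.1,
        fun hh => h.2.1 hh.1, fun hh => ?_⟩
      have := hh.1
      simp [hγ, hgl, hj, h.2.1] at this
    · rintro ⟨y, y'⟩ h
      simp only [locSet, locGood, Finset.coe_filter, Finset.mem_univ, true_and, Set.mem_ofPred_eq,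
        hsum, hi, mul_zero, zero_mul, zero_add] at h
      have := hγ l; have := hγ' l
      simp only [Prod.mk.injEq]
      constructor
      · rw [hfun]
        simp only [u, if_true, hij.symm, hil.symm, hjl.symm, if_false, true_and]
        field_simp
        linear_combination -h.1
      · rw [hfun]
        simp only [u', if_true, hij.symm, hil.symm, hjl.symm, if_false, true_and]
        field_simp
        linear_combination -h.2.1
    · rintro ⟨⟨a, a'⟩, ⟨b, b'⟩⟩ h
      simp [u, u', hij.symm]
  rw [hcard, Finset.card_product, Finset.card_product, Finset.card_erase_of_mem (Finset.mem_univ _),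
    Finset.card_erase_of_mem (Finset.mem_univ _), Finset.card_univ, Finset.card_univ,
    Fintype.card_prod]
  ring_nf

set_option maxHeartbeats 1000000 in
lemma locSet_zero (hγ : ∀ i, γ i ≠ 0) (hγ' : ∀ i, γ' i ≠ 0) {g : Fin 3 → F}
    (hg : ∀ i, g i ≠ 0) : ((locSet γ γ' g).card : ℤ) = ((Fintype.card F : ℤ) - 1) ^ 2 *
      ((Fintype.card F : ℤ) ^ 2 + 2 * Fintype.card F - 2) := by
  rw [← cnt_generic]
  have h0 := hγ 0; have h1 := hγ 1; have h2 := hγ 2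
  have h0' := hγ' 0; have h1' := hγ' 1; have h2' := hγ' 2
  have g0 := hg 0; have g1 := hg 1; have g2 := hg 2
  congr 1
  refine Finset.card_nbij' (fun z => ((γ 0 * g 0 * z.1 0, γ' 0 * g 0 * z.2 0),
      (γ 1 * g 1 * z.1 1, γ' 1 * g 1 * z.2 1)))
      (fun v => (![(γ 0 * g 0)⁻¹ * v.1.1, (γ 1 * g 1)⁻¹ * v.2.1, -(γ 2 * g 2)⁻¹ * (v.1.1 + v.2.1)],
        ![(γ' 0 * g 0)⁻¹ * v.1.2, (γ' 1 * g 1)⁻¹ * v.2.2, -(γ' 2 * g 2)⁻¹ * (v.1.2 + v.2.2)]))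
      ?_ ?_ ?_ ?_
  · rintro ⟨y, y'⟩ h
    simp only [locSet, locGood, Finset.coe_filter, Finset.mem_univ, true_and, Set.mem_ofPred_eq,
        Fin.sum_univ_three, Fin.exists_fin_succ, Fin.forall_fin_succ] at h
    simp at h
    obtain ⟨e1, e2, e3, e4, e5, e6, e7⟩ := h
    simp only [Finset.coe_filter, Finset.mem_univ, true_and, Set.mem_ofPred_eq, ne_eq,
      Prod.mk_eq_zero, Prod.mk_add_mk, mul_eq_zero, h0, h1, h2, h0', h1', h2', g0, g1, g2, false_or,
      or_false]
    simp only [h0, h1, h2, h0', h1', h2', g0, g1, g2, false_or, or_false, not_false_eq_true, true_and] at e3 e4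
    refine ⟨⟨by tauto, by tauto, ?_⟩, ?_, ?_⟩
    · rintro ⟨f1, f2⟩
      rw [f1] at e1; rw [f2] at e2
      simp [h2, h2', g2] at e1 e2
      tauto
    · rintro ⟨f1, f2⟩
      rw [f1, f2] at e1
      simp [h2, g2] at e1
      tauto
    · rintro ⟨f1, f2⟩
      rw [f1, f2] at e2
      simp [h2', g2] at e2
      tauto
  · rintro ⟨⟨a, a'⟩, ⟨b, b'⟩⟩ h
    simp only [Finset.coe_filter, Finset.mem_univ, true_and, Set.mem_ofPred_eq, ne_eq,
      Prod.mk_eq_zero, Prod.mk_add_mk] at h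
    simp only [locSet, locGood, Finset.coe_filter, Finset.mem_univ, true_and, Set.mem_ofPred_eq,
        Fin.sum_univ_three, Fin.exists_fin_succ, Fin.forall_fin_succ]
    simp [h0, h1, h2, h0', h1', h2', g0, g1, g2]
    obtain ⟨⟨p1, p2, p3⟩, p4, p5⟩ := h
    refine ⟨?_, ?_, ?_, ?_, fun u v => p1 ⟨u, v⟩, fun u v => p2 ⟨u, v⟩, fun u v => p3 ⟨u, v⟩⟩
    · clear p1 p2 p3 p4 p5; field_simp; ring
    · clear p1 p2 p3 p4 p5; field_simp; ring
    · by_contra hc; push Not at hc; exact p4 ⟨hc.1, hc.2.1⟩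
    · by_contra hc; push Not at hc; exact p5 ⟨hc.1, hc.2.1⟩
  · rintro ⟨y, y'⟩ h
    simp only [locSet, locGood, Finset.coe_filter, Finset.mem_univ, true_and, Set.mem_ofPred_eq,
        Fin.sum_univ_three] at h
    obtain ⟨e1, e2, -⟩ := h
    simp only [Prod.mk.injEq]
    constructor
    · funext i; fin_cases i
      · simp; field_simp
      · simp; field_simp
      · simp; field_simp; linear_combination -e1
    · funext i; fin_cases i
      · simp; field_simp
      · simp; field_simp
      · simp; field_simp; linear_combination -e2
  · rintro ⟨⟨a, a'⟩, ⟨b, b'⟩⟩ h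
    simp
    refine ⟨⟨?_, ?_⟩, ?_, ?_⟩ <;> field_simp

lemma sum_prod_fun (u v w : F → ℤ) :
    ∑ g : Fin 3 → F, u (g 0) * v (g 1) * w (g 2)
      = (∑ x, u x) * (∑ x, v x) * (∑ x, w x) := by
  have := Finset.prod_univ_sum (fun _ : Fin 3 => (Finset.univ : Finset F)) ![u, v, w]
  simp only [Fin.prod_univ_three, Fintype.piFinset_univ, Matrix.cons_val_zero,
    Matrix.cons_val_one, Matrix.cons_val] at this
  rw [this]

/-- The number of points of the torsor over a finite field with `x` elements is
`(x - 1) ^ 5 * (x ^ 2 + 5 x + 1)`, the numerator of the local factor of the Tamagawa number. -/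
lemma sum_locSet (hγ : ∀ i, γ i ≠ 0) (hγ' : ∀ i, γ' i ≠ 0) :
    ∑ g : Fin 3 → F, ((locSet γ γ' g).card : ℤ) = ((Fintype.card F : ℤ) - 1) ^ 5 *
      ((Fintype.card F : ℤ) ^ 2 + 5 * Fintype.card F + 1) := by
  set x := Fintype.card F with hx
  have hx2 : 1 ≤ x := Fintype.card_pos
  have hx3 : 1 ≤ x ^ 2 := Nat.one_le_pow _ _ hx2
  let u : F → ℤ := fun a => if a = 0 then 0 else 1
  let v : F → ℤ := fun a => if a = 0 then 1 else 0
  have hu : ∑ a, u a = x - 1 := by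
    have : ∀ a, u a = 1 - v a := fun a => by simp only [u, v]; split_ifs <;> simp
    simp [this, v, ← hx]
  have hv : ∑ a, v a = 1 := by simp [v]
  set c0 : ℤ := ((x : ℤ) - 1) ^ 2 * ((x : ℤ) ^ 2 + 2 * x - 2) with hc0
  set c1 : ℤ := ((x : ℤ) ^ 2 - 1) * ((x : ℤ) - 1) ^ 2 with hc1
  have hone : ∀ (g : Fin 3 → F) (i j l : Fin 3), (∀ m, m = i ∨ m = j ∨ m = l) →
      i ≠ j → i ≠ l → j ≠ l → g i = 0 → g j ≠ 0 → g l ≠ 0 → ((locSet γ γ' g).card : ℤ) = c1 := by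
    intro g i j l h1 h2 h3 h4 h5 h6 h7
    rw [locSet_one hγ hγ' h1 h2 h3 h4 h5 h6 h7, ← hx]
    push_cast [Nat.cast_sub hx2, Nat.cast_sub hx3]
    rfl
  have hN : ∀ g : Fin 3 → F, ((locSet γ γ' g).card : ℤ) =
      c0 * (u (g 0) * u (g 1) * u (g 2)) + (c1 * (v (g 0) * u (g 1) * u (g 2)) +
      (c1 * (u (g 0) * v (g 1) * u (g 2)) + c1 * (u (g 0) * u (g 1) * v (g 2)))) := by
    intro g
    by_cases h0 : g 0 = 0 <;> by_cases h1 : g 1 = 0 <;> by_cases h2 : g 2 = 0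
    · rw [locSet_two hγ (i := 0) (j := 1) (l := 2) (by decide) (by decide) (by decide) (by decide) h0 h1]
      simp [u, v, h0, h1, h2]
    · rw [locSet_two hγ (i := 0) (j := 1) (l := 2) (by decide) (by decide) (by decide) (by decide) h0 h1]
      simp [u, v, h0, h1, h2]
    · rw [locSet_two hγ (i := 0) (j := 2) (l := 1) (by decide) (by decide) (by decide) (by decide) h0 h2]
      simp [u, v, h0, h1, h2]
    · rw [hone g 0 1 2 (by decide) (by decide) (by decide) (by decide) h0 h1 h2]
      simp [u, v, h0, h1, h2]
    · rw [locSet_two hγ (i := 1) (j := 2) (l := 0) (by decide) (by decide) (by decide) (by decide) h1 h2]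
      simp [u, v, h0, h1, h2]
    · rw [hone g 1 0 2 (by decide) (by decide) (by decide) (by decide) h1 h0 h2]
      simp [u, v, h0, h1, h2]
    · rw [hone g 2 0 1 (by decide) (by decide) (by decide) (by decide) h2 h0 h1]
      simp [u, v, h0, h1, h2]
    · rw [locSet_zero hγ hγ' (by intro i; fin_cases i <;> assumption)]
      simp [u, v, h0, h1, h2, hc0, hx]
  simp only [hN, Finset.sum_add_distrib, ← Finset.mul_sum]
  rw [sum_prod_fun, sum_prod_fun, sum_prod_fun, sum_prod_fun]
  simp only [hu, hv, hc0, hc1]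
  ring

lemma locSet_card_le (hγ : ∀ i, γ i ≠ 0) (hγ' : ∀ i, γ' i ≠ 0) (g : Fin 3 → F) :
    (locSet γ γ' g).card ≤ Fintype.card F ^ 4 := by
  have hx2 : 1 ≤ Fintype.card F := Fintype.card_pos
  have key : ∀ i j l : Fin 3, (∀ m, m = i ∨ m = j ∨ m = l) → i ≠ j → i ≠ l → j ≠ l → g l ≠ 0 →
      (locSet γ γ' g).card ≤ Fintype.card F ^ 4 := by
    intro i j l h hij hil hjl hgl
    have : Function.Injective (fun z : locSet γ γ' g =>
        ((z.1.1 i, z.1.1 j), (z.1.2 i, z.1.2 j))) := by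
      rintro ⟨⟨y, y'⟩, hz⟩ ⟨⟨w, w'⟩, hw⟩ h4
      simp only [Prod.mk.injEq] at h4
      have hz' := (Finset.mem_filter.1 hz).2
      have hw' := (Finset.mem_filter.1 hw).2
      simp only [locGood] at hz' hw'
      have hsum : ∀ f : Fin 3 → F, ∑ m, f m = f i + (f j + f l) := by
        intro f
        rw [show (Finset.univ : Finset (Fin 3)) = {i, j, l} by ext m; simpa using h m,
          Finset.sum_insert (by simp [hij, hil]), Finset.sum_insert (by simp [hjl]),
          Finset.sum_singleton]
      rw [hsum, hsum] at hz' hw'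
      obtain ⟨⟨a1, a2⟩, a3, a4⟩ := h4
      have e1 : y l = w l := by
        apply mul_left_cancel₀ (mul_ne_zero (hγ l) hgl)
        linear_combination hz'.1 - hw'.1 - γ i * g i * a1 - γ j * g j * a2
      have e2 : y' l = w' l := by
        apply mul_left_cancel₀ (mul_ne_zero (hγ' l) hgl)
        linear_combination hz'.2.1 - hw'.2.1 - γ' i * g i * a3 - γ' j * g j * a4
      have f1 : y = w := by
        funext m; rcases h m with rfl | rfl | rfl <;> assumption
      have f2 : y' = w' := by
        funext m; rcases h m with rfl | rfl | rfl <;> assumption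
      simp [f1, f2]
    have h5 := Fintype.card_le_of_injective _ this
    rw [Fintype.card_coe] at h5
    simp only [Fintype.card_prod] at h5
    calc _ ≤ _ := h5
      _ = _ := by ring
  by_cases h2 : g 2 = 0
  · by_cases h1 : g 1 = 0
    · rw [locSet_two hγ (i := 1) (j := 2) (l := 0) (by decide) (by decide) (by decide) (by decide) h1 h2]
      exact Nat.zero_le _
    · exact key 0 2 1 (by decide) (by decide) (by decide) (by decide) h1
  · exact key 0 1 2 (by decide) (by decide) (by decide) (by decide) h2

end localcount
end dP5

/-! ### Reduction at closed points and equidistribution -/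

namespace dP5
open Polynomial
open scoped Classical

section equi

/-- An additive map on a finite group with values in `S` hits every value equally often, once its kernel is
at most as large as `A.card / S.card`. -/
lemma equidist {V R : Type} [AddCommGroup V] [AddCommGroup R] [DecidableEq R] (φ : V →+ R) (A : Finset V)
    (hA : ∀ a ∈ A, ∀ b ∈ A, a - b ∈ A) (S : Finset R) (hS : ∀ a ∈ A, φ a ∈ S) (m : ℕ)
    (hker : (A.filter fun a => φ a = 0).card ≤ m) (hm : A.card = m * S.card) :
    ∀ r ∈ S, (A.filter fun a => φ a = r).card = m := by
  have hle : ∀ r ∈ S, (A.filter fun a => φ a = r).card ≤ m := by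
    intro r _
    rcases (A.filter fun a => φ a = r).eq_empty_or_nonempty with h | ⟨a0, h0⟩
    · rw [h]; simp
    · rw [Finset.mem_filter] at h0
      refine le_trans (Finset.card_le_card_of_injOn (fun a => a - a0) ?_ ?_) hker
      · intro a ha
        rw [Finset.mem_coe, Finset.mem_filter] at ha
        simp only [Finset.coe_filter]
        exact ⟨hA a ha.1 a0 h0.1, by rw [map_sub, ha.2, h0.2, sub_self]⟩
      · intro a _ b _ h; exact sub_left_injective h
  have hsum : ∑ r ∈ S, (A.filter fun a => φ a = r).card = ∑ r ∈ S, m := by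
    rw [← Finset.card_eq_sum_card_fiberwise (fun a ha => hS a ha), Finset.sum_const, smul_eq_mul, hm,
      mul_comm]
  exact (Finset.sum_eq_sum_iff_of_le hle).1 hsum

lemma equidist_sum {V R : Type} [AddCommGroup V] [AddCommGroup R] [DecidableEq R] (φ : V →+ R) (A : Finset V)
    (hA : ∀ a ∈ A, ∀ b ∈ A, a - b ∈ A) (S : Finset R) (hS : ∀ a ∈ A, φ a ∈ S) (m : ℕ)
    (hker : (A.filter fun a => φ a = 0).card ≤ m) (hm : A.card = m * S.card) (Φ : R → ℕ) :
    ∑ a ∈ A, Φ (φ a) = m * ∑ r ∈ S, Φ r := by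
  rw [← Finset.sum_fiberwise_of_maps_to (fun a ha => hS a ha), Finset.mul_sum]
  refine Finset.sum_congr rfl fun r hr => ?_
  rw [← equidist φ A hA S hS m hker hm r hr, Finset.sum_congr rfl (g := fun _ => Φ r)
    (fun a ha => by rw [(Finset.mem_filter.1 ha).2]), Finset.sum_const, smul_eq_mul]

end equi

variable {K : Type} [Field K]

/-- A polynomial defining the residue field at a closed point. -/
def cpPoly : ClosedPoint K → K[X]
  | Sum.inl p => p.1
  | Sum.inr _ => X

instance cpIrr (c : ClosedPoint K) : Fact (Irreducible (cpPoly c)) :=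
  ⟨match c with
    | Sum.inl p => p.2.2
    | Sum.inr _ => irreducible_X⟩

/-- The residue field. -/
abbrev ResF (c : ClosedPoint K) : Type := AdjoinRoot (cpPoly c)

/-- Value at a closed point of the form of degree `n` with dehomogenization `f`. -/
def red : (c : ClosedPoint K) → ℕ → K[X] →ₗ[K] ResF c
  | Sum.inl p, _ => (AdjoinRoot.mkₐ (cpPoly (Sum.inl p))).toLinearMap
  | Sum.inr _, n => (Algebra.linearMap K (ResF (Sum.inr ()))).comp (lcoeff K n)

lemma red_inl (p) (n : ℕ) (f : K[X]) :
    red (Sum.inl p : ClosedPoint K) n f = AdjoinRoot.mk (cpPoly (Sum.inl p)) f := rfl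

lemma red_inr (u) (n : ℕ) (f : K[X]) :
    red (Sum.inr u : ClosedPoint K) n f = algebraMap K _ (f.coeff n) := rfl

lemma red_inl_eq_zero (p) (n : ℕ) (f : K[X]) :
    red (Sum.inl p : ClosedPoint K) n f = 0 ↔ p.1 ∣ f := by
  rw [red_inl, AdjoinRoot.mk_eq_zero]; rfl

lemma algMap_eq_zero (c : ClosedPoint K) (x : K) : algebraMap K (ResF c) x = 0 ↔ x = 0 :=
  map_eq_zero_iff _ (algebraMap K (ResF c)).injective

lemma red_inr_eq_zero (u) (n : ℕ) (f : K[X]) :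
    red (Sum.inr u : ClosedPoint K) n f = 0 ↔ f.coeff n = 0 := by
  rw [red_inr]
  exact algMap_eq_zero (Sum.inr u) _

lemma red_mul (c : ClosedPoint K) {n m : ℕ} {f g : K[X]} (hf : f ∈ degreeLT K (n + 1))
    (hg : g ∈ degreeLT K (m + 1)) : red c (n + m) (f * g) = red c n f * red c m g := by
  rcases c with p | u
  · rw [red_inl, red_inl, red_inl, map_mul]
  · rw [red_inr, red_inr, red_inr, ← map_mul, coeff_mul_add_eq_of_natDegree_le]
    · have := natDegree_le_of_mem hf; omega
    · have := natDegree_le_of_mem hg; omega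

lemma red_C_mul (c : ClosedPoint K) (n : ℕ) (a : K) (f : K[X]) :
    red c n (C a * f) = algebraMap K _ a * red c n f := by
  rw [← smul_eq_C_mul, map_smul, Algebra.smul_def]

instance resFinite [Finite K] (c : ClosedPoint K) : Finite (ResF c) := by
  haveI : Module.Finite K (ResF c) := (AdjoinRoot.powerBasis (cpIrr c).out.ne_zero).finite
  exact Module.finite_of_finite K

instance resFintype [Fintype K] (c : ClosedPoint K) : Fintype (ResF c) := Fintype.ofFinite _

lemma cpPoly_natDegree (c : ClosedPoint K) : (cpPoly c).natDegree = cpDeg c := by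
  rcases c with p | u
  · rfl
  · exact natDegree_X

variable [Fintype K]

lemma card_ResF (c : ClosedPoint K) : Fintype.card (ResF c) = qK K ^ cpDeg c := by
  have hne := (cpIrr c).out.ne_zero
  haveI : Module.Finite K (ResF c) := (AdjoinRoot.powerBasis hne).finite
  have h := Module.natCard_eq_pow_finrank (K := K) (V := ResF c)
  rw [(AdjoinRoot.powerBasis hne).finrank, AdjoinRoot.powerBasis_dim, cpPoly_natDegree,
    Nat.card_eq_fintype_card, Nat.card_eq_fintype_card] at h
  exact h

lemma cpDeg_pos (c : ClosedPoint K) : 0 < cpDeg c := by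
  rcases c with p | u
  · exact p.2.2.natDegree_pos
  · exact one_pos

/-- Finite part of a closed point. -/
def cpE : ClosedPoint K → K[X]
  | Sum.inl p => p.1
  | Sum.inr _ => 1

/-- The total degree of a finite set of closed points. -/
def sdeg (P : Finset (ClosedPoint K)) : ℕ := ∑ c ∈ P, cpDeg c

/-- The product of the finite parts of the points of `P`. -/
def sE (P : Finset (ClosedPoint K)) : K[X] := ∏ c ∈ P, cpE c

lemma cpE_ne_zero (c : ClosedPoint K) : cpE c ≠ 0 := by
  rcases c with p | u
  · exact p.2.2.ne_zero
  · exact one_ne_zero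

lemma sE_ne_zero (P : Finset (ClosedPoint K)) : sE P ≠ 0 :=
  Finset.prod_ne_zero_iff.2 fun c _ => cpE_ne_zero c

lemma sE_natDegree {P : Finset (ClosedPoint K)} (hP : Sum.inr () ∈ P) :
    (sE P).natDegree + 1 = sdeg P := by
  rw [sE, natDegree_prod _ _ (fun c _ => cpE_ne_zero c), sdeg,
    ← Finset.add_sum_erase P (fun c => (cpE c).natDegree) hP, ← Finset.add_sum_erase P cpDeg hP]
  have : ∑ x ∈ P.erase (Sum.inr ()), (cpE x).natDegree = ∑ x ∈ P.erase (Sum.inr ()), cpDeg x := by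
    refine Finset.sum_congr rfl fun c hc => ?_
    rcases c with p | u
    · rfl
    · exact absurd rfl (Finset.ne_of_mem_erase hc)
  rw [this]
  simp [cpE, cpDeg, add_comm]

lemma cpE_coprime {c d : ClosedPoint K} (h : c ≠ d) : IsCoprime (cpE c) (cpE d) := by
  rcases c with p | u
  · rcases d with r | v
    · refine (p.2.2.coprime_iff_not_dvd).2 fun hd => h ?_
      have : p.1 = r.1 := eq_of_monic_of_associated p.2.1 r.2.1 (p.2.2.associated_of_dvd r.2.2 hd)
      exact congrArg Sum.inl (Subtype.ext this)
    · exact isCoprime_one_right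
  · exact isCoprime_one_left

/-- A form vanishing at all points of `P` is a multiple of the product of their equations. -/
lemma mem_ker {P : Finset (ClosedPoint K)} (hP : Sum.inr () ∈ P) {n : ℕ} {f : K[X]}
    (hf : f ∈ degreeLT K (n + 1)) (h : ∀ c ∈ P, red c n f = 0) :
    ∃ g ∈ degreeLT K (n + 1 - sdeg P), f = sE P * g := by
  have hd : sE P ∣ f := by
    refine Finset.prod_dvd_of_coprime (fun c _ d _ hcd => cpE_coprime hcd) fun c hc => ?_
    rcases c with p | u
    · exact (red_inl_eq_zero p n f).1 (h _ hc)
    · exact one_dvd _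
  obtain ⟨g, hg⟩ := hd
  refine ⟨g, ?_, hg⟩
  rw [mem_degreeLT_iff]
  by_cases h0 : g = 0
  · exact Or.inl h0
  right
  have h1 : f.coeff n = 0 := (red_inr_eq_zero () n f).1 (h _ hP)
  have hf0 : f ≠ 0 := by rw [hg]; exact mul_ne_zero (sE_ne_zero P) h0
  have h2 : f.natDegree ≠ n := by
    rintro rfl; exact hf0 (leadingCoeff_eq_zero.1 h1)
  have h3 := natDegree_le_of_mem hf
  have h4 : f.natDegree = (sE P).natDegree + g.natDegree := by
    rw [hg, natDegree_mul (sE_ne_zero P) h0]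
  have := sE_natDegree hP
  omega

/-- Simultaneous evaluation at the points of `P` of a triple of forms of degrees `n i`. -/
def redP (P : Finset (ClosedPoint K)) (n : Fin 3 → ℕ) :
    (Fin 3 → K[X]) →+ (∀ c : P, Fin 3 → ResF c.1) where
  toFun y := fun c i => red c.1 (n i) (y i)
  map_zero' := by funext c i; simp
  map_add' y z := by funext c i; simp

lemma redP_apply (P : Finset (ClosedPoint K)) (n : Fin 3 → ℕ) (y : Fin 3 → K[X]) (c : P) (i : Fin 3) :
    redP P n y c i = red c.1 (n i) (y i) := rfl

lemma prod_card_ResF (P : Finset (ClosedPoint K)) (m : ℕ) :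
    ∏ c : P, Fintype.card (ResF c.1) ^ m = qK K ^ (m * sdeg P) := by
  simp only [card_ResF, ← pow_mul]
  rw [Finset.prod_pow_eq_pow_sum, sdeg, ← Finset.sum_coe_sort P, Finset.mul_sum]
  congr 1
  exact Finset.sum_congr rfl fun c _ => mul_comm _ _

/-- All triples of dehomogenised forms of degrees `k i`. -/
def GF (K : Type) [Field K] [Fintype K] (k : Fin 3 → ℕ) : Finset (Fin 3 → K[X]) :=
  Fintype.piFinset fun i => PF K (k i + 1)

lemma mem_GF {k : Fin 3 → ℕ} {g : Fin 3 → K[X]} : g ∈ GF K k ↔ ∀ i, g i ∈ degreeLT K (k i + 1) := by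
  simp [GF, mem_PF]

lemma card_GF (k : Fin 3 → ℕ) : (GF K k).card = qK K ^ (∑ i, k i + 3) := by
  rw [GF, Fintype.card_piFinset]
  simp only [card_PF]
  rw [Finset.prod_pow_eq_pow_sum, Finset.sum_add_distrib]
  simp

/-- The values of the triples `g` at the points of `P` are equidistributed once the degrees `k i` exceed
the total degree of `P`. -/
lemma sum_red_g {P : Finset (ClosedPoint K)} (hP : Sum.inr () ∈ P) {k : Fin 3 → ℕ}
    (hk : ∀ i, sdeg P ≤ k i + 1) (Φ : (∀ c : P, Fin 3 → ResF c.1) → ℕ) :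
    (∑ g ∈ GF K k, Φ (redP P k g)) * qK K ^ (3 * sdeg P)
      = qK K ^ (∑ i, k i + 3) * ∑ r, Φ r := by
  have hsum : ∑ i, (k i + 1 - sdeg P) + 3 * sdeg P = ∑ i, k i + 3 := by
    have h0 := hk 0; have h1 := hk 1; have h2 := hk 2
    simp only [Fin.sum_univ_three]; omega
  have hc : (Finset.univ : Finset (∀ c : P, Fin 3 → ResF c.1)).card = qK K ^ (3 * sdeg P) := by
    rw [Finset.card_univ, Fintype.card_pi, ← prod_card_ResF]
    refine Finset.prod_congr rfl fun c _ => ?_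
    rw [Fintype.card_fun, Fintype.card_fin]
  have := equidist_sum (redP P k) (GF K k) (fun a ha b hb => by
      rw [mem_GF] at *; exact fun i => Submodule.sub_mem _ (ha i) (hb i)) Finset.univ
    (fun _ _ => Finset.mem_univ _) (qK K ^ ∑ i, (k i + 1 - sdeg P)) ?_ ?_ Φ
  · rw [this, ← hsum, pow_add]; ring
  · calc _ ≤ ((Fintype.piFinset fun i => PF K (k i + 1 - sdeg P)).image (mulL (sE P))).card := by
          apply Finset.card_le_card
          intro g hg
          rw [Finset.mem_filter, mem_GF] at hg
          have h2 : ∀ i, ∃ h ∈ degreeLT K (k i + 1 - sdeg P), g i = sE P * h := by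
            intro i
            refine mem_ker hP (hg.1 i) fun c hc => ?_
            exact congrFun (congrFun hg.2 ⟨c, hc⟩) i
          choose h h3 h4 using h2
          rw [Finset.mem_image]
          refine ⟨h, ?_, ?_⟩
          · simp only [Fintype.mem_piFinset, mem_PF]; exact h3
          · funext i; exact (h4 i).symm
      _ ≤ _ := Finset.card_image_le
      _ = _ := by
        rw [Fintype.card_piFinset]; simp only [card_PF]; rw [Finset.prod_pow_eq_pow_sum]
  · rw [card_GF, hc, ← pow_add, hsum]

/-- The solutions over the finite field `F` of the linear relation defined by `γ` and `g`. -/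
def solF {F : Type} [Field F] [Fintype F] (γ g : Fin 3 → F) : Finset (Fin 3 → F) :=
  Finset.univ.filter fun y => ∑ i, γ i * g i * y i = 0

lemma card_solF {F : Type} [Field F] [Fintype F] {γ g : Fin 3 → F} {l : Fin 3} (hl : γ l * g l ≠ 0) :
    (solF γ g).card = Fintype.card F ^ 2 := by
  let φ : (Fin 3 → F) →ₗ[F] F := ∑ i, (γ i * g i) • LinearMap.proj i
  have hφ : ∀ y, φ y = ∑ i, γ i * g i * y i := by
    intro y; simp [φ]
  have hsurj : Function.Surjective φ := by
    intro x
    refine ⟨Pi.single l ((γ l * g l)⁻¹ * x), ?_⟩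
    rw [hφ, Finset.sum_eq_single l]
    · simp only [Pi.single_eq_same]; rw [← mul_assoc, mul_inv_cancel₀ hl, one_mul]
    · intro i _ hi; simp [hi]
    · intro h; exact absurd (Finset.mem_univ _) h
  have h1 := LinearMap.finrank_range_add_finrank_ker φ
  rw [LinearMap.range_eq_top.2 hsurj, finrank_top] at h1
  simp only [Module.finrank_self, Module.finrank_fin_fun] at h1
  have h2 := Module.natCard_eq_pow_finrank (K := F) (V := LinearMap.ker φ)
  rw [show Module.finrank F (LinearMap.ker φ) = 2 by omega, Nat.card_eq_fintype_card (α := F)] at h2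
  rw [← h2, Nat.card_eq_fintype_card, Fintype.card_of_subtype (solF γ g)]
  intro y
  rw [LinearMap.mem_ker, hφ, solF, Finset.mem_filter]
  simp
end dP5

/-! ### Pairs of syzygies with prescribed local conditions -/

namespace dP5
open Polynomial
open scoped Classical

variable {K : Type} [Field K]

/-- The triple `γ i * g i`, whose syzygies are the admissible triples `y` over `g`. -/
abbrev tw (γ : Fin 3 → K) (g : Fin 3 → K[X]) : Fin 3 → K[X] := fun i => C (γ i) * g i

/-- The constants `γ i` in the residue field at `c`. -/
abbrev gF (γ : Fin 3 → K) (c : ClosedPoint K) : Fin 3 → ResF c := fun i => algebraMap K _ (γ i)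

lemma gF_ne {γ : Fin 3 → K} (hγ : ∀ i, γ i ≠ 0) (c : ClosedPoint K) (i : Fin 3) : gF γ c i ≠ 0 :=
  fun h => hγ i ((algMap_eq_zero c _).1 h)

/-- The values at `c` of a triple of forms of degrees `n i`. -/
abbrev redT (c : ClosedPoint K) (n : Fin 3 → ℕ) (y : Fin 3 → K[X]) : Fin 3 → ResF c :=
  fun i => red c (n i) (y i)

lemma red_rel {γ : Fin 3 → K} {k : Fin 3 → ℕ} {g y : Fin 3 → K[X]} {a : ℕ} (hk : ∀ i, k i ≤ a)
    (hg : ∀ i, g i ∈ degreeLT K (k i + 1)) (hy : y ∈ Lam k (tw γ g) (a + 1)) (c : ClosedPoint K) :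
    ∑ i, gF γ c i * redT c k g i * redT c (fun i => a - k i) y i = 0 := by
  have h := congrArg (red c a) hy.2
  rw [map_sum, map_zero] at h
  rw [← h]
  refine Finset.sum_congr rfl fun i _ => ?_
  have h1 : a = k i + (a - k i) := by have := hk i; omega
  have h2 : y i ∈ degreeLT K ((a - k i) + 1) := by
    have := hy.1 i
    rwa [show a + 1 - k i = a - k i + 1 by have := hk i; omega] at this
  have h3 : red c a (tw γ g i * y i) = gF γ c i * (red c (k i) (g i) * red c (a - k i) (y i)) := by
    rw [← red_mul c (hg i) h2, ← red_C_mul, ← h1]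
    congr 1
    rw [mul_assoc]
  rw [h3, mul_assoc]

variable [Fintype K]

lemma card_sol_pi {P : Finset (ClosedPoint K)} {γ : Fin 3 → K} (hγ : ∀ i, γ i ≠ 0)
    {g : Fin 3 → K[X]} {k : Fin 3 → ℕ} (hg : ∀ c ∈ P, ∃ l, red c (k l) (g l) ≠ 0) :
    (Fintype.piFinset fun c : P => solF (gF γ c.1) (redT c.1 k g)).card = qK K ^ (2 * sdeg P) := by
  rw [Fintype.card_piFinset, ← prod_card_ResF]
  refine Finset.prod_congr rfl fun c _ => ?_
  obtain ⟨l, hl⟩ := hg c.1 c.2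
  exact card_solF (l := l) (mul_ne_zero (gF_ne hγ c.1 l) hl)

/-- Syzygies vanishing at all points of `P` are multiples of the equation of `P`. -/
lemma card_lam_ker {P : Finset (ClosedPoint K)} (hP : Sum.inr () ∈ P) {k : Fin 3 → ℕ} {a : ℕ}
    (hk : ∀ i, k i ≤ a) (G : Fin 3 → K[X]) :
    ((LamF k G (a + 1)).filter fun y => redP P (fun i => a - k i) y = 0).card
      ≤ qK K ^ dL k G (a + 1 - sdeg P) := by
  rw [← card_LamF]
  refine le_trans (Finset.card_le_card ?_) (Finset.card_image_le (f := mulL (sE P)))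
  intro y hy
  rw [Finset.mem_filter, mem_LamF] at hy
  have h2 : ∀ i, ∃ h ∈ degreeLT K (a - k i + 1 - sdeg P), y i = sE P * h := by
    intro i
    refine mem_ker hP ?_ fun c hc => congrFun (congrFun hy.2 ⟨c, hc⟩) i
    have := hy.1.1 i
    rwa [show a + 1 - k i = a - k i + 1 by have := hk i; omega] at this
  choose h h3 h4 using h2
  rw [Finset.mem_image]
  refine ⟨h, ?_, ?_⟩
  · rw [mem_LamF]
    refine ⟨fun i => ?_, ?_⟩
    · have := h3 i
      rwa [show a - k i + 1 - sdeg P = a + 1 - sdeg P - k i by have := hk i; omega] at this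
    · have h5 := hy.1.2
      have h6 : sE P * ∑ i, G i * h i = 0 := by
        rw [Finset.mul_sum, ← h5]
        refine Finset.sum_congr rfl fun i _ => ?_
        rw [h4 i]; ring
      exact (mul_eq_zero.1 h6).resolve_left (sE_ne_zero P)
  · funext i; exact (h4 i).symm

/-- The values of `(g, y, y')` at the closed point `c` satisfy the local condition. -/
def goodAt (γ γ' : Fin 3 → K) (k : Fin 3 → ℕ) (a a' : ℕ) (g y y' : Fin 3 → K[X]) (c : ClosedPoint K) :
    Prop :=
  locGood (gF γ c) (gF γ' c) (redT c k g) (redT c (fun i => a - k i) y) (redT c (fun i => a' - k i) y')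

/-- If both spaces of syzygies have the expected dimensions, the pairs `(y, y')` are equidistributed among
the local solutions at the points of `P`. -/
lemma lat_count {P : Finset (ClosedPoint K)} (hP : Sum.inr () ∈ P) {γ γ' : Fin 3 → K}
    (hγ : ∀ i, γ i ≠ 0) (hγ' : ∀ i, γ' i ≠ 0)
    {k : Fin 3 → ℕ} {a a' : ℕ} (hk : ∀ i, k i ≤ a) (hk' : ∀ i, k i ≤ a') {g : Fin 3 → K[X]}
    (hgd : ∀ i, g i ∈ degreeLT K (k i + 1))
    (hg : ∀ c ∈ P, ∃ l, red c (k l) (g l) ≠ 0)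
    (h1 : dL k (tw γ g) (a + 1) = dL k (tw γ g) (a + 1 - sdeg P) + 2 * sdeg P)
    (h1' : dL k (tw γ' g) (a' + 1) = dL k (tw γ' g) (a' + 1 - sdeg P) + 2 * sdeg P) :
    ((LamF k (tw γ g) (a + 1) ×ˢ LamF k (tw γ' g) (a' + 1)).filter fun z =>
      ∀ c ∈ P, goodAt γ γ' k a a' g z.1 z.2 c).card * qK K ^ (4 * sdeg P)
    = qK K ^ dL k (tw γ g) (a + 1) * qK K ^ dL k (tw γ' g) (a' + 1) *
      ∏ c : P, (locSet (gF γ c.1) (gF γ' c.1) (redT c.1 k g)).card := by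
  set S := Fintype.piFinset fun c : P => solF (gF γ c.1) (redT c.1 k g) with hS
  set S' := Fintype.piFinset fun c : P => solF (gF γ' c.1) (redT c.1 k g) with hS'
  have hcS := card_sol_pi hγ hg
  have hcS' := card_sol_pi hγ' hg
  rw [← hS] at hcS
  rw [← hS'] at hcS'
  let Φ : (∀ c : P, Fin 3 → ResF c.1) × (∀ c : P, Fin 3 → ResF c.1) → ℕ := fun z =>
    if ∀ c : P, locGood (gF γ c.1) (gF γ' c.1) (redT c.1 k g) (z.1 c) (z.2 c) then 1 else 0
  have hΦ : ∑ z ∈ S ×ˢ S', Φ z = ∏ c : P, (locSet (gF γ c.1) (gF γ' c.1) (redT c.1 k g)).card := by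
    rw [← Fintype.card_piFinset, ← Finset.card_filter]
    refine Finset.card_bij' (fun z _ => fun c => (z.1 c, z.2 c))
      (fun w _ => (fun c => (w c).1, fun c => (w c).2)) ?_ ?_ ?_ ?_
    · intro z hz
      rw [Finset.mem_filter] at hz
      rw [Fintype.mem_piFinset]
      intro c
      rw [locSet, Finset.mem_filter]
      exact ⟨Finset.mem_univ _, hz.2 c⟩
    · intro w hw
      rw [Fintype.mem_piFinset] at hw
      have hw' : ∀ c : P, locGood (gF γ c.1) (gF γ' c.1) (redT c.1 k g) (w c).1 (w c).2 :=
        fun c => (Finset.mem_filter.1 (hw c)).2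
      rw [Finset.mem_filter, Finset.mem_product, Fintype.mem_piFinset, Fintype.mem_piFinset]
      refine ⟨⟨fun c => ?_, fun c => ?_⟩, hw'⟩
      · exact Finset.mem_filter.2 ⟨Finset.mem_univ _, (hw' c).1⟩
      · exact Finset.mem_filter.2 ⟨Finset.mem_univ _, (hw' c).2.1⟩
    · intro z _; rfl
    · intro w _; rfl
  have key := equidist_sum ((redP P fun i => a - k i).prodMap (redP P fun i => a' - k i))
    (LamF k (tw γ g) (a + 1) ×ˢ LamF k (tw γ' g) (a' + 1)) ?_ (S ×ˢ S') ?_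
    (qK K ^ dL k (tw γ g) (a + 1 - sdeg P) * qK K ^ dL k (tw γ' g) (a' + 1 - sdeg P)) ?_ ?_ Φ
  · have hL : ∑ z ∈ LamF k (tw γ g) (a + 1) ×ˢ LamF k (tw γ' g) (a' + 1),
        Φ (((redP P fun i => a - k i).prodMap (redP P fun i => a' - k i)) z) =
        ((LamF k (tw γ g) (a + 1) ×ˢ LamF k (tw γ' g) (a' + 1)).filter fun z =>
          ∀ c ∈ P, goodAt γ γ' k a a' g z.1 z.2 c).card := by
      rw [Finset.card_filter]
      refine Finset.sum_congr rfl fun z _ => ?_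
      refine if_congr ?_ rfl rfl
      rw [Subtype.forall]
      rfl
    rw [← hL, key, hΦ, h1, h1', pow_add, pow_add]
    rw [show 4 * sdeg P = 2 * sdeg P + 2 * sdeg P by ring, pow_add]; ring
  · intro z hz w hw
    simp only [Finset.mem_product, mem_LamF] at *
    exact ⟨Submodule.sub_mem _ hz.1 hw.1, Submodule.sub_mem _ hz.2 hw.2⟩
  · intro z hz
    simp only [Finset.mem_product, mem_LamF] at hz
    rw [Finset.mem_product, Fintype.mem_piFinset, Fintype.mem_piFinset]
    exact ⟨fun c => Finset.mem_filter.2 ⟨Finset.mem_univ _, red_rel hk hgd hz.1 c.1⟩,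
      fun c => Finset.mem_filter.2 ⟨Finset.mem_univ _, red_rel hk' hgd hz.2 c.1⟩⟩
  · refine le_trans (Finset.card_le_card (t :=
      ((LamF k (tw γ g) (a + 1)).filter fun y => redP P (fun i => a - k i) y = 0) ×ˢ
      ((LamF k (tw γ' g) (a' + 1)).filter fun y => redP P (fun i => a' - k i) y = 0)) ?_) ?_
    · intro z hz
      rw [Finset.mem_filter, Finset.mem_product] at hz
      rw [Finset.mem_product, Finset.mem_filter, Finset.mem_filter]
      exact ⟨⟨hz.1.1, congrArg Prod.fst hz.2⟩, ⟨hz.1.2, congrArg Prod.snd hz.2⟩⟩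
    · rw [Finset.card_product]
      exact Nat.mul_le_mul (card_lam_ker hP hk _) (card_lam_ker hP hk' _)
  · rw [Finset.card_product, Finset.card_product, hcS, hcS', card_LamF, card_LamF, h1, h1', pow_add,
      pow_add]; ring

/-- Averaging the local counts over `g` produces the partial Euler product. -/
lemma sum_loc_prod {P : Finset (ClosedPoint K)} (hP : Sum.inr () ∈ P) {γ γ' : Fin 3 → K}
    (hγ : ∀ i, γ i ≠ 0) (hγ' : ∀ i, γ' i ≠ 0) {k : Fin 3 → ℕ} (hk : ∀ i, sdeg P ≤ k i + 1) :
    ∑ g ∈ GF K k, ((∏ c : P, (locSet (gF γ c.1) (gF γ' c.1) (redT c.1 k g)).card : ℕ) : ℝ)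
      = (qK K : ℝ) ^ (∑ i, k i + 3) * (qK K : ℝ) ^ (4 * sdeg P) *
        ∏ c ∈ P, tauFactor (qK K) 3 (cpDeg c) := by
  have hq : (qK K : ℝ) ≠ 0 := by exact_mod_cast (qK_pos (K := K)).ne'
  have h1 := sum_red_g hP hk (fun r => ∏ c : P, (locSet (gF γ c.1) (gF γ' c.1) (r c)).card)
  have h2 : ∑ r : ∀ c : P, Fin 3 → ResF c.1, ∏ c : P, (locSet (gF γ c.1) (gF γ' c.1) (r c)).card
      = ∏ c : P, ∑ g, (locSet (gF γ c.1) (gF γ' c.1) g).card := by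
    rw [Finset.prod_univ_sum, Fintype.piFinset_univ]
  have h3 : ∀ c : P, ((∑ g, (locSet (gF γ c.1) (gF γ' c.1) g).card : ℕ) : ℝ) =
      (qK K : ℝ) ^ (7 * cpDeg c.1) * tauFactor (qK K) 3 (cpDeg c.1) := by
    intro c
    have h := sum_locSet (F := ResF c.1) (gF_ne hγ c.1) (gF_ne hγ' c.1)
    have h' : ((∑ g, (locSet (gF γ c.1) (gF γ' c.1) g).card : ℕ) : ℝ) =
        ((Fintype.card (ResF c.1) : ℝ) - 1) ^ 5 *
      ((Fintype.card (ResF c.1) : ℝ) ^ 2 + 5 * Fintype.card (ResF c.1) + 1) := by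
      exact_mod_cast h
    rw [h', card_ResF, tauFactor]
    push_cast
    set x := (qK K : ℝ) ^ cpDeg c.1 with hx
    have hx0 : x ≠ 0 := pow_ne_zero _ hq
    rw [mul_comm 7, pow_mul, mul_comm 2, pow_mul, inv_pow, ← hx]
    field_simp
    ring
  have h4 : ∏ c : P, (qK K : ℝ) ^ (7 * cpDeg c.1) = (qK K : ℝ) ^ (7 * sdeg P) := by
    rw [Finset.prod_pow_eq_pow_sum, sdeg, ← Finset.sum_coe_sort P, Finset.mul_sum]
  have h5 : (∑ g ∈ GF K k, ((∏ c : P, (locSet (gF γ c.1) (gF γ' c.1) (redT c.1 k g)).card : ℕ) : ℝ)) *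
      (qK K : ℝ) ^ (3 * sdeg P) = (qK K : ℝ) ^ (∑ i, k i + 3) * ((qK K : ℝ) ^ (7 * sdeg P) *
        ∏ c ∈ P, tauFactor (qK K) 3 (cpDeg c)) := by
    rw [h2] at h1
    have h6 := congrArg (fun n : ℕ => (n : ℝ)) h1
    rw [← h4, ← Finset.prod_coe_sort P (fun c => tauFactor (qK K) 3 (cpDeg c)), ← Finset.prod_mul_distrib,
      ← Finset.prod_congr rfl (fun c _ => h3 c)]
    push_cast at h6 ⊢
    exact h6
  have h7 : (qK K : ℝ) ^ (3 * sdeg P) ≠ 0 := pow_ne_zero _ hq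
  apply mul_right_cancel₀ h7
  rw [h5, show 7 * sdeg P = 4 * sdeg P + 3 * sdeg P by ring, pow_add]
  ring
end dP5

/-! ### Divisor and prime bounds -/

namespace dP5
open Polynomial
open scoped Classical

variable {K : Type} [Field K] [Fintype K]

lemma card_normFac_le {f : K[X]} (hf : f ≠ 0) :
    Multiset.card (UniqueFactorizationMonoid.normalizedFactors f) ≤ f.natDegree := by
  have h := leadingCoeff_mul_prod_normalizedFactors f
  have h0 : (0 : K[X]) ∉ UniqueFactorizationMonoid.normalizedFactors f :=
    UniqueFactorizationMonoid.zero_notMem_normalizedFactors f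
  have h1 : f.natDegree = ((UniqueFactorizationMonoid.normalizedFactors f).map natDegree).sum := by
    conv_lhs => rw [← h]
    rw [natDegree_C_mul (leadingCoeff_ne_zero.2 hf), natDegree_multiset_prod _ h0]
  rw [h1]
  have h2 : ∀ x ∈ (UniqueFactorizationMonoid.normalizedFactors f).map natDegree, 1 ≤ x := by
    intro x hx
    obtain ⟨p, hp, rfl⟩ := Multiset.mem_map.1 hx
    exact (UniqueFactorizationMonoid.irreducible_of_normalized_factor p hp).natDegree_pos
  have := Multiset.card_nsmul_le_sum (a := 1) h2
  simpa using this

/-- The divisor bound: a non-zero polynomial of degree at most `B` has at most `q * 2 ^ B` divisors. -/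
lemma card_dvd_le {f : K[X]} (hf : f ≠ 0) {B : ℕ} (hB : f.natDegree ≤ B) (A : Finset K[X])
    (hA : ∀ d ∈ A, d ∣ f) : A.card ≤ qK K * 2 ^ B := by
  set S := UniqueFactorizationMonoid.normalizedFactors f with hS
  have h1 : A.card ≤ ((Finset.univ : Finset K) ×ˢ S.powerset.toFinset).card := by
    refine Finset.card_le_card_of_injOn
      (fun d => (d.leadingCoeff, UniqueFactorizationMonoid.normalizedFactors d)) ?_ ?_
    · intro d hd
      have hdf := hA d hd
      have hd0 : d ≠ 0 := fun h => hf (by rw [h] at hdf; exact zero_dvd_iff.1 hdf)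
      simp only [Finset.coe_product, Set.mem_prod, Finset.mem_coe, Finset.mem_univ, true_and,
        Multiset.mem_toFinset, Multiset.mem_powerset]
      exact (UniqueFactorizationMonoid.dvd_iff_normalizedFactors_le_normalizedFactors hd0 hf).1 hdf
    · intro d _ e _ h
      simp only [Prod.mk.injEq] at h
      rw [← leadingCoeff_mul_prod_normalizedFactors d, ← leadingCoeff_mul_prod_normalizedFactors e, h.1,
        h.2]
  refine h1.trans ?_
  rw [Finset.card_product, Finset.card_univ]
  refine Nat.mul_le_mul_left _ ((Multiset.toFinset_card_le _).trans ?_)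
  rw [Multiset.card_powerset]
  exact Nat.pow_le_pow_right (by norm_num) ((card_normFac_le hf).trans hB)

/-- The number of non-zero multiples of `p` of degree `< n` is at most `q ^ n / q ^ deg p`. -/
lemma card_mult_le {p : K[X]} (hp : p ≠ 0) {n : ℕ} (A : Finset K[X])
    (hA : ∀ f ∈ A, f ∈ degreeLT K n ∧ f ≠ 0 ∧ p ∣ f) : A.card * qK K ^ p.natDegree ≤ qK K ^ n := by
  rcases A.eq_empty_or_nonempty with h | ⟨f, hf⟩
  · rw [h]; simp
  have hj : p.natDegree ≤ n := by
    obtain ⟨h1, h2, h3⟩ := hA f hf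
    have := natDegree_le_of_dvd h3 h2
    rcases mem_degreeLT_iff.1 h1 with h | h
    · exact absurd h h2
    · omega
  have : A.card ≤ (PF K (n - p.natDegree)).card := by
    refine le_trans (Finset.card_le_card (t := (PF K (n - p.natDegree)).image (p * ·)) ?_)
      Finset.card_image_le
    intro f hf
    obtain ⟨h1, h2, h, rfl⟩ := hA f hf
    exact Finset.mem_image.2 ⟨h, mem_PF.2 (mem_of_mul_mem hp h1), rfl⟩
  rw [card_PF] at this
  calc _ ≤ qK K ^ (n - p.natDegree) * qK K ^ p.natDegree := Nat.mul_le_mul_right _ this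
    _ = _ := by rw [← pow_add, Nat.sub_add_cancel hj]

/-- The monic irreducible polynomials of degree `j`. -/
def Irr (K : Type) [Field K] [Fintype K] (j : ℕ) : Finset K[X] :=
  (PF K (j + 1)).filter fun p => p.Monic ∧ Irreducible p ∧ p.natDegree = j

lemma mem_Irr {j : ℕ} {p : K[X]} : p ∈ Irr K j ↔ p.Monic ∧ Irreducible p ∧ p.natDegree = j := by
  rw [Irr, Finset.mem_filter, mem_PF, mem_degreeLT_iff]
  constructor
  · exact fun h => h.2
  · intro h; exact ⟨Or.inr (by omega), h⟩

lemma card_Irr (j : ℕ) : (Irr K j).card ≤ qK K ^ j := by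
  rw [← card_PF]
  refine Finset.card_le_card_of_injOn (fun p => p - X ^ j) ?_ (fun a _ b _ h => sub_left_injective h)
  intro p hp
  obtain ⟨h1, h2, h3⟩ := mem_Irr.1 hp
  rw [Finset.mem_coe, mem_PF, mem_degreeLT]
  have hd : p.degree = j := by rw [degree_eq_natDegree h1.ne_zero, h3]
  rw [← hd]
  exact degree_sub_lt (by rw [degree_X_pow, hd]) h1.ne_zero (by rw [leadingCoeff_X_pow]; exact h1)

lemma geom_tail {q : ℝ} (hq : 2 ≤ q) (D m : ℕ) : ∑ j ∈ Finset.Ioc D m, (q ^ j)⁻¹ ≤ (q ^ D)⁻¹ := by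
  have hq0 : 0 < q := by linarith
  rcases le_total D m with h | h
  · have : ∀ m, D ≤ m → ∑ j ∈ Finset.Ioc D m, (q ^ j)⁻¹ ≤ (q ^ D)⁻¹ - (q ^ m)⁻¹ := by
      intro m hm
      induction m, hm using Nat.le_induction with
      | base => simp
      | succ m hm ih =>
        rw [Finset.sum_Ioc_succ_top hm]
        have h2 : (q ^ (m + 1))⁻¹ * 2 ≤ (q ^ m)⁻¹ := by
          rw [pow_succ, mul_inv]
          have : 0 < (q ^ m)⁻¹ := by positivity
          have h3 : q⁻¹ * 2 ≤ 1 := by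
            rw [inv_mul_le_iff₀ hq0]; linarith
          nlinarith
        linarith
    have h2 := this m h
    have : 0 < (q ^ m)⁻¹ := by positivity
    linarith
  · rw [Finset.Ioc_eq_empty (by omega)]; simp; positivity

lemma two_le_qR : (2 : ℝ) ≤ (qK K : ℝ) := by exact_mod_cast one_lt_qK (K := K)
lemma qR_pos : (0 : ℝ) < (qK K : ℝ) := by exact_mod_cast qK_pos (K := K)

/-- Union bound over irreducibles of degree `> D`: there are at most `q ^ j` of degree `j`, so a bound
`T / q ^ (2 j)` for each of them sums to a geometric tail. -/
lemma prime_union {α : Type*} (A : Finset α) (Q : K[X] → α → Prop) (D m : ℕ) (T : ℝ) (hT : 0 ≤ T)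
    (h : ∀ x ∈ A, ∃ p : K[X], p.Monic ∧ Irreducible p ∧ D < p.natDegree ∧ p.natDegree ≤ m ∧ Q p x)
    (hb : ∀ p : K[X], p.Monic → Irreducible p → D < p.natDegree → p.natDegree ≤ m →
      ((A.filter fun x => Q p x).card : ℝ) * (qK K : ℝ) ^ (2 * p.natDegree) ≤ T) :
    (A.card : ℝ) * (qK K : ℝ) ^ D ≤ T := by
  have hq := qR_pos (K := K)
  have h1 : A ⊆ (Finset.Ioc D m).biUnion fun j => (Irr K j).biUnion fun p => A.filter fun x => Q p x := by
    intro x hx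
    obtain ⟨p, hp1, hp2, hp3, hp4, hp5⟩ := h x hx
    simp only [Finset.mem_biUnion]
    exact ⟨p.natDegree, Finset.mem_Ioc.2 ⟨hp3, hp4⟩, p, mem_Irr.2 ⟨hp1, hp2, rfl⟩,
      Finset.mem_filter.2 ⟨hx, hp5⟩⟩
  have h2 : (A.card : ℝ) ≤ ∑ j ∈ Finset.Ioc D m, ∑ p ∈ Irr K j, ((A.filter fun x => Q p x).card : ℝ) := by
    have h3 := (Finset.card_le_card h1).trans Finset.card_biUnion_le
    have h4 : A.card ≤ ∑ j ∈ Finset.Ioc D m, ∑ p ∈ Irr K j, (A.filter fun x => Q p x).card :=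
      h3.trans (Finset.sum_le_sum fun j _ => Finset.card_biUnion_le)
    exact_mod_cast h4
  have h5 : ∀ j ∈ Finset.Ioc D m, ∑ p ∈ Irr K j, ((A.filter fun x => Q p x).card : ℝ)
      ≤ T * ((qK K : ℝ) ^ j)⁻¹ := by
    intro j hj
    rw [Finset.mem_Ioc] at hj
    have h6 : ∀ p ∈ Irr K j, ((A.filter fun x => Q p x).card : ℝ) ≤ T * ((qK K : ℝ) ^ (2 * j))⁻¹ := by
      intro p hp
      obtain ⟨p1, p2, p3⟩ := mem_Irr.1 hp
      rw [le_mul_inv_iff₀ (by positivity)]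
      have := hb p p1 p2 (by omega) (by omega)
      rwa [p3] at this
    refine (Finset.sum_le_card_nsmul _ _ _ h6).trans ?_
    rw [nsmul_eq_mul]
    have h7 : ((Irr K j).card : ℝ) ≤ (qK K : ℝ) ^ j := by exact_mod_cast card_Irr j
    calc ((Irr K j).card : ℝ) * (T * ((qK K : ℝ) ^ (2 * j))⁻¹)
        ≤ (qK K : ℝ) ^ j * (T * ((qK K : ℝ) ^ (2 * j))⁻¹) := by gcongr
      _ = _ := by rw [two_mul, pow_add]; field_simp
  have h8 : (A.card : ℝ) ≤ T * ((qK K : ℝ) ^ D)⁻¹ := by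
    refine h2.trans ((Finset.sum_le_sum h5).trans ?_)
    rw [← Finset.mul_sum]
    exact mul_le_mul_of_nonneg_left (geom_tail two_le_qR D m) hT
  rwa [le_mul_inv_iff₀ (by positivity)] at h8

/-- Few pairs of polynomials have a common prime factor of large degree. -/
lemma card_pairs (B n : ℕ) (A : Finset (K[X] × K[X]))
    (hA : ∀ z ∈ A, z.1 ∈ degreeLT K B ∧ z.2 ∈ degreeLT K B ∧ z.1 ≠ 0 ∧ z.2 ≠ 0)
    (hn : ∀ z ∈ A, ∃ p : K[X], p.Monic ∧ Irreducible p ∧ n < p.natDegree ∧ p ∣ z.1 ∧ p ∣ z.2) :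
    (A.card : ℝ) * (qK K : ℝ) ^ n ≤ (qK K : ℝ) ^ (2 * B) := by
  refine prime_union A (fun p z => p ∣ z.1 ∧ p ∣ z.2) n B _ (by have := qR_pos (K := K); positivity) ?_ ?_
  · intro z hz
    obtain ⟨p, h1, h2, h3, h4, h5⟩ := hn z hz
    refine ⟨p, h1, h2, h3, ?_, h4, h5⟩
    obtain ⟨a1, -, a3, -⟩ := hA z hz
    have h6 := natDegree_le_of_dvd h4 a3
    have h7 := natDegree_le_of_mem a1
    omega
  · intro p h1 h2 h3 h4
    have h5 : (A.filter fun z => p ∣ z.1 ∧ p ∣ z.2).card ≤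
        ((PF K B).filter fun f => f ≠ 0 ∧ p ∣ f).card * ((PF K B).filter fun f => f ≠ 0 ∧ p ∣ f).card := by
      rw [← Finset.card_product]
      apply Finset.card_le_card
      intro z hz
      rw [Finset.mem_filter] at hz
      obtain ⟨a1, a2, a3, a4⟩ := hA z hz.1
      simp only [Finset.mem_product, Finset.mem_filter, mem_PF]
      exact ⟨⟨a1, a3, hz.2.1⟩, a2, a4, hz.2.2⟩
    have h6 := card_mult_le h1.ne_zero (n := B) ((PF K B).filter fun f => f ≠ 0 ∧ p ∣ f) (by
      intro f hf; rw [Finset.mem_filter, mem_PF] at hf; exact hf)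
    have h7 : (A.filter fun z => p ∣ z.1 ∧ p ∣ z.2).card * qK K ^ (2 * p.natDegree) ≤ qK K ^ (2 * B) := by
      rw [two_mul, two_mul, pow_add, pow_add]
      calc _ ≤ _ := Nat.mul_le_mul_right _ h5
        _ = (((PF K B).filter fun f => f ≠ 0 ∧ p ∣ f).card * qK K ^ p.natDegree) *
          (((PF K B).filter fun f => f ≠ 0 ∧ p ∣ f).card * qK K ^ p.natDegree) := by ring
        _ ≤ _ := Nat.mul_le_mul h6 h6
    have h8 : ((A.filter fun z => p ∣ z.1 ∧ p ∣ z.2).card : ℝ) * (qK K : ℝ) ^ (2 * p.natDegree) ≤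
        (qK K : ℝ) ^ (2 * B) := by exact_mod_cast h7
    convert h8

/-- The pairs `(g, y)` of triples without vanishing entries with `∑ γ i * g i * y i = 0`. -/
def GY (γ : Fin 3 → K) (k : Fin 3 → ℕ) (B : ℕ) : Finset ((Fin 3 → K[X]) × (Fin 3 → K[X])) :=
  ((GF K k).filter fun g => ∀ i, g i ≠ 0).biUnion fun g => (LamNZ k (tw γ g) B).image fun y => (g, y)

lemma mem_GY {γ : Fin 3 → K} {k : Fin 3 → ℕ} {B : ℕ} {z : (Fin 3 → K[X]) × (Fin 3 → K[X])} :
    z ∈ GY γ k B ↔ (∀ i, z.1 i ∈ degreeLT K (k i + 1)) ∧ (∀ i, z.1 i ≠ 0) ∧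
      z.2 ∈ Lam k (tw γ z.1) B ∧ ∀ i, z.2 i ≠ 0 := by
  rcases z with ⟨g, y⟩
  simp only [GY, Finset.mem_biUnion, Finset.mem_filter, mem_GF, Finset.mem_image, mem_LamNZ,
    Prod.mk.injEq]
  constructor
  · rintro ⟨g', ⟨h1, h2⟩, y', h3, rfl, rfl⟩; exact ⟨h1, h2, h3⟩
  · rintro ⟨h1, h2, h3⟩; exact ⟨g, ⟨h1, h2⟩, y, h3, rfl, rfl⟩

/-- The pair `(g, y)` is determined, up to the choice of divisors, by the products `g i * y i`; the third
product is determined by the other two. -/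
lemma card_GY_le {γ : Fin 3 → K} (hγ : ∀ i, γ i ≠ 0) {k : Fin 3 → ℕ} {B : ℕ}
    (A : Finset ((Fin 3 → K[X]) × (Fin 3 → K[X]))) (hA : A ⊆ GY γ k B) (S : Finset (K[X] × K[X]))
    (hS : ∀ z ∈ A, (z.1 0 * z.2 0, z.1 1 * z.2 1) ∈ S) :
    A.card ≤ S.card * (qK K * 2 ^ B) ^ 3 := by
  have hdeg : ∀ z ∈ A, ∀ i, z.1 i * z.2 i ∈ degreeLT K B ∧ z.1 i * z.2 i ≠ 0 := by
    intro z hz i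
    obtain ⟨h1, h2, h3, h4⟩ := mem_GY.1 (hA hz)
    refine ⟨?_, mul_ne_zero (h2 i) (h4 i)⟩
    have h5 := mul_mem_degreeLT (h1 i) (h3.1 i)
    rcases mem_degreeLT_iff.1 (h3.1 i) with h | h
    · exact absurd h (h4 i)
    · rwa [show k i + (B - k i) = B by omega] at h5
  rw [mul_comm]
  refine Finset.card_le_mul_card_image_of_maps_to hS _ ?_
  rintro ⟨Y0, Y1⟩ _
  set A' := A.filter fun z => (z.1 0 * z.2 0, z.1 1 * z.2 1) = (Y0, Y1) with hA'
  -- the third product is determined by the first two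
  set Y2 : K[X] := -(C (γ 2)⁻¹ * (C (γ 0) * Y0 + C (γ 1) * Y1)) with hY2
  set Y : Fin 3 → K[X] := ![Y0, Y1, Y2] with hY
  have hYz : ∀ z ∈ A', ∀ i, z.1 i * z.2 i = Y i := by
    intro z hz
    rw [hA', Finset.mem_filter] at hz
    obtain ⟨h1, h2, h3, h4⟩ := mem_GY.1 (hA hz.1)
    have e0 : z.1 0 * z.2 0 = Y0 := congrArg Prod.fst hz.2
    have e1 : z.1 1 * z.2 1 = Y1 := congrArg Prod.snd hz.2
    have h5 := h3.2
    rw [Fin.sum_univ_three] at h5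
    have h6 : C (γ 2) * (z.1 2 * z.2 2) = -(C (γ 0) * Y0 + C (γ 1) * Y1) := by
      rw [← e0, ← e1]; linear_combination h5
    have h7 : z.1 2 * z.2 2 = Y2 := by
      have : C (γ 2)⁻¹ * C (γ 2) = (1 : K[X]) := by
        rw [← C_mul, inv_mul_cancel₀ (hγ 2), C_1]
      calc z.1 2 * z.2 2 = C (γ 2)⁻¹ * C (γ 2) * (z.1 2 * z.2 2) := by rw [this, one_mul]
        _ = _ := by rw [mul_assoc, h6, hY2]; ring
    intro i; fin_cases i
    · exact e0
    · exact e1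
    · exact h7
  rcases A'.eq_empty_or_nonempty with he | ⟨z0, hz0⟩
  · rw [he]; simp
  have hz0A : z0 ∈ A := (Finset.mem_filter.1 hz0).1
  have hYd : ∀ i, Y i ≠ 0 ∧ (Y i).natDegree ≤ B := by
    intro i
    have := hdeg z0 hz0A i
    rw [hYz z0 hz0 i] at this
    have h1 := natDegree_le_of_mem this.1
    exact ⟨this.2, by omega⟩
  have h1 : A'.card ≤ (Fintype.piFinset fun i => (A'.image fun z => z.1 i)).card := by
    refine Finset.card_le_card_of_injOn (fun z => z.1) ?_ ?_
    · intro z hz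
      rw [Finset.mem_coe, Fintype.mem_piFinset]
      intro i; exact Finset.mem_image_of_mem _ hz
    · intro z hz w hw h
      refine Prod.ext h (funext fun i => ?_)
      have h2 := hYz z hz i
      have h3 := hYz w hw i
      have h4 : z.1 = w.1 := h
      rw [← h4] at h3
      exact mul_left_cancel₀ ((mem_GY.1 (hA (Finset.mem_filter.1 hz).1)).2.1 i) (h2.trans h3.symm)
  refine h1.trans ?_
  rw [Fintype.card_piFinset]
  refine (Finset.prod_le_pow_card _ _ (qK K * 2 ^ B) fun i _ => ?_).trans ?_
  · refine card_dvd_le (hYd i).1 (hYd i).2 _ ?_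
    intro d hd
    obtain ⟨z, hz, rfl⟩ := Finset.mem_image.1 hd
    exact ⟨_, (hYz z hz i).symm⟩
  · simp

end dP5

/-! ### The torsor count -/

namespace dP5
open Polynomial
open scoped Classical

lemma third (i j : Fin 3) (h : i ≠ j) : ∃ l, l ≠ i ∧ l ≠ j ∧ (∀ m, m = i ∨ m = j ∨ m = l) ∧
    ∀ {M : Type} [AddCommMonoid M] (F : Fin 3 → M), ∑ i, F i = F i + F j + F l := by
  have h1 : ∀ i j : Fin 3, i ≠ j → ∃ l, l ≠ i ∧ l ≠ j ∧ (∀ m, m = i ∨ m = j ∨ m = l) ∧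
      (Finset.univ : Finset (Fin 3)) = {i, j, l} := by decide
  obtain ⟨l, h2, h3, h4, h5⟩ := h1 i j h
  refine ⟨l, h2, h3, h4, fun F => ?_⟩
  rw [h5, Finset.sum_insert, Finset.sum_insert, Finset.sum_singleton, add_assoc]
  · simpa using h3.symm
  · simpa using ⟨h, h2.symm⟩

lemma others (l : Fin 3) : ∃ i j, i ≠ j ∧ i ≠ l ∧ j ≠ l ∧ (∀ m, m = i ∨ m = j ∨ m = l) ∧
    ∀ {M : Type} [AddCommMonoid M] (F : Fin 3 → M), ∑ i, F i = F i + F j + F l := by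
  have h1 : ∀ l : Fin 3, ∃ i j, i ≠ j ∧ i ≠ l ∧ j ≠ l ∧ (∀ m, m = i ∨ m = j ∨ m = l) ∧
      (Finset.univ : Finset (Fin 3)) = {i, j, l} := by decide
  obtain ⟨i, j, h, h2, h3, h4, h5⟩ := h1 l
  refine ⟨i, j, h, h2, h3, h4, fun F => ?_⟩
  rw [h5, Finset.sum_insert, Finset.sum_insert, Finset.sum_singleton, add_assoc]
  · simpa using h3
  · simpa using ⟨h, h2⟩

lemma loc_two {F : Type} [Field F] {γ γ' g y y' : Fin 3 → F} (hγ : ∀ i, γ i ≠ 0)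
    (h : locGood γ γ' g y y') {i j : Fin 3} (hij : i ≠ j) : ¬ (g i = 0 ∧ g j = 0) := by
  rintro ⟨hi, hj⟩
  obtain ⟨l, -, -, hm, hs⟩ := third i j hij
  have h1 := h.1
  rw [hs] at h1
  simp only [hi, hj, mul_zero, zero_mul, zero_add] at h1
  rw [mul_assoc] at h1
  obtain ⟨m, hm'⟩ := h.2.2.1
  rcases hm m with rfl | rfl | rfl
  · exact hm' (by rw [hi, zero_mul])
  · exact hm' (by rw [hj, zero_mul])
  · exact hm' ((mul_eq_zero.1 h1).resolve_left (hγ _))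

variable {K : Type} [Field K]

lemma exists_monic_dvd {p : K[X]} (hp : Irreducible p) :
    ∃ c : {p : K[X] // p.Monic ∧ Irreducible p}, Associated p c.1 := by
  have h0 : p.leadingCoeff ≠ 0 := leadingCoeff_ne_zero.2 hp.ne_zero
  have hu : IsUnit (C p.leadingCoeff⁻¹ : K[X]) := isUnit_C.2 (inv_ne_zero h0).isUnit
  have ha : Associated p (p * C p.leadingCoeff⁻¹) := (associated_mul_isUnit_right_iff hu).2 (Associated.refl p)
  exact ⟨⟨p * C p.leadingCoeff⁻¹, monic_mul_leadingCoeff_inv hp.ne_zero, ha.irreducible hp⟩, ha⟩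

/-- Forms without common zero at any closed point have coprime dehomogenisations. -/
lemma cop_of_red {k : Fin 3 → ℕ} {g : Fin 3 → K[X]} (hd : ∀ i, g i ∈ degreeLT K (k i + 1))
    (h0 : ∀ i, g i ≠ 0)
    (h : ∀ c : ClosedPoint K, ∀ i j, i ≠ j → ¬ (red c (k i) (g i) = 0 ∧ red c (k j) (g j) = 0)) :
    Cop k g := by
  refine ⟨hd, fun i j hij => ?_, fun i j hij => ?_⟩
  · refine isCoprime_of_irreducible_dvd (fun h1 => h0 i h1.1) fun z hz h1 h2 => ?_
    obtain ⟨c, hc⟩ := exists_monic_dvd hz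
    exact h (Sum.inl c) i j hij ⟨(red_inl_eq_zero c _ _).2 (hc.dvd_iff_dvd_left.1 h1),
      (red_inl_eq_zero c _ _).2 (hc.dvd_iff_dvd_left.1 h2)⟩
  · have := h (Sum.inr ()) i j hij
    rwa [red_inr_eq_zero, red_inr_eq_zero] at this

lemma cop_tw {γ : Fin 3 → K} (hγ : ∀ i, γ i ≠ 0) {k : Fin 3 → ℕ} {g : Fin 3 → K[X]} (h : Cop k g) :
    Cop k (tw γ g) := by
  have hu : ∀ i, IsUnit (C (γ i) : K[X]) := fun i => isUnit_C.2 (hγ i).isUnit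
  refine ⟨fun i => ?_, fun i j hij => ?_, fun i j hij => ?_⟩
  · change C (γ i) * g i ∈ _
    rw [← smul_eq_C_mul]; exact Submodule.smul_mem _ _ (h.deg i)
  · exact (isCoprime_mul_unit_left_left (hu i) _ _).2 ((isCoprime_mul_unit_left_right (hu j) _ _).2 (h.cop i j hij))
  · simp only [coeff_C_mul, mul_eq_zero, hγ, false_or]
    exact h.inf i j hij

/-- If `G` has a syzygy without common zero on `ℙ¹`, the space of syzygies has the expected dimension: a
multiple of a shorter syzygy by a form of positive degree has a zero. -/
lemma primitive_exact {k : Fin 3 → ℕ} {G : Fin 3 → K[X]} (hG : Cop k G) {a : ℕ} (hk : ∀ i, k i ≤ a)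
    (hs : ∑ i, k i < 2 * (a + 1)) {y : Fin 3 → K[X]} (hy : y ∈ Lam k G (a + 1))
    (hp : ∀ c : ClosedPoint K, ∃ i, red c (a - k i) (y i) ≠ 0) :
    dL k G (a + 1) + ∑ i, k i = 2 * (a + 1) := by
  rcases dichotomy hG (a + 1) with h | ⟨-, h⟩ | ⟨m, w, hw, hw0, h1, h2, h3⟩
  · exact h
  · omega
  exfalso
  obtain ⟨f, hf, rfl⟩ := h3 y hy
  by_cases hu : IsUnit f
  · -- a constant multiple of `w` vanishes at infinity
    obtain ⟨i, hi⟩ := hp (Sum.inr ())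
    apply hi
    rw [red_inr_eq_zero]
    obtain ⟨r, hr, rfl⟩ := isUnit_iff.1 hu
    rw [coeff_C_mul]
    have h4 := mem_degreeLT.1 (hw.1 i)
    rw [coeff_eq_zero_of_degree_lt (lt_of_lt_of_le h4 (by norm_cast; have := hk i; omega)), mul_zero]
  · by_cases hf0 : f = 0
    · obtain ⟨i, hi⟩ := hp (Sum.inr ())
      apply hi; rw [hf0]; simp
    · obtain ⟨p, hp1, hp2⟩ := WfDvdMonoid.exists_irreducible_factor hu hf0
      obtain ⟨c, hc⟩ := exists_monic_dvd hp1
      obtain ⟨i, hi⟩ := hp (Sum.inl c)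
      exact hi ((red_inl_eq_zero c _ _).2 ((hc.dvd_iff_dvd_left.1 hp2).mul_right _))

variable [Fintype K]

/-- Without short syzygies the dimension is the expected one. -/
lemma exact_of_noShort {k : Fin 3 → ℕ} {G : Fin 3 → K[X]} (hG : Cop k G) {N : ℕ} (hN : NoShort k G N)
    {B : ℕ} (h1 : ∑ i, k i ≤ 2 * B) (h2 : ∑ i, k i ≤ N + B) (h3 : ∀ i, k i ≤ B) :
    dL k G B + ∑ i, k i = 2 * B := by
  rcases dichotomy hG B with h | ⟨-, h⟩ | ⟨m, w, hw, hw0, h4, h5, -⟩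
  · exact h
  · omega
  exfalso
  obtain ⟨l, hl⟩ := hN w (Lam_mono k G (by omega) hw)
  obtain ⟨i, j, hij, -, -, hm, hs⟩ := others l
  obtain ⟨f, hf, h6, h7⟩ := syz_zero hG hw hij hs hl
  have hf0 : f ≠ 0 := by
    rintro rfl
    apply hw0
    funext t
    rcases hm t with rfl | rfl | rfl
    · rw [h6]; simp
    · rw [h7]; simp
    · rw [hl]; rfl
  have h8 : 0 < m + 1 - k i - k j := by
    by_contra hc
    rw [show m + 1 - k i - k j = 0 by omega] at hf
    exact hf0 (eq_zero_of_mem_zero hf)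
  have h9 := hs k
  have := h3 l
  omega

/-- The pairs `(y, y')` for which `(g, y, y')` is a point of the universal torsor. -/
def Fib (γ γ' : Fin 3 → K) (k : Fin 3 → ℕ) (a a' : ℕ) (g : Fin 3 → K[X]) :
    Finset ((Fin 3 → K[X]) × (Fin 3 → K[X])) :=
  (LamNZ k (tw γ g) (a + 1) ×ˢ LamNZ k (tw γ' g) (a' + 1)).filter fun z =>
    ∀ c, goodAt γ γ' k a a' g z.1 z.2 c

/-- The number of torsor points `(g, y, y')` of degrees `k i`, `a - k i`, `a' - k i`. -/
def cX (γ γ' : Fin 3 → K) (k : Fin 3 → ℕ) (a a' : ℕ) : ℕ :=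
  ∑ g ∈ (GF K k).filter (fun g => ∀ i, g i ≠ 0), (Fib γ γ' k a a' g).card

lemma Fib_cop {γ γ' : Fin 3 → K} (hγ : ∀ i, γ i ≠ 0) {k : Fin 3 → ℕ} {a a' : ℕ} {g : Fin 3 → K[X]}
    (hg : g ∈ (GF K k).filter (fun g => ∀ i, g i ≠ 0)) (h : (Fib γ γ' k a a' g).Nonempty) :
    Cop k g := by
  rw [Finset.mem_filter, mem_GF] at hg
  obtain ⟨z, hz⟩ := h
  exact cop_of_red hg.1 hg.2 fun c i j hij => loc_two (gF_ne hγ c) ((Finset.mem_filter.1 hz).2 c) hij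

lemma Fib_card_le {γ γ' : Fin 3 → K} (hγ : ∀ i, γ i ≠ 0) (hγ' : ∀ i, γ' i ≠ 0) {k : Fin 3 → ℕ} {a a' : ℕ}
    {g : Fin 3 → K[X]} (hg : g ∈ (GF K k).filter (fun g => ∀ i, g i ≠ 0))
    (hk : ∀ i, k i ≤ a) (hk' : ∀ i, k i ≤ a') (hs : ∑ i, k i ≤ 2 * a) (hs' : ∑ i, k i ≤ 2 * a') :
    (Fib γ γ' k a a' g).card ≤ qK K ^ (2 * (a + 1) - ∑ i, k i) * qK K ^ (2 * (a' + 1) - ∑ i, k i) := by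
  rcases (Fib γ γ' k a a' g).eq_empty_or_nonempty with h | h
  · rw [h]; simp
  have hc := Fib_cop hγ hg h
  obtain ⟨z, hz⟩ := h
  rw [Fib, Finset.mem_filter, Finset.mem_product, mem_LamNZ, mem_LamNZ] at hz
  have h1 := primitive_exact (cop_tw hγ hc) hk (by omega) hz.1.1.1 fun c => by
    obtain ⟨i, hi⟩ := (hz.2 c).2.2.1; exact ⟨i, right_ne_zero_of_mul hi⟩
  have h2 := primitive_exact (cop_tw hγ' hc) hk' (by omega) hz.1.2.1 fun c => by
    obtain ⟨i, hi⟩ := (hz.2 c).2.2.2.1; exact ⟨i, right_ne_zero_of_mul hi⟩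
  calc _ ≤ (LamNZ k (tw γ g) (a + 1) ×ˢ LamNZ k (tw γ' g) (a' + 1)).card := Finset.card_filter_le _ _
    _ ≤ (LamF k (tw γ g) (a + 1) ×ˢ LamF k (tw γ' g) (a' + 1)).card :=
      Finset.card_le_card (Finset.product_subset_product (Finset.filter_subset _ _) (Finset.filter_subset _ _))
    _ = _ := by
      rw [Finset.card_product, card_LamF, card_LamF]
      congr 2 <;> omega

/-- A bound for the torsor count of the expected order of magnitude, valid for all classes satisfying only
the linear inequalities. It covers the classes close to a facet `a = k i` or `a' = k i`. -/
lemma cX_le {γ γ' : Fin 3 → K} (hγ : ∀ i, γ i ≠ 0) (hγ' : ∀ i, γ' i ≠ 0) {k : Fin 3 → ℕ} {a a' : ℕ}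
    (hk : ∀ i, k i ≤ a) (hk' : ∀ i, k i ≤ a') (hs : ∑ i, k i ≤ 2 * a) (hs' : ∑ i, k i ≤ 2 * a') :
    cX γ γ' k a a' ≤ qK K ^ (2 * a + 2 * a' - ∑ i, k i + 7) := by
  rw [cX]
  refine (Finset.sum_le_card_nsmul _ _ _ fun g hg => Fib_card_le hγ hγ' hg hk hk' hs hs').trans ?_
  rw [smul_eq_mul]
  calc _ ≤ (GF K k).card * _ := Nat.mul_le_mul_right _ (Finset.card_filter_le _ _)
    _ = _ := by
      rw [card_GF, ← pow_add, ← pow_add]; congr 1; omega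

/-- The range of classes `(a, a', k)` for which the torsor count is estimated. The parameter `n` is of size
`ε h(α)`; `H` is a fixed bound keeping the class away from the facets `a = k i` and `a' = k i`. -/
structure Par (k : Fin 3 → ℕ) (a a' n H : ℕ) : Prop where
  ka : ∀ i, k i + H ≤ a
  ka' : ∀ i, k i + H ≤ a'
  kn : ∀ i, n ≤ k i
  Hn : H ≤ n
  ha : ∑ i, k i + 32 * n ≤ 2 * a
  ha' : ∑ i, k i + 32 * n ≤ 2 * a'

lemma Par.symm {k : Fin 3 → ℕ} {a a' n H : ℕ} (h : Par k a a' n H) : Par k a' a n H :=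
  ⟨h.ka', h.ka, h.kn, h.Hn, h.ha', h.ha⟩

/-- The level at which short syzygies are excluded for good `g`. It is chosen so that
`NN k a n + (a + 1) = ∑ k i + 2 n` whenever the subtraction is not truncated. -/
def NN (k : Fin 3 → ℕ) (a n : ℕ) : ℕ := ∑ i, k i + 2 * n - (a + 1)

/-- The good triples `g`: pairwise coprime, with no short syzygy for either of the two relations. -/
def GG (γ γ' : Fin 3 → K) (k : Fin 3 → ℕ) (a a' n : ℕ) : Finset (Fin 3 → K[X]) :=
  (GF K k).filter fun g => (∀ i, g i ≠ 0) ∧ Cop k g ∧ NoShort k (tw γ g) (NN k a n) ∧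
    NoShort k (tw γ' g) (NN k a' n)

lemma mem_GG {γ γ' : Fin 3 → K} {k : Fin 3 → ℕ} {a a' n : ℕ} {g : Fin 3 → K[X]} :
    g ∈ GG γ γ' k a a' n ↔ (∀ i, g i ∈ degreeLT K (k i + 1)) ∧ (∀ i, g i ≠ 0) ∧ Cop k g ∧
      NoShort k (tw γ g) (NN k a n) ∧ NoShort k (tw γ' g) (NN k a' n) := by
  rw [GG, Finset.mem_filter, mem_GF]

/-- For good triples the dimension is the expected one for all levels slightly below `a + 1`. -/
lemma dL_good {k : Fin 3 → ℕ} {a a' n H : ℕ} (hP : Par k a a' n H) {G : Fin 3 → K[X]} (hG : Cop k G)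
    (hN : NoShort k G (NN k a n)) {e : ℕ} (he : e ≤ H) :
    dL k G (a + 1 - e) + ∑ i, k i = 2 * (a + 1 - e) := by
  have h1 := hP.ha
  have h2 := hP.Hn
  refine exact_of_noShort hG hN ?_ ?_ fun i => ?_
  · omega
  · rw [NN]; omega
  · have := hP.ka i; omega

/-- For good `g`, the pairs satisfying the local conditions at the points of `P` have exactly the expected
density. -/
lemma good_count {P : Finset (ClosedPoint K)} (hP : Sum.inr () ∈ P) {γ γ' : Fin 3 → K}
    (hγ : ∀ i, γ i ≠ 0) (hγ' : ∀ i, γ' i ≠ 0)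
    {k : Fin 3 → ℕ} {a a' n H : ℕ} (hH : Par k a a' n H) (he : sdeg P ≤ H) {g : Fin 3 → K[X]}
    (hg : g ∈ GG γ γ' k a a' n) :
    ((LamF k (tw γ g) (a + 1) ×ˢ LamF k (tw γ' g) (a' + 1)).filter fun z =>
      ∀ c ∈ P, goodAt γ γ' k a a' g z.1 z.2 c).card * qK K ^ (4 * sdeg P)
    = qK K ^ (2 * (a + 1) - ∑ i, k i) * qK K ^ (2 * (a' + 1) - ∑ i, k i) *
      ∏ c : P, (locSet (gF γ c.1) (gF γ' c.1) (redT c.1 k g)).card := by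
  obtain ⟨h1, h2, h3, h4, h5⟩ := mem_GG.1 hg
  have e1 := dL_good hH (cop_tw hγ h3) h4 he
  have e2 := dL_good hH (cop_tw hγ h3) h4 (Nat.zero_le H)
  have e3 := dL_good hH.symm (cop_tw hγ' h3) h5 he
  have e4 := dL_good hH.symm (cop_tw hγ' h3) h5 (Nat.zero_le H)
  have h6 := hH.ha
  have h7 := hH.ha'
  have h8 := hH.Hn
  rw [Nat.sub_zero] at e2 e4
  rw [lat_count hP hγ hγ' (fun i => by have := hH.ka i; omega) (fun i => by have := hH.ka' i; omega) h1
    ?_ (by omega) (by omega)]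
  · congr 3 <;> omega
  · intro c _
    by_contra hcon
    push Not at hcon
    rcases c with p | u
    · have e0 := (red_inl_eq_zero p _ _).1 (hcon 0)
      have e1 := (red_inl_eq_zero p _ _).1 (hcon 1)
      exact p.2.2.not_isUnit ((h3.cop 0 1 (by decide)).isUnit_of_dvd' e0 e1)
    · exact h3.inf 0 1 (by decide) ⟨(red_inr_eq_zero u _ _).1 (hcon 0), (red_inr_eq_zero u _ _).1 (hcon 1)⟩

lemma loc_le {P : Finset (ClosedPoint K)} {γ γ' : Fin 3 → K}
    (hγ : ∀ i, γ i ≠ 0) (hγ' : ∀ i, γ' i ≠ 0) (k : Fin 3 → ℕ) (g : Fin 3 → K[X]) :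
    ∏ c : P, (locSet (gF γ c.1) (gF γ' c.1) (redT c.1 k g)).card ≤ qK K ^ (4 * sdeg P) := by
  rw [← prod_card_ResF]
  exact Finset.prod_le_prod' fun c _ => locSet_card_le (gF_ne hγ c.1) (gF_ne hγ' c.1) _

lemma loc_ne_zero {P : Finset (ClosedPoint K)} {γ γ' : Fin 3 → K}
    (hγ : ∀ i, γ i ≠ 0) {k : Fin 3 → ℕ} {g : Fin 3 → K[X]}
    (h : ∏ c : P, (locSet (gF γ c.1) (gF γ' c.1) (redT c.1 k g)).card ≠ 0) :
    ∀ c ∈ P, ∀ i j, i ≠ j → ¬ (red c (k i) (g i) = 0 ∧ red c (k j) (g j) = 0) := by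
  intro c hc i j hij
  have h1 := Finset.prod_ne_zero_iff.1 h ⟨c, hc⟩ (Finset.mem_univ _)
  obtain ⟨z, hz⟩ := Finset.card_ne_zero.1 h1
  exact loc_two (gF_ne hγ c) (Finset.mem_filter.1 hz).2 hij
end dP5

/-! ### Exceptional triples and divisibility by large primes -/

namespace dP5
open Polynomial
open scoped Classical

lemma conv_bound {x Q s t t0 N B n : ℕ} (hQ : 0 < Q)
    (h : x * Q ^ (s + t0) ≤ Q ^ (2 * B) ∨ x * Q ^ N ≤ Q ^ B) (ht0 : t ≤ t0) (ht : t ≤ 2 * n)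
    (hN : s + 2 * n ≤ N + B) (hs : s ≤ 2 * B) : x * Q ^ t ≤ Q ^ (2 * B - s) := by
  have h1 : x * Q ^ (s + t) ≤ Q ^ (2 * B) := by
    rcases h with h | h
    · exact (Nat.mul_le_mul_left _ (Nat.pow_le_pow_right hQ (by omega))).trans h
    · calc x * Q ^ (s + t) ≤ x * Q ^ (N + B) := Nat.mul_le_mul_left _ (Nat.pow_le_pow_right hQ (by omega))
        _ = x * Q ^ N * Q ^ B := by rw [pow_add, mul_assoc]
        _ ≤ Q ^ B * Q ^ B := Nat.mul_le_mul_right _ h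
        _ = _ := by rw [← pow_add]; congr 1; omega
  have h2 : x * Q ^ t * Q ^ s ≤ Q ^ (2 * B - s) * Q ^ s := by
    rw [← pow_add, Nat.sub_add_cancel hs, mul_assoc, ← pow_add, add_comm t]; exact h1
  exact Nat.le_of_mul_le_mul_right h2 (pow_pos hQ _)

variable {K : Type} [Field K] [Fintype K]

lemma sub_pi_le {k : Fin 3 → ℕ} (S : Finset (Fin 3 → K[X])) (t : Fin 3 → ℕ) (A : Fin 3 → Finset K[X])
    (hS : ∀ g ∈ S, ∀ i, g i ∈ A i) (hA : ∀ i, (A i).card * qK K ^ t i ≤ qK K ^ (k i + 1)) :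
    S.card * qK K ^ (∑ i, t i) ≤ qK K ^ (∑ i, k i + 3) := by
  have h1 : S.card ≤ (Fintype.piFinset A).card :=
    Finset.card_le_card fun g hg => Fintype.mem_piFinset.2 (hS g hg)
  calc _ ≤ (Fintype.piFinset A).card * qK K ^ (∑ i, t i) := Nat.mul_le_mul_right _ h1
    _ = ∏ i, ((A i).card * qK K ^ t i) := by
      rw [Fintype.card_piFinset, Finset.prod_mul_distrib, Finset.prod_pow_eq_pow_sum]
    _ ≤ ∏ i, qK K ^ (k i + 1) := Finset.prod_le_prod' fun i _ => hA i
    _ = _ := by rw [Finset.prod_pow_eq_pow_sum, Finset.sum_add_distrib]; simp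

lemma union3 {α : Type*} (A : Finset α) (Q : Fin 3 → α → Prop) (hA : ∀ x ∈ A, ∃ i, Q i x) {u T : ℝ}
    (hu : 0 ≤ u) (h : ∀ i, ∀ F ⊆ A, (∀ x ∈ F, Q i x) → (F.card : ℝ) * u ≤ T) : (A.card : ℝ) * u ≤ 3 * T := by
  have h1 : A.card ≤ ∑ i : Fin 3, (A.filter fun x => Q i x).card := by
    refine (Finset.card_le_card ?_).trans Finset.card_biUnion_le
    intro x hx
    obtain ⟨i, hi⟩ := hA x hx
    exact Finset.mem_biUnion.2 ⟨i, Finset.mem_univ _, Finset.mem_filter.2 ⟨hx, hi⟩⟩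
  have h2 : (A.card : ℝ) ≤ ∑ i : Fin 3, ((A.filter fun x => Q i x).card : ℝ) := by exact_mod_cast h1
  calc _ ≤ (∑ i : Fin 3, ((A.filter fun x => Q i x).card : ℝ)) * u := by gcongr
    _ = ∑ i : Fin 3, ((A.filter fun x => Q i x).card : ℝ) * u := Finset.sum_mul _ _ _
    _ ≤ ∑ i : Fin 3, T := Finset.sum_le_sum fun i _ =>
        h i _ (Finset.filter_subset _ _) fun x hx => (Finset.mem_filter.1 hx).2
    _ = _ := by simp

lemma fiber_bound {α β : Type*} (A : Finset α) (f : α → β) (S : Finset β) (hf : ∀ x ∈ A, f x ∈ S)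
    {u T : ℕ} (h : ∀ b ∈ S, ∀ F ⊆ A, (∀ x ∈ F, f x = b) → F.card * u ≤ T) : A.card * u ≤ S.card * T := by
  rw [Finset.card_eq_sum_card_fiberwise (f := f) (t := S) hf, Finset.sum_mul]
  exact (Finset.sum_le_card_nsmul _ _ _ fun b hb =>
    h b hb _ (Finset.filter_subset _ _) fun x hx => (Finset.mem_filter.1 hx).2).trans (by rw [smul_eq_mul])

lemma prime_union' {α : Type*} (A : Finset α) (Q : K[X] → α → Prop) (D m : ℕ) (T : ℝ) (hT : 0 ≤ T)
    (h : ∀ x ∈ A, ∃ p : K[X], p.Monic ∧ Irreducible p ∧ D < p.natDegree ∧ p.natDegree ≤ m ∧ Q p x)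
    (hb : ∀ p : K[X], p.Monic → Irreducible p → D < p.natDegree → p.natDegree ≤ m →
      ∀ F ⊆ A, (∀ x ∈ F, Q p x) → (F.card : ℝ) * (qK K : ℝ) ^ (2 * p.natDegree) ≤ T) :
    (A.card : ℝ) * (qK K : ℝ) ^ D ≤ T :=
  prime_union A Q D m T hT h fun p h1 h2 h3 h4 =>
    hb p h1 h2 h3 h4 _ (Finset.filter_subset _ _) fun _ hx => (Finset.mem_filter.1 hx).2

/-! #### Exceptional triples `g` -/

/-- Few triples `g` have a vanishing entry. -/
lemma bad_zero {k : Fin 3 → ℕ} {n : ℕ} (hk : ∀ i, n ≤ k i) (S : Finset (Fin 3 → K[X])) (hS : S ⊆ GF K k)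
    (h0 : ∀ g ∈ S, ∃ i, g i = 0) :
    (S.card : ℝ) * (qK K : ℝ) ^ n ≤ 3 * (qK K : ℝ) ^ (∑ i, k i + 3) := by
  have hq := qR_pos (K := K)
  refine union3 _ (fun i g => g i = 0) h0 (by positivity) fun i F hFS hF => ?_
  have h := sub_pi_le (k := k) F
    (Pi.single i n) (Function.update (fun i => PF K (k i + 1)) i {0}) ?_ ?_
  · rw [Finset.sum_pi_single' i n Finset.univ, if_pos (Finset.mem_univ _)] at h
    exact_mod_cast h
  · intro g hg j
    by_cases hj : j = i
    · subst hj; simp [hF g hg]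
    · rw [Function.update_of_ne hj, mem_PF]; exact mem_GF.1 (hS (hFS hg)) j
  · intro j
    by_cases hj : j = i
    · subst hj
      simp only [Function.update_self, Finset.card_singleton, one_mul, Pi.single_eq_same]
      exact Nat.pow_le_pow_right qK_pos (by have := hk j; omega)
    · rw [Function.update_of_ne hj, Pi.single_eq_of_ne hj, card_PF, pow_zero, mul_one]

/-- Few triples `g` have two entries with a common prime factor of degree `> D`. -/
lemma bad_gcd {k : Fin 3 → ℕ} (D : ℕ) (S : Finset (Fin 3 → K[X])) (hS : S ⊆ GF K k)
    (h0 : ∀ g ∈ S, ∀ i, g i ≠ 0)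
    (hD : ∀ g ∈ S, ∃ p : K[X], p.Monic ∧ Irreducible p ∧ D < p.natDegree ∧ ∃ i j, i ≠ j ∧ p ∣ g i ∧ p ∣ g j) :
    (S.card : ℝ) * (qK K : ℝ) ^ D ≤ 3 * (qK K : ℝ) ^ (∑ i, k i + 3) := by
  have hq := qR_pos (K := K)
  refine union3 _ (fun l g => ∃ p : K[X], p.Monic ∧ Irreducible p ∧ D < p.natDegree ∧ ∀ i, i ≠ l → p ∣ g i)
    ?_ (by positivity) fun l F hFS hF => ?_
  · intro g hg
    obtain ⟨p, h1, h2, h3, i, j, hij, h4, h5⟩ := hD g hg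
    obtain ⟨l, hl1, hl2, hm, -⟩ := third i j hij
    refine ⟨l, p, h1, h2, h3, fun m hml => ?_⟩
    rcases hm m with rfl | rfl | rfl
    · exact h4
    · exact h5
    · exact absurd rfl hml
  · refine prime_union' _ (fun p g => ∀ i, i ≠ l → p ∣ g i) D (∑ i, k i) _ (by positivity) ?_ ?_
    · intro g hg
      obtain ⟨p, h1, h2, h3, h4⟩ := hF g hg
      obtain ⟨i, j, hij, hil, hjl, hm, hs⟩ := others l
      refine ⟨p, h1, h2, h3, ?_, h4⟩
      have h5 := natDegree_le_of_dvd (h4 i hil) (h0 g (hFS hg) i)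
      have h6 := natDegree_le_of_mem (mem_GF.1 (hS (hFS hg)) i)
      rw [hs]; omega
    · intro p h1 h2 h3 h4 E hEF hE
      obtain ⟨i, j, hij, hil, hjl, hm, hs⟩ := others l
      have h := sub_pi_le (k := k) E
        (fun i => if i = l then 0 else p.natDegree)
        (fun i => if i = l then PF K (k i + 1) else (PF K (k i + 1)).filter fun f => f ≠ 0 ∧ p ∣ f) ?_ ?_
      · rw [hs, if_neg hil, if_neg hjl, if_pos rfl, add_zero, ← two_mul] at h
        exact_mod_cast h
      · intro g hg m
        have h5 := mem_GF.1 (hS (hFS (hEF hg))) m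
        split_ifs with hml
        · exact mem_PF.2 h5
        · exact Finset.mem_filter.2 ⟨mem_PF.2 h5, h0 g (hFS (hEF hg)) m, hE g hg m hml⟩
      · intro m
        split_ifs with hml
        · rw [card_PF, pow_zero, mul_one]
        · refine card_mult_le h1.ne_zero _ fun f hf => ?_
          rw [Finset.mem_filter, mem_PF] at hf; exact hf

/-- Few triples `g` have a short syzygy: the products `g i * w i` have small degree, and the divisor bound
recovers `g`. -/
lemma bad_short {γ : Fin 3 → K} (hγ : ∀ i, γ i ≠ 0) {k : Fin 3 → ℕ} {a a' n H : ℕ} (hP : Par k a a' n H)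
    (S : Finset (Fin 3 → K[X])) (hS : S ⊆ GF K k)
    (h0 : ∀ g ∈ S, (∀ i, g i ≠ 0) ∧ ¬ NoShort k (tw γ g) (NN k a n)) :
    (S.card : ℝ) * (qK K : ℝ) ^ n ≤ (qK K : ℝ) ^ (∑ i, k i + 3) * 8 ^ (a + 1) := by
  obtain ⟨N, hN⟩ : ∃ N, N = NN k a n := ⟨_, rfl⟩
  rw [← hN] at h0
  have h1 : S.card ≤ (GY γ k N).card := by
    refine (Finset.card_le_card (t := (GY γ k N).image Prod.fst) ?_).trans Finset.card_image_le
    intro g hg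
    have h1 := mem_GF.1 (hS hg)
    obtain ⟨h2, h3⟩ := h0 g hg
    rw [NoShort] at h3
    push Not at h3
    obtain ⟨w, h3, h4⟩ := h3
    exact Finset.mem_image.2 ⟨(g, w), mem_GY.2 ⟨h1, h2, h3, h4⟩, rfl⟩
  have h2 := card_GY_le hγ (GY γ k N) subset_rfl (PF K N ×ˢ PF K N) (by
    intro z hz
    obtain ⟨h1, h2, h3, h4⟩ := mem_GY.1 hz
    have : ∀ i, z.1 i * z.2 i ∈ degreeLT K N := fun i => by
      have h5 := mul_mem_degreeLT (h1 i) (h3.1 i)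
      rcases mem_degreeLT_iff.1 (h3.1 i) with h | h
      · exact absurd h (h4 i)
      · rwa [show k i + (N - k i) = N by omega] at h5
    exact Finset.mem_product.2 ⟨mem_PF.2 (this 0), mem_PF.2 (this 1)⟩)
  have h3 := h1.trans h2
  rw [Finset.card_product, card_PF, mul_pow, ← pow_mul, mul_comm N 3, pow_mul] at h3
  -- the constant 32 in the definition of the cone leaves this much room
  have h5 : 2 * N + n ≤ ∑ i, k i := by
    have := hP.ha
    have := hP.kn 0
    have h6 : k 0 ≤ ∑ i, k i := Finset.single_le_sum (f := k) (fun _ _ => Nat.zero_le _) (Finset.mem_univ _)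
    rw [hN, NN]; omega
  have h6 : N ≤ a + 1 := by have := hP.ha; rw [hN, NN]; omega
  have h7 : S.card * qK K ^ n ≤ qK K ^ (∑ i, k i + 3) * 8 ^ (a + 1) := by
    calc _ ≤ qK K ^ N * qK K ^ N * (qK K ^ 3 * (2 ^ 3) ^ N) * qK K ^ n := Nat.mul_le_mul_right _ h3
      _ = qK K ^ (2 * N + n + 3) * 8 ^ N := by norm_num; ring
      _ ≤ _ := Nat.mul_le_mul (Nat.pow_le_pow_right qK_pos (by omega)) (Nat.pow_le_pow_right (by norm_num) h6)
  exact_mod_cast h7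

/-! #### Syzygies of good triples divisible by a large prime -/

/-- `card_T1` in the range of parameters considered, for primes of degree at most `n`. -/
lemma T1' {k : Fin 3 → ℕ} {a a' n H : ℕ} (hP : Par k a a' n H)
    {G : Fin 3 → K[X]} (hG : Cop k G) (hN : NoShort k G (NN k a n)) {p : K[X]} (hp : p ≠ 0)
    (hpn : p.natDegree ≤ n) (F : Finset (Fin 3 → K[X])) (hF : F ⊆ LamNZ k G (a + 1))
    (hFp : ∀ y ∈ F, ∀ i, p ∣ y i) :
    F.card * qK K ^ (2 * p.natDegree) ≤ qK K ^ (2 * (a + 1) - ∑ i, k i) := by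
  have := hP.ha
  refine le_trans (Nat.mul_le_mul_right _ (Finset.card_le_card
    (t := (LamNZ k G (a + 1)).filter fun y => ∀ i, p ∣ y i) fun y hy =>
      Finset.mem_filter.2 ⟨hF hy, hFp y hy⟩)) ?_
  exact conv_bound (n := n) qK_pos (card_T1 hG hN (a + 1) hp) le_rfl (by omega) (by rw [NN]; omega) (by omega)

/-- `card_T2` in the range of parameters considered, for primes of degree at most `n`. -/
lemma T2' {k : Fin 3 → ℕ} {a a' n H : ℕ} (hP : Par k a a' n H)
    {G : Fin 3 → K[X]} (hG : Cop k G) (hN : NoShort k G (NN k a n)) {p : K[X]} (hp : p ≠ 0)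
    (hpn : p.natDegree ≤ n) (i₀ : Fin 3) (hpG : p ∣ G i₀) (hG0 : G i₀ ≠ 0)
    (F : Finset (Fin 3 → K[X])) (hF : F ⊆ LamNZ k G (a + 1)) (hFp : ∀ y ∈ F, ∀ i, i ≠ i₀ → p ∣ y i) :
    F.card * qK K ^ p.natDegree ≤ qK K ^ (2 * (a + 1) - ∑ i, k i) := by
  have := hP.ha
  refine le_trans (Nat.mul_le_mul_right _ (Finset.card_le_card
    (t := (LamNZ k G (a + 1)).filter fun y => ∀ i, i ≠ i₀ → p ∣ y i) fun y hy =>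
      Finset.mem_filter.2 ⟨hF hy, hFp y hy⟩)) ?_
  exact conv_bound (n := n) qK_pos (card_T2 hG hN (a + 1) hp i₀ hpG hG0) le_rfl (by omega) (by rw [NN]; omega)
    (by omega)

/-- `card_T3` in the range of parameters considered. The saving is `q ^ t` with `t ≤ n`, so primes of large
degree are allowed. -/
lemma T3' {k : Fin 3 → ℕ} {a a' n H : ℕ} (hP : Par k a a' n H)
    {G : Fin 3 → K[X]} (hG : Cop k G) (hN : NoShort k G (NN k a n)) {p : K[X]} (hp : p ≠ 0)
    (i₀ : Fin 3) (hpG : ∀ l, l ≠ i₀ → IsCoprime p (G l)) {t : ℕ} (ht : t ≤ p.natDegree) (htn : t ≤ n)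
    (F : Finset (Fin 3 → K[X])) (hF : F ⊆ LamNZ k G (a + 1)) (hFp : ∀ y ∈ F, p ∣ y i₀) :
    F.card * qK K ^ t ≤ qK K ^ (2 * (a + 1) - ∑ i, k i) := by
  have := hP.ha
  refine le_trans (Nat.mul_le_mul_right _ (Finset.card_le_card
    (t := (LamNZ k G (a + 1)).filter fun y => p ∣ y i₀) fun y hy =>
      Finset.mem_filter.2 ⟨hF hy, hFp y hy⟩)) ?_
  exact conv_bound (n := n) qK_pos (card_T3 hG hN (a + 1) hp i₀ hpG) ht (by omega) (by rw [NN]; omega)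
    (by omega)

/-- Few syzygies have a vanishing entry, since these are multiples of Koszul syzygies. -/
lemma T0' {k : Fin 3 → ℕ} {a a' n H : ℕ} (hP : Par k a a' n H) {G : Fin 3 → K[X]} (hG : Cop k G)
    (S : Finset (Fin 3 → K[X])) (hS : S ⊆ LamF k G (a + 1)) (h0 : ∀ y ∈ S, ∃ i, y i = 0) :
    (S.card : ℝ) * (qK K : ℝ) ^ H ≤ 3 * (qK K : ℝ) ^ (2 * (a + 1) - ∑ i, k i) := by
  have hq := qR_pos (K := K)
  refine union3 _ (fun i g => g i = 0) h0 (by positivity) fun l F hFS hF => ?_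
  obtain ⟨i, j, hij, hil, hjl, hm, hs⟩ := others l
  have h1 : F.card ≤ (PF K (a + 1 - k i - k j)).card := by
    refine (Finset.card_le_card (t := (PF K (a + 1 - k i - k j)).image fun f => fun m =>
      if m = i then G j * f else if m = j then -(G i * f) else 0) ?_).trans Finset.card_image_le
    intro y hy
    have hy1 := mem_LamF.1 (hS (hFS hy))
    obtain ⟨f, hf, h2, h3⟩ := syz_zero hG hy1 hij hs (hF y hy)
    refine Finset.mem_image.2 ⟨f, mem_PF.2 hf, funext fun m => ?_⟩
    rcases hm m with rfl | rfl | rfl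
    · simp [h2]
    · simp [h3, hij.symm]
    · simp [hF y hy, hil.symm, hjl.symm]
  rw [card_PF] at h1
  have h2 : F.card * qK K ^ H ≤ qK K ^ (2 * (a + 1) - ∑ i, k i) := by
    calc _ ≤ qK K ^ (a + 1 - k i - k j) * qK K ^ H := Nat.mul_le_mul_right _ h1
      _ = qK K ^ (a + 1 - k i - k j + H) := by rw [pow_add]
      _ ≤ _ := Nat.pow_le_pow_right qK_pos (by
        have := hP.ha; have := hP.ka l; have := hP.Hn; have := hs k; omega)
  exact_mod_cast h2

/-- Few pairs `(g, y)` over good `g` have a prime of degree `> D` dividing all the products `g i * y i`.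
Primes of degree at most `n` are treated with the lattice bounds, those of larger degree by counting
products and applying the divisor bound. -/
lemma tailA {γ : Fin 3 → K} (hγ : ∀ i, γ i ≠ 0) {k : Fin 3 → ℕ} {a a' n H : ℕ} (hP : Par k a a' n H)
    (D : ℕ) (A : Finset ((Fin 3 → K[X]) × (Fin 3 → K[X])))
    (hA : A ⊆ GY γ k (a + 1))
    (hcop : ∀ z ∈ A, Cop k z.1 ∧ NoShort k (tw γ z.1) (NN k a n))
    (hD : ∀ z ∈ A, ∃ p : K[X], p.Monic ∧ Irreducible p ∧ D < p.natDegree ∧ ∀ i, p ∣ z.1 i * z.2 i) :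
    (A.card : ℝ) ≤ (qK K : ℝ) ^ (∑ i, k i + 3) * (qK K : ℝ) ^ (2 * (a + 1) - ∑ i, k i) *
      (4 / (qK K : ℝ) ^ D + 8 ^ (a + 1) / (qK K : ℝ) ^ n) := by
  have hq := qR_pos (K := K)
  set A1 := A.filter fun z => ∃ p : K[X], p.Monic ∧ Irreducible p ∧ D < p.natDegree ∧ p.natDegree ≤ n ∧
    ∀ i, p ∣ z.2 i with hA1
  set A2 := A.filter fun z => ∃ p : K[X], p.Monic ∧ Irreducible p ∧ D < p.natDegree ∧ p.natDegree ≤ n ∧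
    ∃ i₀, p ∣ z.1 i₀ ∧ ∀ i, i ≠ i₀ → p ∣ z.2 i with hA2
  set A3 := A.filter fun z => ∃ p : K[X], p.Monic ∧ Irreducible p ∧ n < p.natDegree ∧
    ∀ i, p ∣ z.1 i * z.2 i with hA3
  have hcov : A ⊆ A1 ∪ (A2 ∪ A3) := by
    intro z hz
    obtain ⟨p, h1, h2, h3, h4⟩ := hD z hz
    simp only [Finset.mem_union, hA1, hA2, hA3, Finset.mem_filter]
    by_cases hn : p.natDegree ≤ n
    · by_cases hx : ∃ i₀, p ∣ z.1 i₀
      · obtain ⟨i₀, hi₀⟩ := hx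
        right; left
        refine ⟨hz, p, h1, h2, h3, hn, i₀, hi₀, fun i hi => ?_⟩
        refine (h2.prime.dvd_or_dvd (h4 i)).resolve_left fun h5 => ?_
        exact h2.not_isUnit (((hcop z hz).1.cop i i₀ hi).isUnit_of_dvd' h5 hi₀)
      · left
        push Not at hx
        exact ⟨hz, p, h1, h2, h3, hn, fun i => (h2.prime.dvd_or_dvd (h4 i)).resolve_left (hx i)⟩
    · right; right
      exact ⟨hz, p, h1, h2, by omega, h4⟩
  -- primes of degree at most `n` dividing all `y i`
  have b1 : (A1.card : ℝ) * (qK K : ℝ) ^ D ≤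
      (qK K : ℝ) ^ (∑ i, k i + 3) * (qK K : ℝ) ^ (2 * (a + 1) - ∑ i, k i) := by
    refine prime_union' A1 (fun p z => ∀ i, p ∣ z.2 i) D n _ (by positivity)
      (fun z hz => (Finset.mem_filter.1 hz).2) ?_
    intro p h1 h2 h3 h4 E hE hEp
    have hEA : ∀ z ∈ E, z ∈ A := fun z hz => (Finset.mem_filter.1 (hE hz)).1
    have h := fiber_bound E Prod.fst (GF K k) (fun z hz => mem_GF.2 (mem_GY.1 (hA (hEA z hz))).1)
      (u := qK K ^ (2 * p.natDegree)) (T := qK K ^ (2 * (a + 1) - ∑ i, k i)) ?_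
    · rw [card_GF] at h
      exact_mod_cast h
    · intro g _ F hFE hFg
      rcases F.eq_empty_or_nonempty with he | ⟨z0, hz0⟩
      · rw [he]; simp
      · have hc := hcop z0 (hEA _ (hFE hz0))
        rw [hFg z0 hz0] at hc
        have hinj : Set.InjOn Prod.snd (F : Set ((Fin 3 → K[X]) × (Fin 3 → K[X]))) := fun z hz z' hz' h5 =>
          Prod.ext ((hFg z hz).trans (hFg z' hz').symm) h5
        rw [← Finset.card_image_of_injOn hinj]
        refine T1' hP (cop_tw hγ hc.1) hc.2 h1.ne_zero h4 _ ?_ ?_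
        · intro y hy
          obtain ⟨z, hz, rfl⟩ := Finset.mem_image.1 hy
          have := mem_GY.1 (hA (hEA z (hFE hz)))
          rw [hFg z hz] at this
          exact mem_LamNZ.2 this.2.2
        · intro y hy
          obtain ⟨z, hz, rfl⟩ := Finset.mem_image.1 hy
          exact hEp z (hFE hz)
  -- primes of degree at most `n` dividing one `g i₀` and the other two `y i`
  have b2 : (A2.card : ℝ) * (qK K : ℝ) ^ D ≤
      3 * ((qK K : ℝ) ^ (∑ i, k i + 3) * (qK K : ℝ) ^ (2 * (a + 1) - ∑ i, k i)) := by
    refine union3 _ (fun i₀ z => ∃ p : K[X], p.Monic ∧ Irreducible p ∧ D < p.natDegree ∧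
      p.natDegree ≤ n ∧ p ∣ z.1 i₀ ∧ ∀ i, i ≠ i₀ → p ∣ z.2 i) ?_ (by positivity) fun i₀ A2i hA2i hA2p => ?_
    · intro z hz
      obtain ⟨p, h1, h2, h3, h4, i₀, h5⟩ := (Finset.mem_filter.1 hz).2
      exact ⟨i₀, p, h1, h2, h3, h4, h5⟩
    refine prime_union' A2i (fun p z => p ∣ z.1 i₀ ∧ ∀ i, i ≠ i₀ → p ∣ z.2 i) D n _ (by positivity)
      hA2p ?_
    intro p h1 h2 h3 h4 E hE hEp
    have hEA : ∀ z ∈ E, z ∈ A := fun z hz => (Finset.mem_filter.1 (hA2i (hE hz))).1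
    set S := (GF K k).filter fun g => g i₀ ≠ 0 ∧ p ∣ g i₀ with hS
    have hSc : S.card * qK K ^ p.natDegree ≤ qK K ^ (∑ i, k i + 3) := by
      have h := sub_pi_le (k := k) S (Pi.single i₀ p.natDegree)
        (Function.update (fun i => PF K (k i + 1)) i₀ ((PF K (k i₀ + 1)).filter fun f => f ≠ 0 ∧ p ∣ f)) ?_ ?_
      · rwa [Finset.sum_pi_single' i₀ _ Finset.univ, if_pos (Finset.mem_univ _)] at h
      · intro g hg j
        rw [hS, Finset.mem_filter, mem_GF] at hg
        by_cases hj : j = i₀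
        · subst hj
          rw [Function.update_self, Finset.mem_filter, mem_PF]
          exact ⟨hg.1 j, hg.2⟩
        · rw [Function.update_of_ne hj, mem_PF]; exact hg.1 j
      · intro j
        by_cases hj : j = i₀
        · subst hj
          rw [Function.update_self, Pi.single_eq_same]
          refine card_mult_le h1.ne_zero _ fun f hf => ?_
          rw [Finset.mem_filter, mem_PF] at hf; exact hf
        · rw [Function.update_of_ne hj, Pi.single_eq_of_ne hj, card_PF, pow_zero, mul_one]
    have h := fiber_bound E Prod.fst S (by
      intro z hz
      have := mem_GY.1 (hA (hEA z hz))
      exact Finset.mem_filter.2 ⟨mem_GF.2 this.1, this.2.1 i₀, (hEp z hz).1⟩)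
      (u := qK K ^ p.natDegree) (T := qK K ^ (2 * (a + 1) - ∑ i, k i)) ?_
    · have h5 : E.card * qK K ^ (2 * p.natDegree) ≤
          qK K ^ (∑ i, k i + 3) * qK K ^ (2 * (a + 1) - ∑ i, k i) := by
        calc _ = E.card * qK K ^ p.natDegree * qK K ^ p.natDegree := by rw [two_mul, pow_add, mul_assoc]
          _ ≤ S.card * qK K ^ (2 * (a + 1) - ∑ i, k i) * qK K ^ p.natDegree := Nat.mul_le_mul_right _ h
          _ = S.card * qK K ^ p.natDegree * qK K ^ (2 * (a + 1) - ∑ i, k i) := by ring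
          _ ≤ _ := Nat.mul_le_mul_right _ hSc
      exact_mod_cast h5
    · intro g hg F hFE hFg
      rcases F.eq_empty_or_nonempty with he | ⟨z0, hz0⟩
      · rw [he]; simp
      · have hc := hcop z0 (hEA _ (hFE hz0))
        rw [hFg z0 hz0] at hc
        have hg' := (Finset.mem_filter.1 hg).2
        have hinj : Set.InjOn Prod.snd (F : Set ((Fin 3 → K[X]) × (Fin 3 → K[X]))) := fun z hz z' hz' h5 =>
          Prod.ext ((hFg z hz).trans (hFg z' hz').symm) h5
        rw [← Finset.card_image_of_injOn hinj]
        refine T2' hP (cop_tw hγ hc.1) hc.2 h1.ne_zero h4 i₀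
          (hg'.2.mul_left _) (mul_ne_zero (C_ne_zero.2 (hγ i₀)) hg'.1) _ ?_ ?_
        · intro y hy
          obtain ⟨z, hz, rfl⟩ := Finset.mem_image.1 hy
          have := mem_GY.1 (hA (hEA z (hFE hz)))
          rw [hFg z hz] at this
          exact mem_LamNZ.2 this.2.2
        · intro y hy
          obtain ⟨z, hz, rfl⟩ := Finset.mem_image.1 hy
          exact (hEp z (hFE hz)).2
  have b3 : (A3.card : ℝ) * (qK K : ℝ) ^ n ≤
      (qK K : ℝ) ^ (∑ i, k i + 3) * (qK K : ℝ) ^ (2 * (a + 1) - ∑ i, k i) * 8 ^ (a + 1) := by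
    set S := A3.image fun z => (z.1 0 * z.2 0, z.1 1 * z.2 1) with hS
    have h1 := card_GY_le hγ A3 ((Finset.filter_subset _ _).trans hA) S
      (fun z hz => Finset.mem_image_of_mem _ hz)
    have h2 := card_pairs (a + 1) n S (by
      intro x hx
      obtain ⟨z, hz, rfl⟩ := Finset.mem_image.1 hx
      obtain ⟨h1, h2, h3, h4⟩ := mem_GY.1 (hA (Finset.mem_filter.1 hz).1)
      have : ∀ i, z.1 i * z.2 i ∈ degreeLT K (a + 1) := fun i => by
        have h5 := mul_mem_degreeLT (h1 i) (h3.1 i)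
        rcases mem_degreeLT_iff.1 (h3.1 i) with h | h
        · exact absurd h (h4 i)
        · rwa [show k i + (a + 1 - k i) = a + 1 by omega] at h5
      exact ⟨this 0, this 1, mul_ne_zero (h2 0) (h4 0), mul_ne_zero (h2 1) (h4 1)⟩) (by
      intro x hx
      obtain ⟨z, hz, rfl⟩ := Finset.mem_image.1 hx
      obtain ⟨p, h1, h2, h3, h4⟩ := (Finset.mem_filter.1 hz).2
      exact ⟨p, h1, h2, h3, h4 0, h4 1⟩)
    have h3 : (A3.card : ℝ) ≤ S.card * ((qK K : ℝ) * 2 ^ (a + 1)) ^ 3 := by exact_mod_cast h1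
    calc (A3.card : ℝ) * (qK K : ℝ) ^ n ≤ S.card * ((qK K : ℝ) * 2 ^ (a + 1)) ^ 3 * (qK K : ℝ) ^ n := by gcongr
      _ = (S.card * (qK K : ℝ) ^ n) * ((qK K : ℝ) ^ 3 * 8 ^ (a + 1)) := by
        rw [mul_pow, ← pow_mul, mul_comm (a + 1) 3, pow_mul]; norm_num; ring
      _ ≤ (qK K : ℝ) ^ (2 * (a + 1)) * ((qK K : ℝ) ^ 3 * 8 ^ (a + 1)) := by gcongr
      _ = _ := by
        rw [← mul_assoc, ← pow_add, ← pow_add]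
        congr 2
        have := hP.ha; omega
  have h1 : (A.card : ℝ) ≤ A1.card + (A2.card + A3.card) := by
    exact_mod_cast (Finset.card_le_card hcov).trans ((Finset.card_union_le _ _).trans
      (Nat.add_le_add_left (Finset.card_union_le _ _) _))
  rw [← le_div_iff₀ (by positivity)] at b1 b2 b3
  refine h1.trans ((add_le_add b1 (add_le_add b2 b3)).trans (le_of_eq ?_))
  ring
end dP5

/-! ### Common large primes of a pair of syzygies -/

namespace dP5
open Polynomial
open scoped Classical
variable {K : Type} [Field K] [Fintype K]

lemma cop_C_mul {γ : Fin 3 → K} (hγ : ∀ i, γ i ≠ 0) {g : Fin 3 → K[X]} {p : K[X]} {l : Fin 3}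
    (h : IsCoprime p (g l)) : IsCoprime p (tw γ g l) := by
  rw [tw]
  exact (isCoprime_mul_unit_left_right (isUnit_C.2 (hγ l).isUnit) _ _).2 h

lemma card_LamNZ_good {k : Fin 3 → ℕ} {a a' n H : ℕ} (hP : Par k a a' n H)
    {G : Fin 3 → K[X]} (hG : Cop k G) (hN : NoShort k G (NN k a n)) :
    (LamNZ k G (a + 1)).card ≤ qK K ^ (2 * (a + 1) - ∑ i, k i) := by
  have h := dL_good hP hG hN (Nat.zero_le H)
  refine (Finset.card_filter_le _ _).trans ?_
  rw [card_LamF]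
  exact Nat.pow_le_pow_right qK_pos (by simp at h; omega)

/-- For good `g`, few pairs `(y, y')` have a prime of degree `> D` dividing `y i` and `y' i` for the same
`i`. For primes of degree larger than `n` the prime is first chosen among the divisors of `y' i`. -/
lemma tailB {γ γ' : Fin 3 → K} (hγ : ∀ i, γ i ≠ 0) (hγ' : ∀ i, γ' i ≠ 0) {k : Fin 3 → ℕ} {a a' n H : ℕ}
    (hP : Par k a a' n H) {g : Fin 3 → K[X]} (hg : g ∈ GG γ γ' k a a' n)
    (D : ℕ) (A : Finset ((Fin 3 → K[X]) × (Fin 3 → K[X])))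
    (hA : A ⊆ LamNZ k (tw γ g) (a + 1) ×ˢ LamNZ k (tw γ' g) (a' + 1))
    (hD : ∀ z ∈ A, ∃ p : K[X], p.Monic ∧ Irreducible p ∧ D < p.natDegree ∧
      ∃ i, p ∣ z.1 i ∧ p ∣ z.2 i ∧ ∀ l, l ≠ i → IsCoprime p (g l)) :
    (A.card : ℝ) ≤ (qK K : ℝ) ^ (2 * (a + 1) - ∑ i, k i) * (qK K : ℝ) ^ (2 * (a' + 1) - ∑ i, k i) *
      (3 / (qK K : ℝ) ^ D + 3 * (qK K * 2 ^ (a' + 1)) / (qK K : ℝ) ^ n) := by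
  have hq := qR_pos (K := K)
  obtain ⟨-, hg0, hc, hs, hs'⟩ := mem_GG.1 hg
  have hG := cop_tw hγ hc
  have hG' := cop_tw hγ' hc
  set A1 := A.filter fun z => ∃ p : K[X], p.Monic ∧ Irreducible p ∧ D < p.natDegree ∧ p.natDegree ≤ n ∧
      ∃ i, p ∣ z.1 i ∧ p ∣ z.2 i ∧ ∀ l, l ≠ i → IsCoprime p (g l) with hA1
  set A2 := A.filter fun z => ∃ p : K[X], p.Monic ∧ Irreducible p ∧ n < p.natDegree ∧
      ∃ i, p ∣ z.1 i ∧ p ∣ z.2 i ∧ ∀ l, l ≠ i → IsCoprime p (g l) with hA2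
  have hcov : A ⊆ A1 ∪ A2 := by
    intro z hz
    obtain ⟨p, h1, h2, h3, h4⟩ := hD z hz
    rw [Finset.mem_union, hA1, hA2, Finset.mem_filter, Finset.mem_filter]
    by_cases hn : p.natDegree ≤ n
    · exact Or.inl ⟨hz, p, h1, h2, h3, hn, h4⟩
    · exact Or.inr ⟨hz, p, h1, h2, not_le.1 hn, h4⟩
  -- primes of degree at most `n`
  have b1 : (A1.card : ℝ) * (qK K : ℝ) ^ D ≤
      3 * ((qK K : ℝ) ^ (2 * (a + 1) - ∑ i, k i) * (qK K : ℝ) ^ (2 * (a' + 1) - ∑ i, k i)) := by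
    refine union3 _ (fun i z => ∃ p : K[X], p.Monic ∧ Irreducible p ∧ D < p.natDegree ∧
      p.natDegree ≤ n ∧ p ∣ z.1 i ∧ p ∣ z.2 i ∧ ∀ l, l ≠ i → IsCoprime p (g l)) ?_ (by positivity)
      fun i F hF hFp => ?_
    · intro z hz
      obtain ⟨p, h1, h2, h3, h4, i₀, h5⟩ := (Finset.mem_filter.1 hz).2
      exact ⟨i₀, p, h1, h2, h3, h4, h5⟩
    refine prime_union' F (fun p z => p ∣ z.1 i ∧ p ∣ z.2 i ∧ ∀ l, l ≠ i → IsCoprime p (g l)) D n _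
      (by positivity) hFp ?_
    intro p h1 h2 h3 h4 E hE hEp
    rcases E.eq_empty_or_nonempty with he | ⟨z0, hz0⟩
    · rw [he]; simp only [Finset.card_empty, Nat.cast_zero, zero_mul]; positivity
    have hpc := (hEp z0 hz0).2.2
    have hEA : ∀ z ∈ E, z ∈ LamNZ k (tw γ g) (a + 1) ×ˢ LamNZ k (tw γ' g) (a' + 1) := fun z hz =>
      hA (Finset.mem_filter.1 (hF (hE hz))).1
    have e1 := T3' hP hG hs h1.ne_zero i (fun l hl => cop_C_mul hγ (hpc l hl)) le_rfl h4 (E.image Prod.fst) (by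
        intro y hy
        obtain ⟨z, hz, rfl⟩ := Finset.mem_image.1 hy
        exact (Finset.mem_product.1 (hEA z hz)).1) (by
        intro y hy
        obtain ⟨z, hz, rfl⟩ := Finset.mem_image.1 hy
        exact (hEp z hz).1)
    have e2 := T3' hP.symm hG' hs' h1.ne_zero i (fun l hl => cop_C_mul hγ' (hpc l hl)) le_rfl h4
      (E.image Prod.snd) (by
        intro y hy
        obtain ⟨z, hz, rfl⟩ := Finset.mem_image.1 hy
        exact (Finset.mem_product.1 (hEA z hz)).2) (by
        intro y hy
        obtain ⟨z, hz, rfl⟩ := Finset.mem_image.1 hy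
        exact (hEp z hz).2.1)
    have e3 : E.card ≤ (E.image Prod.fst).card * (E.image Prod.snd).card := by
      rw [← Finset.card_product]
      exact Finset.card_le_card fun z hz => Finset.mem_product.2
        ⟨Finset.mem_image_of_mem _ hz, Finset.mem_image_of_mem _ hz⟩
    have e4 : E.card * qK K ^ (2 * p.natDegree) ≤
        qK K ^ (2 * (a + 1) - ∑ i, k i) * qK K ^ (2 * (a' + 1) - ∑ i, k i) := by
      calc _ ≤ (E.image Prod.fst).card * (E.image Prod.snd).card * qK K ^ (2 * p.natDegree) :=
            Nat.mul_le_mul_right _ e3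
        _ = ((E.image Prod.fst).card * qK K ^ p.natDegree) * ((E.image Prod.snd).card * qK K ^ p.natDegree) := by
            rw [two_mul, pow_add]; ring
        _ ≤ _ := Nat.mul_le_mul e1 e2
    exact_mod_cast e4
  -- larger primes: for fixed `y'` the prime is one of the few divisors of an entry of `y'`
  have b2 : (A2.card : ℝ) * (qK K : ℝ) ^ n ≤
      3 * ((qK K : ℝ) ^ (2 * (a' + 1) - ∑ i, k i) * ((qK K * 2 ^ (a' + 1)) *
        (qK K : ℝ) ^ (2 * (a + 1) - ∑ i, k i))) := by
    refine union3 _ (fun i z => ∃ p : K[X], p.Monic ∧ Irreducible p ∧ n < p.natDegree ∧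
      p ∣ z.1 i ∧ p ∣ z.2 i ∧ ∀ l, l ≠ i → IsCoprime p (g l)) ?_ (by positivity)
      fun i F hF hFp => ?_
    · intro z hz
      obtain ⟨p, h1, h2, h3, i₀, h5⟩ := (Finset.mem_filter.1 hz).2
      exact ⟨i₀, p, h1, h2, h3, h5⟩
    have hFA : ∀ z ∈ F, z ∈ LamNZ k (tw γ g) (a + 1) ×ˢ LamNZ k (tw γ' g) (a' + 1) := fun z hz =>
      hA (Finset.mem_filter.1 (hF hz)).1
    have e1 := fiber_bound F Prod.snd (LamNZ k (tw γ' g) (a' + 1))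
      (fun z hz => (Finset.mem_product.1 (hFA z hz)).2) (u := qK K ^ n)
      (T := (qK K * 2 ^ (a' + 1)) * qK K ^ (2 * (a + 1) - ∑ i, k i)) ?_
    · have e2 := e1.trans (Nat.mul_le_mul_right _ (card_LamNZ_good hP.symm hG' hs'))
      exact_mod_cast e2
    · intro y' hy' F' hF' hFy
      have hy := mem_LamNZ.1 hy'
      have hex : ∀ z : (Fin 3 → K[X]) × (Fin 3 → K[X]), ∃ p : K[X], z ∈ F' → p.Monic ∧ Irreducible p ∧
          n < p.natDegree ∧ p ∣ z.1 i ∧ p ∣ z.2 i ∧ ∀ l, l ≠ i → IsCoprime p (g l) := by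
        intro z
        by_cases hz : z ∈ F'
        · obtain ⟨p, hp⟩ := hFp z (hF' hz)
          exact ⟨p, fun _ => hp⟩
        · exact ⟨0, fun h => absurd h hz⟩
      choose f hf using hex
      have e3 := fiber_bound F' f (F'.image f) (fun z hz => Finset.mem_image_of_mem _ hz) (u := qK K ^ n)
        (T := qK K ^ (2 * (a + 1) - ∑ i, k i)) ?_
      · refine e3.trans (Nat.mul_le_mul_right _ ?_)
        refine card_dvd_le (hy.2 i) (B := a' + 1) ?_ _ ?_
        · have := natDegree_le_of_mem (hy.1.1 i); omega
        · intro p hp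
          obtain ⟨z, hz, rfl⟩ := Finset.mem_image.1 hp
          have := (hf z hz).2.2.2.2.1
          rwa [hFy z hz] at this
      · intro p _ E hE hEp
        rcases E.eq_empty_or_nonempty with he | ⟨z0, hz0⟩
        · rw [he]; simp
        have hp0 := hf z0 (hE hz0)
        rw [hEp z0 hz0] at hp0
        have hinj : Set.InjOn Prod.fst (E : Set ((Fin 3 → K[X]) × (Fin 3 → K[X]))) := fun z hz z' hz' h5 =>
          Prod.ext h5 ((hFy z (hE hz)).trans (hFy z' (hE hz')).symm)
        rw [← Finset.card_image_of_injOn hinj]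
        refine T3' hP hG hs hp0.1.ne_zero i (fun l hl => cop_C_mul hγ (hp0.2.2.2.2.2 l hl)) hp0.2.2.1.le le_rfl _
          ?_ ?_
        · intro y hy
          obtain ⟨z, hz, rfl⟩ := Finset.mem_image.1 hy
          exact (Finset.mem_product.1 (hFA z (hF' (hE hz)))).1
        · intro y hy
          obtain ⟨z, hz, rfl⟩ := Finset.mem_image.1 hy
          have := (hf z (hE hz)).2.2.2.1
          rwa [hEp z hz] at this
  have h1 : (A.card : ℝ) ≤ A1.card + A2.card := by
    exact_mod_cast (Finset.card_le_card hcov).trans (Finset.card_union_le _ _)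
  rw [← le_div_iff₀ (by positivity)] at b1 b2
  refine h1.trans ((add_le_add b1 b2).trans (le_of_eq ?_))
  ring
end dP5

/-! ### Failure of the local conditions outside a finite set of points -/

namespace dP5
open Polynomial
open scoped Classical
variable {K : Type} [Field K] [Fintype K]

/-- By the linear relation, a prime dividing two of the products divides the third. -/
lemma dvd_all_of_rel {γ : Fin 3 → K} (hγ : ∀ i, γ i ≠ 0) {k : Fin 3 → ℕ} {B : ℕ} {g y : Fin 3 → K[X]}
    (hy : y ∈ Lam k (tw γ g) B) {p : K[X]} {i j : Fin 3} (hij : i ≠ j) (hi : p ∣ g i * y i)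
    (hj : p ∣ g j * y j) : ∀ m, p ∣ g m * y m := by
  obtain ⟨l, hl1, hl2, hm, hs⟩ := third i j hij
  have h := hy.2
  have hs' : ∀ f : Fin 3 → K[X], ∑ m, f m = f i + f j + f l := by
    intro f
    have : (Finset.univ : Finset (Fin 3)) = {i, j, l} := by
      ext m; simp only [Finset.mem_univ, Finset.mem_insert, Finset.mem_singleton, true_iff]; exact hm m
    rw [this, Finset.sum_insert, Finset.sum_insert, Finset.sum_singleton, add_assoc]
    · simpa using hl2.symm
    · simp only [Finset.mem_insert, Finset.mem_singleton, not_or]; exact ⟨hij, hl1.symm⟩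
  rw [hs'] at h
  have h1 : p ∣ C (γ l) * (g l * y l) := by
    have h2 : C (γ l) * (g l * y l) = -(C (γ i) * (g i * y i) + C (γ j) * (g j * y j)) := by
      simp only [tw] at h
      linear_combination h
    rw [h2]
    exact (dvd_neg).2 (dvd_add (hi.mul_left _) (hj.mul_left _))
  have h3 : p ∣ g l * y l := ((isUnit_C.2 (hγ l).isUnit).dvd_mul_left).1 h1
  intro m
  rcases hm m with rfl | rfl | rfl <;> assumption

lemma res_mul_eq_zero (c : ClosedPoint K) (x y : ResF c) : x * y = 0 ↔ x = 0 ∨ y = 0 := mul_eq_zero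

/-- The ways in which a pair satisfying the local conditions at `P` can fail to be a torsor point. -/
lemma not_good_cases {γ γ' : Fin 3 → K} (hγ : ∀ i, γ i ≠ 0) (hγ' : ∀ i, γ' i ≠ 0)
    {k : Fin 3 → ℕ} {a a' n H : ℕ} (hPar : Par k a a' n H)
    {P : Finset (ClosedPoint K)} (hP : Sum.inr () ∈ P) {D : ℕ} (hD : ∀ c, c ∉ P → D < cpDeg c)
    {g : Fin 3 → K[X]} (hg : g ∈ GG γ γ' k a a' n) {z : (Fin 3 → K[X]) × (Fin 3 → K[X])}
    (hz : z ∈ LamF k (tw γ g) (a + 1) ×ˢ LamF k (tw γ' g) (a' + 1))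
    (hzP : ∀ c ∈ P, goodAt γ γ' k a a' g z.1 z.2 c) (hzF : z ∉ Fib γ γ' k a a' g) :
    (∃ i, z.1 i = 0) ∨ (∃ i, z.2 i = 0) ∨
    (z ∈ LamNZ k (tw γ g) (a + 1) ×ˢ LamNZ k (tw γ' g) (a' + 1) ∧
      ((∃ p : K[X], p.Monic ∧ Irreducible p ∧ D < p.natDegree ∧ ∀ i, p ∣ g i * z.1 i) ∨
       (∃ p : K[X], p.Monic ∧ Irreducible p ∧ D < p.natDegree ∧ ∀ i, p ∣ g i * z.2 i) ∨
       (∃ p : K[X], p.Monic ∧ Irreducible p ∧ D < p.natDegree ∧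
         ∃ i, p ∣ z.1 i ∧ p ∣ z.2 i ∧ ∀ l, l ≠ i → IsCoprime p (g l)))) := by
  obtain ⟨h1, h2, h3, h4, h5⟩ := mem_GG.1 hg
  rw [Finset.mem_product, mem_LamF, mem_LamF] at hz
  by_cases e1 : ∃ i, z.1 i = 0
  · exact Or.inl e1
  by_cases e2 : ∃ i, z.2 i = 0
  · exact Or.inr (Or.inl e2)
  push Not at e1 e2
  right; right
  have hzL : z ∈ LamNZ k (tw γ g) (a + 1) ×ˢ LamNZ k (tw γ' g) (a' + 1) :=
    Finset.mem_product.2 ⟨mem_LamNZ.2 ⟨hz.1, e1⟩, mem_LamNZ.2 ⟨hz.2, e2⟩⟩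
  refine ⟨hzL, ?_⟩
  rw [Fib, Finset.mem_filter] at hzF
  push Not at hzF
  obtain ⟨c, hc⟩ := hzF hzL
  have hcP : c ∉ P := fun h => hc (hzP c h)
  have hcd := hD c hcP
  rcases c with p | u
  swap
  · exact absurd hP hcP
  have hcd' : D < p.1.natDegree := hcd
  have r1 := red_rel (a := a) (fun i => by have := hPar.ka i; omega) h1 hz.1 (Sum.inl p)
  have r2 := red_rel (a := a') (fun i => by have := hPar.ka' i; omega) h1 hz.2 (Sum.inl p)
  have hr : ∀ n f, red (Sum.inl p : ClosedPoint K) n f = 0 ↔ p.1 ∣ f := red_inl_eq_zero p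
  have hm : ∀ m n f h, red (Sum.inl p : ClosedPoint K) m f * red (Sum.inl p : ClosedPoint K) n h = 0 ↔
      p.1 ∣ f * h := by
    intro m n f h
    rw [res_mul_eq_zero (Sum.inl p : ClosedPoint K), hr, hr]
    exact p.2.2.prime.dvd_mul.symm
  by_cases f1 : ∃ i, redT (Sum.inl p : ClosedPoint K) k g i *
      redT (Sum.inl p : ClosedPoint K) (fun i => a - k i) z.1 i ≠ 0
  swap
  · left
    push Not at f1
    exact ⟨p.1, p.2.1, p.2.2, hcd', fun i => (hm _ _ _ _).1 (f1 i)⟩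
  by_cases f2 : ∃ i, redT (Sum.inl p : ClosedPoint K) k g i *
      redT (Sum.inl p : ClosedPoint K) (fun i => a' - k i) z.2 i ≠ 0
  swap
  · right; left
    push Not at f2
    exact ⟨p.1, p.2.1, p.2.2, hcd', fun i => (hm _ _ _ _).1 (f2 i)⟩
  by_cases f3 : ∀ i, ¬ (redT (Sum.inl p : ClosedPoint K) (fun i => a - k i) z.1 i = 0 ∧
      redT (Sum.inl p : ClosedPoint K) (fun i => a' - k i) z.2 i = 0)
  · exact absurd ⟨r1, r2, f1, f2, f3⟩ hc
  push Not at f3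
  obtain ⟨i, i1, i2⟩ := f3
  have i1' : p.1 ∣ z.1 i := (hr _ _).1 i1
  have i2' : p.1 ∣ z.2 i := (hr _ _).1 i2
  -- if `p` divides some other `g l` as well, two of the three products are divisible by `p`
  by_cases hl : ∃ l, l ≠ i ∧ p.1 ∣ g l
  · obtain ⟨l, hl1, hl2⟩ := hl
    left
    exact ⟨p.1, p.2.1, p.2.2, hcd', dvd_all_of_rel hγ hz.1 hl1 (hl2.mul_right _) (i1'.mul_left _)⟩
  · right; right
    push Not at hl
    exact ⟨p.1, p.2.1, p.2.2, hcd', i, i1', i2', fun l h => (p.2.2.coprime_iff_not_dvd).2 (hl l h)⟩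

/-- The bound of `tailA`, summed over the triples `g`. -/
lemma tailA_sum {γ : Fin 3 → K} (hγ : ∀ i, γ i ≠ 0) {k : Fin 3 → ℕ} {a a' n H : ℕ} (hP : Par k a a' n H)
    (D : ℕ) (S : Finset (Fin 3 → K[X])) (hS : S ⊆ GF K k)
    (hSg : ∀ g ∈ S, (∀ i, g i ≠ 0) ∧ Cop k g ∧ NoShort k (tw γ g) (NN k a n)) :
    ∑ g ∈ S, (((LamNZ k (tw γ g) (a + 1)).filter fun y =>
        ∃ p : K[X], p.Monic ∧ Irreducible p ∧ D < p.natDegree ∧ ∀ i, p ∣ g i * y i).card : ℝ) ≤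
      (qK K : ℝ) ^ (∑ i, k i + 3) * (qK K : ℝ) ^ (2 * (a + 1) - ∑ i, k i) *
      (4 / (qK K : ℝ) ^ D + 8 ^ (a + 1) / (qK K : ℝ) ^ n) := by
  have h := tailA hγ hP D ((S.sigma fun g => (LamNZ k (tw γ g) (a + 1)).filter fun y =>
        ∃ p : K[X], p.Monic ∧ Irreducible p ∧ D < p.natDegree ∧ ∀ i, p ∣ g i * y i).image
        fun x => (x.1, x.2)) ?_ ?_ ?_
  · rw [Finset.card_image_of_injective, Finset.card_sigma] at h
    · exact_mod_cast h
    · rintro ⟨g, y⟩ ⟨g', y'⟩ h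
      simp only [Prod.mk.injEq] at h
      obtain ⟨rfl, rfl⟩ := h
      rfl
  · intro z hz
    obtain ⟨⟨g, y⟩, hx, rfl⟩ := Finset.mem_image.1 hz
    obtain ⟨h1, h2⟩ := Finset.mem_sigma.1 hx
    have h3 := mem_LamNZ.1 (Finset.mem_filter.1 h2).1
    exact mem_GY.2 ⟨mem_GF.1 (hS h1), (hSg _ h1).1, h3.1, h3.2⟩
  · intro z hz
    obtain ⟨⟨g, y⟩, hx, rfl⟩ := Finset.mem_image.1 hz
    exact (hSg _ (Finset.mem_sigma.1 hx).1).2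
  · intro z hz
    obtain ⟨⟨g, y⟩, hx, rfl⟩ := Finset.mem_image.1 hz
    exact (Finset.mem_filter.1 (Finset.mem_sigma.1 hx).2).2
end dP5

/-! ### Upper and lower bounds for the torsor count -/

namespace dP5
open Polynomial
open scoped Classical
variable {K : Type} [Field K] [Fintype K]

/-- The expected number of pairs `(y, y')` above `g` satisfying the local conditions at `P`. -/
def MT (γ γ' : Fin 3 → K) (k : Fin 3 → ℕ) (a a' : ℕ) (P : Finset (ClosedPoint K)) (g : Fin 3 → K[X]) : ℝ :=
  (qK K : ℝ) ^ (2 * (a + 1) - ∑ i, k i) * (qK K : ℝ) ^ (2 * (a' + 1) - ∑ i, k i) *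
    ((∏ c : P, (locSet (gF γ c.1) (gF γ' c.1) (redT c.1 k g)).card : ℕ) : ℝ) / (qK K : ℝ) ^ (4 * sdeg P)

/-- The pairs `(y, y')` above `g` satisfying the local conditions at the points of `P` only. -/
def SP (γ γ' : Fin 3 → K) (k : Fin 3 → ℕ) (a a' : ℕ) (P : Finset (ClosedPoint K)) (g : Fin 3 → K[X]) :
    Finset ((Fin 3 → K[X]) × (Fin 3 → K[X])) :=
  (LamF k (tw γ g) (a + 1) ×ˢ LamF k (tw γ' g) (a' + 1)).filter fun z =>
      ∀ c ∈ P, goodAt γ γ' k a a' g z.1 z.2 c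

variable {γ γ' : Fin 3 → K} {k : Fin 3 → ℕ} {a a' n H : ℕ} {P : Finset (ClosedPoint K)}

lemma MT_nonneg (g : Fin 3 → K[X]) : 0 ≤ MT γ γ' k a a' P g := by
  rw [MT]; positivity

lemma MT_eq (hP : Sum.inr () ∈ P) (hγ : ∀ i, γ i ≠ 0) (hγ' : ∀ i, γ' i ≠ 0) (hH : Par k a a' n H)
    (he : sdeg P ≤ H) {g : Fin 3 → K[X]} (hg : g ∈ GG γ γ' k a a' n) :
    ((SP γ γ' k a a' P g).card : ℝ) = MT γ γ' k a a' P g := by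
  have hq := qR_pos (K := K)
  rw [MT, eq_div_iff (by positivity), SP]
  exact_mod_cast good_count hP hγ hγ' hH he hg

lemma MT_le (hγ : ∀ i, γ i ≠ 0) (hγ' : ∀ i, γ' i ≠ 0) (g : Fin 3 → K[X]) : MT γ γ' k a a' P g ≤
    (qK K : ℝ) ^ (2 * (a + 1) - ∑ i, k i) * (qK K : ℝ) ^ (2 * (a' + 1) - ∑ i, k i) := by
  have hq := qR_pos (K := K)
  rw [MT, div_le_iff₀ (by positivity)]
  have h : ((∏ c : P, (locSet (gF γ c.1) (gF γ' c.1) (redT c.1 k g)).card : ℕ) : ℝ) ≤ (qK K : ℝ) ^ (4 * sdeg P) := by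
    exact_mod_cast loc_le hγ hγ' k g
  gcongr

/-- The expected counts sum to the main term. -/
lemma MT_sum (hP : Sum.inr () ∈ P) (hγ : ∀ i, γ i ≠ 0) (hγ' : ∀ i, γ' i ≠ 0) (hH : Par k a a' n H)
    (he : sdeg P ≤ H) : ∑ g ∈ GF K k, MT γ γ' k a a' P g = (qK K : ℝ) ^ (∑ i, k i + 3) *
      ((qK K : ℝ) ^ (2 * (a + 1) - ∑ i, k i) * (qK K : ℝ) ^ (2 * (a' + 1) - ∑ i, k i)) *
      ∏ c ∈ P, tauFactor (qK K) 3 (cpDeg c) := by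
  have hq := qR_pos (K := K)
  have h := sum_loc_prod (γ := γ) (γ' := γ') hP hγ hγ' (k := k) (fun i => by
    have := hH.kn i; have := hH.Hn; omega)
  simp only [MT]
  rw [← Finset.sum_div, ← Finset.mul_sum, h]
  field_simp

/-- A triple that is not coprime but satisfies the local conditions at `P` has a common prime factor of
large degree. -/
lemma gcd_of_not_cop {D : ℕ} (hP : Sum.inr () ∈ P) (hD : ∀ c, c ∉ P → D < cpDeg c) (hγ : ∀ i, γ i ≠ 0)
    {g : Fin 3 → K[X]} (hg : g ∈ GF K k) (h0 : ∀ i, g i ≠ 0) (hc : ¬ Cop k g) (hM : MT γ γ' k a a' P g ≠ 0) :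
    ∃ p : K[X], p.Monic ∧ Irreducible p ∧ D < p.natDegree ∧ ∃ i j, i ≠ j ∧ p ∣ g i ∧ p ∣ g j := by
  have h1 : ∏ c : P, (locSet (gF γ c.1) (gF γ' c.1) (redT c.1 k g)).card ≠ 0 := by
    intro h
    apply hM
    rw [MT, h]; simp
  have h2 := loc_ne_zero hγ h1
  by_contra hcon
  apply hc
  refine cop_of_red (mem_GF.1 hg) h0 fun c i j hij h => ?_
  by_cases hcP : c ∈ P
  · exact h2 c hcP i j hij h
  · rcases c with p | u
    · exact hcon ⟨p.1, p.2.1, p.2.2, hD _ hcP, i, j, hij, (red_inl_eq_zero p _ _).1 h.1,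
        (red_inl_eq_zero p _ _).1 h.2⟩
    · exact hcP hP

/-- Upper bound for the torsor count, obtained by dropping the conditions outside `P`; triples `g` with
a short syzygy contribute an error of relative size `8 ^ a / q ^ n`. -/
lemma upper (hP : Sum.inr () ∈ P) (hγ : ∀ i, γ i ≠ 0) (hγ' : ∀ i, γ' i ≠ 0) (hH : Par k a a' n H)
    (he : sdeg P ≤ H) :
    (cX γ γ' k a a' : ℝ) ≤ (qK K : ℝ) ^ (∑ i, k i + 3) *
      ((qK K : ℝ) ^ (2 * (a + 1) - ∑ i, k i) * (qK K : ℝ) ^ (2 * (a' + 1) - ∑ i, k i)) *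
      (∏ c ∈ P, tauFactor (qK K) 3 (cpDeg c) + 8 ^ (a + 1) / (qK K : ℝ) ^ n + 8 ^ (a' + 1) / (qK K : ℝ) ^ n) := by
  have hq := qR_pos (K := K)
  obtain ⟨W, hW⟩ : ∃ W, W = (qK K : ℝ) ^ (2 * (a + 1) - ∑ i, k i) * (qK K : ℝ) ^ (2 * (a' + 1) - ∑ i, k i) :=
    ⟨_, rfl⟩
  have hW0 : 0 < W := by rw [hW]; positivity
  set N := (GF K k).filter (fun g => ∀ i, g i ≠ 0) with hN
  set B1 := (GF K k).filter (fun g => (∀ i, g i ≠ 0) ∧ ¬ NoShort k (tw γ g) (NN k a n)) with hB1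
  set B2 := (GF K k).filter (fun g => (∀ i, g i ≠ 0) ∧ ¬ NoShort k (tw γ' g) (NN k a' n)) with hB2
  have b1 := bad_short hγ hH B1 (Finset.filter_subset _ _) (fun g hg => (Finset.mem_filter.1 hg).2)
  have b2 := bad_short hγ' hH.symm B2 (Finset.filter_subset _ _) (fun g hg => (Finset.mem_filter.1 hg).2)
  rw [← le_div_iff₀ (by positivity)] at b1 b2
  have hFW : ∀ g ∈ N, ((Fib γ γ' k a a' g).card : ℝ) ≤ W := by
    intro g hg
    rw [hW]
    exact_mod_cast Fib_card_le hγ hγ' hg (fun i => by have := hH.ka i; omega)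
      (fun i => by have := hH.ka' i; omega) (by have := hH.ha; omega) (by have := hH.ha'; omega)
  have hFM : ∀ g ∈ N, ((Fib γ γ' k a a' g).card : ℝ) ≤ MT γ γ' k a a' P g +
      ((if g ∈ B1 then W else 0) + if g ∈ B2 then W else 0) := by
    intro g hg
    have hM := MT_nonneg (γ := γ) (γ' := γ') (k := k) (a := a) (a' := a') (P := P) g
    have hgN := Finset.mem_filter.1 hg
    by_cases h1 : g ∈ B1
    · rw [if_pos h1]
      have := hFW g hg
      split_ifs <;> linarith
    by_cases h2 : g ∈ B2
    · rw [if_neg h1, if_pos h2]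
      have := hFW g hg
      linarith
    rw [if_neg h1, if_neg h2, add_zero, add_zero]
    rcases (Fib γ γ' k a a' g).eq_empty_or_nonempty with h | h
    · rw [h]; simpa using hM
    have hc := Fib_cop hγ hg h
    have hgG : g ∈ GG γ γ' k a a' n := by
      rw [mem_GG]
      refine ⟨mem_GF.1 hgN.1, hgN.2, hc, ?_, ?_⟩
      · by_contra h3; exact h1 (Finset.mem_filter.2 ⟨hgN.1, hgN.2, h3⟩)
      · by_contra h3; exact h2 (Finset.mem_filter.2 ⟨hgN.1, hgN.2, h3⟩)
    rw [← MT_eq hP hγ hγ' hH he hgG]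
    have : (Fib γ γ' k a a' g) ⊆ SP γ γ' k a a' P g := by
      intro z hz
      rw [Fib, Finset.mem_filter, Finset.mem_product] at hz
      exact Finset.mem_filter.2 ⟨Finset.mem_product.2 ⟨(Finset.mem_filter.1 hz.1.1).1,
        (Finset.mem_filter.1 hz.1.2).1⟩, fun c _ => hz.2 c⟩
    exact_mod_cast Finset.card_le_card this
  have hsum : ∀ B : Finset (Fin 3 → K[X]), B ⊆ GF K k → ∑ g ∈ GF K k, (if g ∈ B then W else 0) = B.card * W := by
    intro B hB
    rw [← Finset.sum_filter, Finset.sum_const, nsmul_eq_mul]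
    congr 3
    ext g; rw [Finset.mem_filter]; exact ⟨fun h => h.2, fun h => ⟨hB h, h⟩⟩
  calc (cX γ γ' k a a' : ℝ) = ∑ g ∈ N, ((Fib γ γ' k a a' g).card : ℝ) := by rw [cX]; push_cast; rfl
    _ ≤ ∑ g ∈ N, (MT γ γ' k a a' P g + ((if g ∈ B1 then W else 0) + if g ∈ B2 then W else 0)) :=
        Finset.sum_le_sum hFM
    _ ≤ ∑ g ∈ GF K k, (MT γ γ' k a a' P g + ((if g ∈ B1 then W else 0) + if g ∈ B2 then W else 0)) := by
        refine Finset.sum_le_sum_of_subset_of_nonneg (Finset.filter_subset _ _) fun g _ _ => ?_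
        have hM := MT_nonneg (γ := γ) (γ' := γ') (k := k) (a := a) (a' := a') (P := P) g
        split_ifs <;> linarith
    _ = (qK K : ℝ) ^ (∑ i, k i + 3) * W * ∏ c ∈ P, tauFactor (qK K) 3 (cpDeg c) +
        (B1.card * W + B2.card * W) := by
      rw [Finset.sum_add_distrib, Finset.sum_add_distrib, hsum B1 (Finset.filter_subset _ _),
        hsum B2 (Finset.filter_subset _ _), MT_sum hP hγ hγ' hH he, hW]
    _ ≤ (qK K : ℝ) ^ (∑ i, k i + 3) * W * ∏ c ∈ P, tauFactor (qK K) 3 (cpDeg c) +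
        (((qK K : ℝ) ^ (∑ i, k i + 3) * 8 ^ (a + 1) / (qK K : ℝ) ^ n) * W +
        ((qK K : ℝ) ^ (∑ i, k i + 3) * 8 ^ (a' + 1) / (qK K : ℝ) ^ n) * W) := by
      gcongr
    _ = _ := by rw [← hW]; ring

/-- The pairs above a good `g` satisfying the conditions at `P` but not everywhere: an entry vanishes, or a
prime of degree `> D` divides the three products of one of the relations or a common entry of `y`
and `y'`. -/
lemma SP_sdiff (hP : Sum.inr () ∈ P) (hγ : ∀ i, γ i ≠ 0) (hγ' : ∀ i, γ' i ≠ 0) (hH : Par k a a' n H)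
    {D : ℕ} (hD : ∀ c, c ∉ P → D < cpDeg c) {g : Fin 3 → K[X]} (hg : g ∈ GG γ γ' k a a' n) :
    ((SP γ γ' k a a' P g).card : ℝ) ≤ (Fib γ γ' k a a' g).card +
      ((qK K : ℝ) ^ (2 * (a + 1) - ∑ i, k i) * (qK K : ℝ) ^ (2 * (a' + 1) - ∑ i, k i) *
        (6 / (qK K : ℝ) ^ H + 3 / (qK K : ℝ) ^ D + 3 * (qK K * 2 ^ (a' + 1)) / (qK K : ℝ) ^ n) +
      ((((LamNZ k (tw γ g) (a + 1)).filter fun y =>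
        ∃ p : K[X], p.Monic ∧ Irreducible p ∧ D < p.natDegree ∧ ∀ i, p ∣ g i * y i).card : ℝ) *
          (qK K : ℝ) ^ (2 * (a' + 1) - ∑ i, k i) +
       (((LamNZ k (tw γ' g) (a' + 1)).filter fun y =>
        ∃ p : K[X], p.Monic ∧ Irreducible p ∧ D < p.natDegree ∧ ∀ i, p ∣ g i * y i).card : ℝ) *
          (qK K : ℝ) ^ (2 * (a + 1) - ∑ i, k i))) := by
  have hq := qR_pos (K := K)
  obtain ⟨h1, h2, h3, h4, h5⟩ := mem_GG.1 hg
  have hG := cop_tw hγ h3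
  have hG' := cop_tw hγ' h3
  set L := LamF k (tw γ g) (a + 1) with hL
  set L' := LamF k (tw γ' g) (a' + 1) with hL'
  set Z := L.filter (fun y => ∃ i, y i = 0) with hZ
  set Z' := L'.filter (fun y => ∃ i, y i = 0) with hZ'
  set V := (LamNZ k (tw γ g) (a + 1)).filter (fun y =>
        ∃ p : K[X], p.Monic ∧ Irreducible p ∧ D < p.natDegree ∧ ∀ i, p ∣ g i * y i) with hV
  set V' := (LamNZ k (tw γ' g) (a' + 1)).filter (fun y =>
        ∃ p : K[X], p.Monic ∧ Irreducible p ∧ D < p.natDegree ∧ ∀ i, p ∣ g i * y i) with hV'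
  set B := (LamNZ k (tw γ g) (a + 1) ×ˢ LamNZ k (tw γ' g) (a' + 1)).filter (fun z =>
      ∃ p : K[X], p.Monic ∧ Irreducible p ∧ D < p.natDegree ∧
         ∃ i, p ∣ z.1 i ∧ p ∣ z.2 i ∧ ∀ l, l ≠ i → IsCoprime p (g l)) with hB
  have hcov : SP γ γ' k a a' P g ⊆ Fib γ γ' k a a' g ∪
      ((Z ×ˢ L' ∪ L ×ˢ Z') ∪ ((V ×ˢ L' ∪ L ×ˢ V') ∪ B)) := by
    intro z hz
    rw [Finset.mem_union]
    by_cases hF : z ∈ Fib γ γ' k a a' g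
    · exact Or.inl hF
    right
    obtain ⟨hzL, hzP⟩ := Finset.mem_filter.1 hz
    have hzL' := Finset.mem_product.1 hzL
    simp only [Finset.mem_union, Finset.mem_product, hZ, hZ', hV, hV', hB, Finset.mem_filter]
    rcases not_good_cases hγ hγ' hH hP hD hg hzL hzP hF with h | h | ⟨h, h' | h' | h'⟩
    · exact Or.inl (Or.inl ⟨⟨hzL'.1, h⟩, hzL'.2⟩)
    · exact Or.inl (Or.inr ⟨hzL'.1, hzL'.2, h⟩)
    · exact Or.inr (Or.inl (Or.inl ⟨⟨(Finset.mem_product.1 h).1, h'⟩, hzL'.2⟩))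
    · exact Or.inr (Or.inl (Or.inr ⟨hzL'.1, (Finset.mem_product.1 h).2, h'⟩))
    · exact Or.inr (Or.inr ⟨Finset.mem_product.1 h, h'⟩)
  have hcard : ((SP γ γ' k a a' P g).card : ℝ) ≤ (Fib γ γ' k a a' g).card +
      (((Z.card : ℝ) * L'.card + L.card * Z'.card) + ((V.card * L'.card + L.card * V'.card) + B.card)) := by
    have e := Finset.card_le_card hcov
    have e1 := Finset.card_union_le (Fib γ γ' k a a' g) ((Z ×ˢ L' ∪ L ×ˢ Z') ∪ ((V ×ˢ L' ∪ L ×ˢ V') ∪ B))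
    have e2 := Finset.card_union_le (Z ×ˢ L' ∪ L ×ˢ Z') ((V ×ˢ L' ∪ L ×ˢ V') ∪ B)
    have e3 := Finset.card_union_le (Z ×ˢ L') (L ×ˢ Z')
    have e4 := Finset.card_union_le (V ×ˢ L' ∪ L ×ˢ V') B
    have e5 := Finset.card_union_le (V ×ˢ L') (L ×ˢ V')
    simp only [Finset.card_product] at e3 e5
    have e6 : (SP γ γ' k a a' P g).card ≤ (Fib γ γ' k a a' g).card +
      ((Z.card * L'.card + L.card * Z'.card) + ((V.card * L'.card + L.card * V'.card) + B.card)) := by omega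
    exact_mod_cast e6
  have cL : (L.card : ℝ) = (qK K : ℝ) ^ (2 * (a + 1) - ∑ i, k i) := by
    have h := dL_good hH hG h4 (Nat.zero_le H)
    rw [hL, card_LamF]
    push_cast
    congr 1
    simp at h; omega
  have cL' : (L'.card : ℝ) = (qK K : ℝ) ^ (2 * (a' + 1) - ∑ i, k i) := by
    have h := dL_good hH.symm hG' h5 (Nat.zero_le H)
    rw [hL', card_LamF]
    push_cast
    congr 1
    simp at h; omega
  have cZ := T0' hH hG Z (Finset.filter_subset _ _) (fun y hy => (Finset.mem_filter.1 hy).2)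
  have cZ' := T0' hH.symm hG' Z' (Finset.filter_subset _ _) (fun y hy => (Finset.mem_filter.1 hy).2)
  have cB := tailB hγ hγ' hH hg D B (Finset.filter_subset _ _) (fun z hz => (Finset.mem_filter.1 hz).2)
  rw [← le_div_iff₀ (by positivity)] at cZ cZ'
  rw [cL, cL'] at hcard
  refine hcard.trans ?_
  have e1 := mul_le_mul_of_nonneg_right cZ (by positivity : (0:ℝ) ≤ (qK K : ℝ) ^ (2 * (a' + 1) - ∑ i, k i))
  have e2 := mul_le_mul_of_nonneg_left cZ' (by positivity : (0:ℝ) ≤ (qK K : ℝ) ^ (2 * (a + 1) - ∑ i, k i))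
  refine le_trans (add_le_add_right (add_le_add (add_le_add e1 e2) (add_le_add_right cB _)) _) (le_of_eq ?_)
  ring

/-- Lower bound for the torsor count, obtained by removing the pairs that violate a local condition outside
`P`. -/
lemma lower (hP : Sum.inr () ∈ P) (hγ : ∀ i, γ i ≠ 0) (hγ' : ∀ i, γ' i ≠ 0) (hH : Par k a a' n H)
    (he : sdeg P ≤ H) {D : ℕ} (hD : ∀ c, c ∉ P → D < cpDeg c) :
    (qK K : ℝ) ^ (∑ i, k i + 3) *
      ((qK K : ℝ) ^ (2 * (a + 1) - ∑ i, k i) * (qK K : ℝ) ^ (2 * (a' + 1) - ∑ i, k i)) *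
      (∏ c ∈ P, tauFactor (qK K) 3 (cpDeg c) -
        (14 / (qK K : ℝ) ^ D + 6 / (qK K : ℝ) ^ H + (3 + 2 * 8 ^ (a + 1) + 2 * 8 ^ (a' + 1) +
          3 * (qK K * 2 ^ (a' + 1))) / (qK K : ℝ) ^ n)) ≤ (cX γ γ' k a a' : ℝ) := by
  have hq := qR_pos (K := K)
  obtain ⟨w, hw⟩ : ∃ W, W = (qK K : ℝ) ^ (2 * (a + 1) - ∑ i, k i) := ⟨_, rfl⟩
  obtain ⟨w', hw'⟩ : ∃ W, W = (qK K : ℝ) ^ (2 * (a' + 1) - ∑ i, k i) := ⟨_, rfl⟩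
  obtain ⟨G0, hG0⟩ : ∃ W, W = (qK K : ℝ) ^ (∑ i, k i + 3) := ⟨_, rfl⟩
  have hw0 : 0 < w := by rw [hw]; positivity
  have hw0' : 0 < w' := by rw [hw']; positivity
  have hG00 : 0 < G0 := by rw [hG0]; positivity
  set G := GG γ γ' k a a' n with hGdef
  have hGsub : G ⊆ GF K k := Finset.filter_subset _ _
  -- the good `g`
  have t1 := tailA_sum hγ hH D G hGsub (fun g hg => by
    obtain ⟨-, h2, h3, h4, -⟩ := mem_GG.1 hg; exact ⟨h2, h3, h4⟩)
  have t2 := tailA_sum hγ' hH.symm D G hGsub (fun g hg => by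
    obtain ⟨-, h2, h3, -, h4⟩ := mem_GG.1 hg; exact ⟨h2, h3, h4⟩)
  have hGc : (G.card : ℝ) ≤ G0 := by
    rw [hG0]
    have := Finset.card_le_card hGsub
    rw [card_GF] at this
    exact_mod_cast this
  have hfib : ∑ g ∈ G, ((Fib γ γ' k a a' g).card : ℝ) ≤ cX γ γ' k a a' := by
    rw [cX]; push_cast
    refine Finset.sum_le_sum_of_subset_of_nonneg ?_ fun _ _ _ => Nat.cast_nonneg _
    intro g hg
    obtain ⟨h1, h2, -⟩ := mem_GG.1 hg
    exact Finset.mem_filter.2 ⟨mem_GF.2 h1, h2⟩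
  have good : ∑ g ∈ G, MT γ γ' k a a' P g ≤ cX γ γ' k a a' +
      G0 * (w * w') * (14 / (qK K : ℝ) ^ D - 3 / (qK K : ℝ) ^ D + 6 / (qK K : ℝ) ^ H + (8 ^ (a + 1) + 8 ^ (a' + 1) +
          3 * (qK K * 2 ^ (a' + 1))) / (qK K : ℝ) ^ n) := by
    rw [← Finset.sum_congr rfl fun g hg => MT_eq hP hγ hγ' hH he hg]
    refine (Finset.sum_le_sum fun g hg => SP_sdiff hP hγ hγ' hH hD hg).trans ?_
    rw [Finset.sum_add_distrib, Finset.sum_add_distrib, Finset.sum_add_distrib, ← Finset.sum_mul,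
      ← Finset.sum_mul, Finset.sum_const, nsmul_eq_mul, ← hw, ← hw']
    rw [← hw, ← hG0] at t1
    rw [← hw', ← hG0] at t2
    have e1 := mul_le_mul_of_nonneg_right t1 hw0'.le
    have e2 := mul_le_mul_of_nonneg_right t2 hw0.le
    have e3 := mul_le_mul_of_nonneg_right hGc (by positivity : 0 ≤ w * w' *
      (6 / (qK K : ℝ) ^ H + 3 / (qK K : ℝ) ^ D + 3 * (qK K * 2 ^ (a' + 1)) / (qK K : ℝ) ^ n))
    rw [Finset.sum_mul] at e1 e2
    refine (add_le_add hfib (add_le_add (le_of_eq_of_le (by ring) e3)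
      (add_le_add e1 e2))).trans (le_of_eq ?_)
    ring
  -- the other `g`
  set R := (GF K k \ G).filter (fun g => MT γ γ' k a a' P g ≠ 0) with hR
  have hRs : R ⊆ GF K k := (Finset.filter_subset _ _).trans Finset.sdiff_subset
  set R0 := R.filter (fun g => ∃ i, g i = 0)
  set R1 := R.filter (fun g => (∀ i, g i ≠ 0) ∧ ¬ Cop k g)
  set R2 := R.filter (fun g => (∀ i, g i ≠ 0) ∧ ¬ NoShort k (tw γ g) (NN k a n))
  set R3 := R.filter (fun g => (∀ i, g i ≠ 0) ∧ ¬ NoShort k (tw γ' g) (NN k a' n))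
  have hcov : R ⊆ (R0 ∪ R1) ∪ (R2 ∪ R3) := by
    intro g hg
    have hgG := (Finset.mem_sdiff.1 (Finset.mem_filter.1 hg).1).2
    have hgF := mem_GF.1 (hRs hg)
    by_contra hcon
    simp only [Finset.mem_union, R0, R1, R2, R3, Finset.mem_filter, hg, true_and, not_or] at hcon
    obtain ⟨⟨c0, c1⟩, c2, c3⟩ := hcon
    have c0' : ∀ i, g i ≠ 0 := by push Not at c0; exact c0
    refine hgG (mem_GG.2 ⟨hgF, c0', ?_, ?_, ?_⟩)
    · by_contra h; exact c1 ⟨c0', h⟩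
    · by_contra h; exact c2 ⟨c0', h⟩
    · by_contra h; exact c3 ⟨c0', h⟩
  have r0 := bad_zero hH.kn R0 ((Finset.filter_subset _ _).trans hRs) (fun g hg => (Finset.mem_filter.1 hg).2)
  have r1 := bad_gcd D R1 ((Finset.filter_subset _ _).trans hRs)
    (fun g hg => (Finset.mem_filter.1 hg).2.1) (fun g hg => by
      obtain ⟨h1, h2, h3⟩ := Finset.mem_filter.1 hg
      exact gcd_of_not_cop (γ := γ) (γ' := γ') (a := a) (a' := a') hP hD hγ (hRs h1) h2 h3
        (Finset.mem_filter.1 h1).2)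
  have r2 := bad_short hγ hH R2 ((Finset.filter_subset _ _).trans hRs) (fun g hg => (Finset.mem_filter.1 hg).2)
  have r3 := bad_short hγ' hH.symm R3 ((Finset.filter_subset _ _).trans hRs)
    (fun g hg => (Finset.mem_filter.1 hg).2)
  rw [← le_div_iff₀ (by positivity), ← hG0] at r0 r1 r2 r3
  have hRc : (R.card : ℝ) ≤ (R0.card + R1.card) + (R2.card + R3.card) := by
    have e := Finset.card_le_card hcov
    have e1 := Finset.card_union_le (R0 ∪ R1) (R2 ∪ R3)
    have e2 := Finset.card_union_le R0 R1
    have e3 := Finset.card_union_le R2 R3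
    have e4 : R.card ≤ (R0.card + R1.card) + (R2.card + R3.card) := by omega
    exact_mod_cast e4
  have bad : ∑ g ∈ GF K k \ G, MT γ γ' k a a' P g ≤ G0 * (w * w') *
      (3 / (qK K : ℝ) ^ D + (3 + 8 ^ (a + 1) + 8 ^ (a' + 1)) / (qK K : ℝ) ^ n) := by
    rw [← Finset.sum_filter_ne_zero]
    calc ∑ g ∈ R, MT γ γ' k a a' P g ≤ R.card • (w * w') :=
          Finset.sum_le_card_nsmul _ _ _ fun g _ => by rw [hw, hw']; exact MT_le hγ hγ' g
      _ = R.card * (w * w') := nsmul_eq_mul _ _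
      _ ≤ ((3 * G0 / (qK K : ℝ) ^ n + 3 * G0 / (qK K : ℝ) ^ D) + (G0 * 8 ^ (a + 1) / (qK K : ℝ) ^ n +
          G0 * 8 ^ (a' + 1) / (qK K : ℝ) ^ n)) * (w * w') := by
        have := hRc.trans (add_le_add (add_le_add r0 r1) (add_le_add r2 r3))
        gcongr
      _ = _ := by ring
  have tot := MT_sum (γ := γ) (γ' := γ') hP hγ hγ' hH he
  rw [← Finset.sum_sdiff hGsub, ← hw, ← hw', ← hG0] at tot
  rw [← hw, ← hw', ← hG0, mul_sub, ← tot]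
  have e : G0 * (w * w') * (14 / (qK K : ℝ) ^ D + 6 / (qK K : ℝ) ^ H + (3 + 2 * 8 ^ (a + 1) + 2 * 8 ^ (a' + 1) +
          3 * (qK K * 2 ^ (a' + 1))) / (qK K : ℝ) ^ n) =
      G0 * (w * w') * (3 / (qK K : ℝ) ^ D + (3 + 8 ^ (a + 1) + 8 ^ (a' + 1)) / (qK K : ℝ) ^ n) +
      G0 * (w * w') * (14 / (qK K : ℝ) ^ D - 3 / (qK K : ℝ) ^ D + 6 / (qK K : ℝ) ^ H + (8 ^ (a + 1) + 8 ^ (a' + 1) +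
          3 * (qK K * 2 ^ (a' + 1))) / (qK K : ℝ) ^ n) := by ring
  rw [e]
  linarith

/-- The torsor count agrees with `q ^ (h(α) + 7)` times the partial Euler product over `P`, up to a relative
error which is small when `D`, `H` are large and `q ^ n` dominates `8 ^ (a + a')`. -/
theorem main_bound (hP : Sum.inr () ∈ P) (hγ : ∀ i, γ i ≠ 0) (hγ' : ∀ i, γ' i ≠ 0) (hH : Par k a a' n H)
    (he : sdeg P ≤ H) {D : ℕ} (hD : ∀ c, c ∉ P → D < cpDeg c) :
    |(cX γ γ' k a a' : ℝ) - (qK K : ℝ) ^ (2 * a + 2 * a' - ∑ i, k i + 7) *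
        ∏ c ∈ P, tauFactor (qK K) 3 (cpDeg c)| ≤
      (qK K : ℝ) ^ (2 * a + 2 * a' - ∑ i, k i + 7) *
        (14 / (qK K : ℝ) ^ D + 6 / (qK K : ℝ) ^ H + 10 * (qK K * 8 ^ (a + a' + 2)) / (qK K : ℝ) ^ n) := by
  have hq := qR_pos (K := K)
  have hq2 := two_le_qR (K := K)
  have hT : (qK K : ℝ) ^ (∑ i, k i + 3) *
      ((qK K : ℝ) ^ (2 * (a + 1) - ∑ i, k i) * (qK K : ℝ) ^ (2 * (a' + 1) - ∑ i, k i)) =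
      (qK K : ℝ) ^ (2 * a + 2 * a' - ∑ i, k i + 7) := by
    rw [← pow_add, ← pow_add]; congr 1
    have := hH.ha; have := hH.ha'; omega
  have hu := upper hP hγ hγ' hH he
  have hl := lower hP hγ hγ' hH he hD
  rw [hT] at hu hl
  have x1 : (1 : ℝ) ≤ 8 ^ (a + 1) := one_le_pow₀ (by norm_num)
  have x2 : (1 : ℝ) ≤ 8 ^ (a' + 1) := one_le_pow₀ (by norm_num)
  have x3 : (2 : ℝ) ^ (a' + 1) ≤ 8 ^ (a' + 1) := pow_le_pow_left₀ (by norm_num) (by norm_num) _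
  have x4 : (8 : ℝ) ^ (a + a' + 2) = 8 ^ (a + 1) * 8 ^ (a' + 1) := by rw [← pow_add]; congr 1; omega
  have y1 : (8 : ℝ) ^ (a + 1) ≤ 8 ^ (a + a' + 2) := by rw [x4]; nlinarith
  have y2 : (8 : ℝ) ^ (a' + 1) ≤ 8 ^ (a + a' + 2) := by rw [x4]; nlinarith
  have y3 : (8 : ℝ) ^ (a + a' + 2) ≤ qK K * 8 ^ (a + a' + 2) := by nlinarith
  have y4 : (qK K : ℝ) * 2 ^ (a' + 1) ≤ qK K * 8 ^ (a + a' + 2) := by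
    have := x3.trans y2
    gcongr
  have z1 : (3 + 2 * 8 ^ (a + 1) + 2 * 8 ^ (a' + 1) + 3 * (qK K * 2 ^ (a' + 1))) / (qK K : ℝ) ^ n ≤
      10 * (qK K * 8 ^ (a + a' + 2)) / (qK K : ℝ) ^ n := by
    gcongr
    linarith
  have z2 : 8 ^ (a + 1) / (qK K : ℝ) ^ n + 8 ^ (a' + 1) / (qK K : ℝ) ^ n ≤
      10 * (qK K * 8 ^ (a + a' + 2)) / (qK K : ℝ) ^ n := by
    rw [← add_div]
    gcongr
    linarith
  have z3 : 0 ≤ 14 / (qK K : ℝ) ^ D + 6 / (qK K : ℝ) ^ H := by positivity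
  obtain ⟨T, hTd⟩ : ∃ T, T = (qK K : ℝ) ^ (2 * a + 2 * a' - ∑ i, k i + 7) := ⟨_, rfl⟩
  have hT0 : 0 ≤ T := by rw [hTd]; positivity
  rw [← hTd] at hu hl ⊢
  rw [abs_le]
  constructor
  · have := mul_le_mul_of_nonneg_left z1 hT0
    nlinarith
  · have := mul_le_mul_of_nonneg_left (add_le_add z3 z2) hT0
    nlinarith
end dP5

/-! ### The Euler product -/

namespace dP5
open Polynomial
open scoped Classical
variable {K : Type} [Field K] [Fintype K]

/-- The closed points of degree at most `D`. -/
def cpUpTo (K : Type) [Field K] [Fintype K] (D : ℕ) : Finset (ClosedPoint K) :=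
  ((((Finset.range (D + 1)).biUnion (Irr K)).subtype
    (fun p : K[X] => p.Monic ∧ Irreducible p)).disjSum {()} :
      Finset ({p : K[X] // p.Monic ∧ Irreducible p} ⊕ Unit))

lemma inr_mem_cpUpTo (D : ℕ) : (Sum.inr () : ClosedPoint K) ∈ cpUpTo K D := 
  Finset.inr_mem_disjSum.2 (Finset.mem_singleton_self ())

lemma mem_cpUpTo_of_le {D : ℕ} {c : ClosedPoint K} (h : cpDeg c ≤ D) : c ∈ cpUpTo K D := by
  rcases c with p | u
  · refine Finset.inl_mem_disjSum.2 (Finset.mem_subtype.2 ?_)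
    rw [Finset.mem_biUnion]
    exact ⟨p.1.natDegree, Finset.mem_range.2 (by have : p.1.natDegree ≤ D := h; omega),
      mem_Irr.2 ⟨p.2.1, p.2.2, rfl⟩⟩
  · exact inr_mem_cpUpTo D

/-- The linear terms of the local factor cancel, so the Euler product converges absolutely. -/
lemma tau_sub_one {x : ℝ} (h0 : 0 ≤ x) (h1 : x ≤ 1) :
    |(1 - x) ^ 5 * (1 + 5 * x + x ^ 2) - 1| ≤ 100 * x ^ 2 := by
  have e : (1 - x) ^ 5 * (1 + 5 * x + x ^ 2) - 1 =
    x ^ 2 * (-14 + 35 * x - 35 * x ^ 2 + 14 * x ^ 3 - x ^ 5) := by ring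
  have hx2 : x ^ 2 ≤ 1 := pow_le_one₀ h0 h1
  have hx3 : x ^ 3 ≤ 1 := pow_le_one₀ h0 h1
  have hx5 : x ^ 5 ≤ 1 := pow_le_one₀ h0 h1
  have : |-14 + 35 * x - 35 * x ^ 2 + 14 * x ^ 3 - x ^ 5| ≤ 100 := by
    rw [abs_le]; constructor <;> nlinarith [pow_nonneg h0 2, pow_nonneg h0 3, pow_nonneg h0 5]
  rw [e, abs_mul, abs_of_nonneg (by positivity : (0:ℝ) ≤ x ^ 2), mul_comm]
  gcongr

lemma summable_cp : Summable fun c : ClosedPoint K => (((qK K : ℝ)⁻¹) ^ cpDeg c) ^ 2 := by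
  have hq := two_le_qR (K := K)
  have hq0 : (0:ℝ) < qK K := by linarith
  have key : Summable fun p : {p : K[X] // p.Monic ∧ Irreducible p} => (((qK K : ℝ)⁻¹) ^ p.1.natDegree) ^ 2 := by
    refine summable_of_sum_le (c := 1) (fun p => by positivity) fun S => ?_
    set m := S.sup fun p => p.1.natDegree
    have h1 : S.map ⟨Subtype.val, Subtype.val_injective⟩ ⊆ (Finset.Ioc 0 m).biUnion (Irr K) := by
      intro p hp
      obtain ⟨p, hp', rfl⟩ := Finset.mem_map.1 hp
      rw [Finset.mem_biUnion]
      exact ⟨p.1.natDegree, Finset.mem_Ioc.2 ⟨p.2.2.natDegree_pos,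
        Finset.le_sup (f := fun p : {p : K[X] // p.Monic ∧ Irreducible p} => p.1.natDegree) hp'⟩,
        mem_Irr.2 ⟨p.2.1, p.2.2, rfl⟩⟩
    calc ∑ p ∈ S, (((qK K : ℝ)⁻¹) ^ p.1.natDegree) ^ 2
        = ∑ p ∈ S.map ⟨Subtype.val, Subtype.val_injective⟩, (((qK K : ℝ)⁻¹) ^ p.natDegree) ^ 2 := by
          rw [Finset.sum_map]; rfl
      _ ≤ ∑ p ∈ (Finset.Ioc 0 m).biUnion (Irr K), (((qK K : ℝ)⁻¹) ^ p.natDegree) ^ 2 :=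
          Finset.sum_le_sum_of_subset_of_nonneg h1 fun _ _ _ => by positivity
      _ = ∑ j ∈ Finset.Ioc 0 m, ∑ p ∈ Irr K j, (((qK K : ℝ)⁻¹) ^ p.natDegree) ^ 2 := by
          refine Finset.sum_biUnion ?_
          intro i _ j _ hij
          rw [Function.onFun, Finset.disjoint_left]
          intro p hp hp'
          exact hij ((mem_Irr.1 hp).2.2.symm.trans (mem_Irr.1 hp').2.2)
      _ ≤ ∑ j ∈ Finset.Ioc 0 m, ((qK K : ℝ) ^ j)⁻¹ := by
          refine Finset.sum_le_sum fun j _ => ?_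
          rw [Finset.sum_congr rfl fun p hp => by rw [(mem_Irr.1 hp).2.2], Finset.sum_const, nsmul_eq_mul]
          have h7 : ((Irr K j).card : ℝ) ≤ (qK K : ℝ) ^ j := by exact_mod_cast card_Irr j
          calc ((Irr K j).card : ℝ) * (((qK K : ℝ)⁻¹) ^ j) ^ 2 ≤ (qK K : ℝ) ^ j * (((qK K : ℝ)⁻¹) ^ j) ^ 2 := by
                gcongr
            _ = _ := by rw [inv_pow]; field_simp
      _ ≤ ((qK K : ℝ) ^ 0)⁻¹ := geom_tail hq 0 m
      _ = 1 := by simp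
  exact (HasSum.sum (f := fun c : {p : K[X] // p.Monic ∧ Irreducible p} ⊕ Unit =>
    (((qK K : ℝ)⁻¹) ^ cpDeg (K := K) c) ^ 2) key.hasSum (hasSum_fintype _)).summable

lemma euler_multipliable : Multipliable fun c : ClosedPoint K => tauFactor (qK K) 3 (cpDeg c) := by
  have hq := two_le_qR (K := K)
  have h : Summable fun c : ClosedPoint K => ‖tauFactor (qK K) 3 (cpDeg c) - 1‖ := by
    refine Summable.of_nonneg_of_le (fun _ => norm_nonneg _) (fun c => ?_) (summable_cp.mul_left 100)
    rw [Real.norm_eq_abs, tauFactor]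
    have := tau_sub_one (x := ((qK K : ℝ)⁻¹) ^ cpDeg c) (by positivity)
      (pow_le_one₀ (by positivity) (inv_le_one_of_one_le₀ (by linarith)))
    convert this using 3
    push_cast
    ring
  have := multipliable_one_add_of_summable h
  simpa using this

/-- The torsor count is asymptotic to `q ^ (h(α) + 7)` times the Euler product, uniformly in the class. -/
theorem asymp (γ γ' : Fin 3 → K) (hγ : ∀ i, γ i ≠ 0) (hγ' : ∀ i, γ' i ≠ 0) (δ : ℝ) (hδ : 0 < δ) :
    ∃ H : ℕ, ∀ (k : Fin 3 → ℕ) (a a' n : ℕ), Par k a a' n H →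
      (H : ℝ) * (qK K * 8 ^ (a + a' + 2)) ≤ (qK K : ℝ) ^ n →
      |(cX γ γ' k a a' : ℝ) - (qK K : ℝ) ^ (2 * a + 2 * a' - ∑ i, k i + 7) *
        ∏' c : ClosedPoint K, tauFactor (qK K) 3 (cpDeg c)| ≤
      δ * (qK K : ℝ) ^ (2 * a + 2 * a' - ∑ i, k i + 7) := by
  have hq := two_le_qR (K := K)
  have hq0 : (0:ℝ) < qK K := by linarith
  have small : ∀ e : ℝ, 0 < e → ∃ D : ℕ, 1 / (qK K : ℝ) ^ D < e := by
    intro e he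
    obtain ⟨D, hD⟩ := exists_pow_lt_of_lt_one he (inv_lt_one_of_one_lt₀ (by linarith : (1:ℝ) < qK K))
    exact ⟨D, by simpa using hD⟩
  have hp := (Metric.tendsto_atTop.1 (euler_multipliable (K := K)).hasProd) (δ / 4) (by positivity)
  obtain ⟨P0, hP0⟩ := hp
  obtain ⟨D0, hD0⟩ := small (δ / 56) (by positivity)
  obtain ⟨H0, hH0⟩ := small (δ / 24) (by positivity)
  set D := max D0 (P0.sup cpDeg) with hDdef
  set P := cpUpTo K D
  have hPP : P0 ⊆ P := fun c hc => mem_cpUpTo_of_le ((Finset.le_sup hc).trans (le_max_right _ _))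
  obtain ⟨H1, hH1⟩ := exists_nat_gt (40 / δ)
  refine ⟨max (max (sdeg P) H0) H1, ?_⟩
  intro k a a' n hH hn
  have hmono : ∀ {x y : ℕ}, x ≤ y → 1 / (qK K : ℝ) ^ y ≤ 1 / (qK K : ℝ) ^ x := by
    intro x y h
    have : (qK K : ℝ) ^ x ≤ (qK K : ℝ) ^ y := pow_le_pow_right₀ (by linarith) h
    exact one_div_le_one_div_of_le (by positivity) this
  set H := max (max (sdeg P) H0) H1 with hHd
  have m := main_bound (P := P) (D := D) (inr_mem_cpUpTo D) hγ hγ' hH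
    ((le_max_left _ _).trans (le_max_left _ _)) (fun c hc => by
      by_contra h; exact hc (mem_cpUpTo_of_le (not_lt.1 h)))
  obtain ⟨T, hTd⟩ : ∃ T, T = (qK K : ℝ) ^ (2 * a + 2 * a' - ∑ i, k i + 7) := ⟨_, rfl⟩
  have hT0 : 0 ≤ T := by rw [hTd]; positivity
  rw [← hTd] at m ⊢
  have b1 : 14 / (qK K : ℝ) ^ D ≤ δ / 4 := by
    have := (hmono (le_max_left D0 (P0.sup cpDeg))).trans hD0.le
    rw [← hDdef] at this
    calc 14 / (qK K : ℝ) ^ D = 14 * (1 / (qK K : ℝ) ^ D) := by ring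
      _ ≤ 14 * (δ / 56) := by gcongr
      _ = δ / 4 := by ring
  have b2 : 6 / (qK K : ℝ) ^ H ≤ δ / 4 := by
    have := (hmono ((le_max_right (sdeg P) H0).trans (le_max_left _ H1))).trans hH0.le
    rw [← hHd] at this
    calc 6 / (qK K : ℝ) ^ H = 6 * (1 / (qK K : ℝ) ^ H) := by ring
      _ ≤ 6 * (δ / 24) := by gcongr
      _ = δ / 4 := by ring
  have b3 : 10 * (qK K * 8 ^ (a + a' + 2)) / (qK K : ℝ) ^ n ≤ δ / 4 := by
    rw [div_le_iff₀ (by positivity)]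
    have h1 : 40 / δ ≤ H := hH1.le.trans (by exact_mod_cast le_max_right _ _)
    have h2 : 40 ≤ H * δ := by rwa [div_le_iff₀ hδ] at h1
    have h3 : (0:ℝ) < qK K * 8 ^ (a + a' + 2) := by positivity
    have h4 := mul_le_mul_of_nonneg_right h2 h3.le
    have h5 := mul_le_mul_of_nonneg_left hn hδ.le
    linarith
  have b4 : |∏ c ∈ P, tauFactor (qK K) 3 (cpDeg c) - ∏' c : ClosedPoint K, tauFactor (qK K) 3 (cpDeg c)| ≤ δ / 4 := by
    have := hP0 P hPP
    rw [Real.dist_eq] at this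
    exact this.le
  have e : (cX γ γ' k a a' : ℝ) - T * ∏' c : ClosedPoint K, tauFactor (qK K) 3 (cpDeg c) =
    ((cX γ γ' k a a' : ℝ) - T * ∏ c ∈ P, tauFactor (qK K) 3 (cpDeg c)) +
    T * (∏ c ∈ P, tauFactor (qK K) 3 (cpDeg c) - ∏' c : ClosedPoint K, tauFactor (qK K) 3 (cpDeg c)) := by ring
  rw [e]
  refine (abs_add_le _ _).trans ?_
  rw [abs_mul, abs_of_nonneg hT0]
  have s1 := mul_le_mul_of_nonneg_left (add_le_add (add_le_add b1 b2) b3) hT0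
  have s2 := mul_le_mul_of_nonneg_left b4 hT0
  linarith
end dP5

/-! ### Dehomogenisation of binary forms -/

namespace dP5
open Polynomial
open scoped Classical
variable {K : Type} [Field K]

/-- Dehomogenisation of a binary form: `u` becomes the variable and `v = 1`. -/
abbrev deh (F : BForm K) : K[X] := MvPolynomial.aeval ![X, 1] F

lemma deh_hom {n : ℕ} {f : K[X]} (h : f.natDegree ≤ n) : deh (f.homogenize n) = f :=
  aeval_homogenize_X_one f h

lemma hom_deh {n : ℕ} {F : BForm K} (h : F.IsHomogeneous n) : (deh F).homogenize n = F :=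
  homogenize_eq_of_isHomogeneous h rfl

lemma natDegree_deh {n : ℕ} {F : BForm K} (h : F.IsHomogeneous n) : (deh F).natDegree ≤ n := by
  refine natDegree_le_iff_coeff_eq_zero.2 fun N hN => ?_
  have : ∀ G : BForm K, G.totalDegree ≤ n → (deh G).coeff N = 0 := by
    intro G hG
    rw [deh, MvPolynomial.aeval_def, MvPolynomial.eval₂_eq', finsetSum_coeff]
    refine Finset.sum_eq_zero fun d hd => ?_
    have h1 := (MvPolynomial.le_totalDegree hd).trans hG
    rw [Finsupp.sum_fintype _ _ (fun _ => rfl), Fin.sum_univ_two] at h1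
    rw [Fin.prod_univ_two, ← C_eq_algebraMap, coeff_C_mul]
    simp [coeff_X_pow]
    intro h; omega
  exact this F h.totalDegree_le

lemma hom_mem {n : ℕ} {F : BForm K} (h : F.IsHomogeneous n) : deh F ∈ degreeLT K (n + 1) :=
  mem_degreeLT_iff.2 (Or.inr (Nat.lt_succ_of_le (natDegree_deh h)))

lemma prime_v : Prime (MvPolynomial.X 1 : BForm K) := MvPolynomial.X_prime

lemma v_dvd_hom {m : ℕ} {f : K[X]} (hf : f.natDegree ≤ m) (h0 : f.coeff m = 0) :
    (MvPolynomial.X 1 : BForm K) ∣ f.homogenize m := by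
  by_cases hz : f = 0
  · rw [hz]; simp
  have h1 : f.natDegree < m := lt_of_le_of_ne hf (by rintro rfl; exact hz (leadingCoeff_eq_zero.1 h0))
  have h2 := homogenize_mul f 1 (m := m - 1) (n := 1) (by omega) (by simp)
  rw [mul_one, Nat.sub_add_cancel (by omega), homogenize_one, pow_one] at h2
  rw [h2]
  exact Dvd.intro_left _ rfl

lemma coeff_of_v_dvd {m : ℕ} {f : K[X]} (h : (MvPolynomial.X 1 : BForm K) ∣ f.homogenize m) :
    f.coeff m = 0 := by
  obtain ⟨w, hw⟩ := h
  have h1 := congrArg (MvPolynomial.coeff (Finsupp.single 0 m)) hw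
  rw [coeff_homogenize, MvPolynomial.coeff_X_mul'] at h1
  simpa using h1

lemma hom_dvd {m e : ℕ} {p f : K[X]} (hp : p.natDegree ≤ e) (hp0 : p ≠ 0) (hpe : p.natDegree = e) (hf : f.natDegree ≤ m) (h : p ∣ f) :
    p.homogenize e ∣ f.homogenize m := by
  obtain ⟨r, rfl⟩ := h
  by_cases hr : r = 0
  · simp [hr]
  rw [natDegree_mul hp0 hr] at hf
  have h2 := homogenize_mul p r (m := e) (n := m - e) hp (by omega)
  rw [Nat.add_sub_cancel' (by omega)] at h2
  rw [h2]
  exact dvd_mul_right _ _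

/-- Two binary forms are coprime iff they do not vanish together at a closed point. -/
lemma relPrime_iff {m m' : ℕ} {f f' : K[X]} (hf : f.natDegree ≤ m) (hf' : f'.natDegree ≤ m') :
    IsRelPrime (f.homogenize m) (f'.homogenize m') ↔
      ∀ c : ClosedPoint K, ¬ (red c m f = 0 ∧ red c m' f' = 0) := by
  constructor
  · rintro h (p | u) ⟨h1, h2⟩
    · rw [red_inl_eq_zero] at h1 h2
      have := h (hom_dvd le_rfl p.2.2.ne_zero rfl hf h1) (hom_dvd le_rfl p.2.2.ne_zero rfl hf' h2)
      have h3 := this.map (MvPolynomial.aeval (R := K) ![(X : K[X]), 1])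
      have h4 := deh_hom (K := K) (f := p.1) le_rfl
      rw [deh] at h4
      rw [h4] at h3
      exact p.2.2.not_isUnit h3
    · rw [red_inr_eq_zero] at h1 h2
      exact prime_v.not_isUnit (h (v_dvd_hom hf h1) (v_dvd_hom hf' h2))
  · intro h d hd hd'
    have hcop : IsCoprime f f' := by
      refine isCoprime_of_irreducible_dvd ?_ fun z hz h1 h2 => ?_
      · rintro ⟨rfl, rfl⟩
        exact h (Sum.inr ()) ⟨by simp, by simp⟩
      · obtain ⟨c, hc⟩ := exists_monic_dvd hz
        exact h (Sum.inl c) ⟨(red_inl_eq_zero c _ _).2 (hc.dvd_iff_dvd_left.1 h1),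
          (red_inl_eq_zero c _ _).2 (hc.dvd_iff_dvd_left.1 h2)⟩
    obtain ⟨A, B, hAB⟩ := hcop
    have hv : d ∣ (MvPolynomial.X 1 : BForm K) ^ (A.natDegree + B.natDegree + m + m') := by
      rw [← homogenize_one, ← hAB, homogenize_add]
      refine dvd_add ?_ ?_
      · have := homogenize_mul A f (m := A.natDegree + B.natDegree + m') (n := m) (by omega) hf
        rw [show A.natDegree + B.natDegree + m + m' = A.natDegree + B.natDegree + m' + m by ring, this]
        exact hd.mul_left _
      · have := homogenize_mul B f' (m := A.natDegree + B.natDegree + m) (n := m') (by omega) hf'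
        rw [this]
        exact hd'.mul_left _
    obtain ⟨i, -, hi⟩ := (dvd_prime_pow prime_v _).1 hv
    rcases Nat.eq_zero_or_pos i with rfl | hi0
    · rw [pow_zero] at hi
      exact hi.symm.isUnit isUnit_one
    · exfalso
      have hx : (MvPolynomial.X 1 : BForm K) ∣ d := (dvd_pow_self _ hi0.ne').trans hi.symm.dvd
      exact h (Sum.inr ()) ⟨(red_inr_eq_zero _ _ _).2 (coeff_of_v_dvd (hx.trans hd)),
        (red_inr_eq_zero _ _ _).2 (coeff_of_v_dvd (hx.trans hd'))⟩

/-- A factor of a form whose cofactor is a form is a form. -/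
lemma cofactor_homogeneous {n m : ℕ} {F g y : BForm K} (hF : F.IsHomogeneous n) (hg : g.IsHomogeneous m)
    (h : F = g * y) (h0 : F ≠ 0) : m ≤ n ∧ y.IsHomogeneous (n - m) := by
  have hg0 : g ≠ 0 := by rintro rfl; simp at h; exact h0 h
  have h1 := congrArg (MvPolynomial.homogeneousComponent n) h
  rw [MvPolynomial.homogeneousComponent_eq_self hF, ← MvPolynomial.sum_homogeneousComponent y,
    Finset.mul_sum, map_sum] at h1
  have h2 : ∀ j, MvPolynomial.homogeneousComponent n (g * MvPolynomial.homogeneousComponent j y) =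
      if m + j = n then g * MvPolynomial.homogeneousComponent j y else 0 := fun j => by
    rw [MvPolynomial.homogeneousComponent_of_mem
      (hg.mul (MvPolynomial.homogeneousComponent_isHomogeneous j y))]
    simp only [eq_comm]
  simp only [h2] at h1
  rw [Finset.sum_ite, Finset.sum_const_zero, add_zero] at h1
  by_cases hmn : m ≤ n
  · refine ⟨hmn, ?_⟩
    have h3 : F = g * ∑ j ∈ (Finset.range (y.totalDegree + 1)).filter (fun j => m + j = n),
        MvPolynomial.homogeneousComponent j y := by rw [h1, Finset.mul_sum]
    have h4 := mul_left_cancel₀ hg0 (h ▸ h3)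
    rw [h4]
    refine MvPolynomial.IsHomogeneous.sum _ _ _ fun j hj => ?_
    have h5 := (Finset.mem_filter.1 hj).2
    obtain rfl : j = n - m := by omega
    exact MvPolynomial.homogeneousComponent_isHomogeneous _ y
  · exfalso
    apply h0
    rw [h1]
    refine Finset.sum_eq_zero fun j hj => ?_
    have h5 := (Finset.mem_filter.1 hj).2
    omega

end dP5

/-! ### The universal torsor -/

namespace dP5
open Polynomial
open scoped Classical
variable {K : Type} [Field K]

/-- The coefficients `c (i + 1) - c (i + 2)` (indices mod 3) of the linear relation between the three forms
`s₁ - c i * s₂`. -/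
def gam (c : Fin 3 → K) : Fin 3 → K := fun i => c (i + 1) - c (i + 2)

lemma gam_ne {c : Fin 3 → K} (hc : Function.Injective c) (i : Fin 3) : gam c i ≠ 0 := by
  intro h
  have := hc (sub_eq_zero.1 h)
  exact (by decide : ∀ j : Fin 3, j + 1 ≠ j + 2) i this

/-- `(g, y, y')` is a lift to the universal torsor of the quadruple `x = (s₁, s₂, t₁, t₂)`:
`s₁ - c i * s₂ = g i * y i` and `t₁ - c' i * t₂ = g i * y' i` after dehomogenisation, with `y i` and
`y' i` coprime as forms. -/
structure Tors (c c' : Fin 3 → K) (a a' : ℕ) (k : Fin 3 → ℕ) (x : BForm K × BForm K × BForm K × BForm K)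
    (g y y' : Fin 3 → K[X]) : Prop where
  gd : ∀ i, g i ∈ degreeLT K (k i + 1)
  yd : ∀ i, y i ∈ degreeLT K (a - k i + 1)
  yd' : ∀ i, y' i ∈ degreeLT K (a' - k i + 1)
  g0 : ∀ i, g i ≠ 0
  y0 : ∀ i, y i ≠ 0
  y0' : ∀ i, y' i ≠ 0
  F : ∀ i, deh x.1 - C (c i) * deh x.2.1 = g i * y i
  F' : ∀ i, deh x.2.2.1 - C (c' i) * deh x.2.2.2 = g i * y' i
  rp : ∀ i, IsRelPrime ((y i).homogenize (a - k i)) ((y' i).homogenize (a' - k i))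

lemma nd {n : ℕ} {f : K[X]} (h : f ∈ degreeLT K (n + 1)) : f.natDegree ≤ n := by
  have := natDegree_le_of_mem h; simpa using this

lemma dvd_of_relPrime {g y y' d : BForm K} (h : IsRelPrime y y') (h1 : d ∣ g * y) (h2 : d ∣ g * y') :
    d ∣ g := by
  letI : GCDMonoid (BForm K) := UniqueFactorizationMonoid.toGCDMonoid _
  have h3 : d ∣ gcd (g * y) (g * y') := dvd_gcd h1 h2
  have h4 : IsUnit (gcd y y') := h (gcd_dvd_left _ _) (gcd_dvd_right _ _)
  exact (h3.trans (gcd_mul_left' g y y').dvd).trans (h4.mul_right_dvd.2 dvd_rfl)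

variable {c c' : Fin 3 → K} {a a' : ℕ} {k : Fin 3 → ℕ} {x : BForm K × BForm K × BForm K × BForm K}
  {g y y' : Fin 3 → K[X]}

lemma form_sub (s t : BForm K) (e : K) :
    deh (s - MvPolynomial.C e * t) = deh s - C e * deh t := by
  simp [deh]

lemma deh_inj {n : ℕ} {F G : BForm K} (hF : F.IsHomogeneous n) (hG : G.IsHomogeneous n) (h : deh F = deh G) : F = G := by
  rw [← hom_deh hF, ← hom_deh hG, h]

lemma Tors.eqF (h : Tors c c' a a' k x g y y') (hk : ∀ i, k i ≤ a)
    (h1 : x.1.IsHomogeneous a) (h2 : x.2.1.IsHomogeneous a) (i : Fin 3) :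
    x.1 - MvPolynomial.C (c i) * x.2.1 = (g i).homogenize (k i) * (y i).homogenize (a - k i) := by
  have h3 := homogenize_mul (g i) (y i) (nd (h.gd i)) (nd (h.yd i))
  rw [Nat.add_sub_cancel' (hk i), ← h.F i, ← form_sub] at h3
  rw [← h3, hom_deh]
  refine h1.sub ?_
  have := (MvPolynomial.isHomogeneous_C (Fin 2) (c i)).mul h2
  rwa [zero_add] at this

lemma Tors.eqF' (h : Tors c c' a a' k x g y y') (hk : ∀ i, k i ≤ a')
    (h1 : x.2.2.1.IsHomogeneous a') (h2 : x.2.2.2.IsHomogeneous a') (i : Fin 3) :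
    x.2.2.1 - MvPolynomial.C (c' i) * x.2.2.2 = (g i).homogenize (k i) * (y' i).homogenize (a' - k i) := by
  have h3 := homogenize_mul (g i) (y' i) (nd (h.gd i)) (nd (h.yd' i))
  rw [Nat.add_sub_cancel' (hk i), ← h.F' i, ← form_sub] at h3
  rw [← h3, hom_deh]
  refine h1.sub ?_
  have := (MvPolynomial.isHomogeneous_C (Fin 2) (c' i)).mul h2
  rwa [zero_add] at this

lemma homog_sub {n : ℕ} {s t : BForm K} (h1 : s.IsHomogeneous n) (h2 : t.IsHomogeneous n) (e : K) :
    (s - MvPolynomial.C e * t).IsHomogeneous n := by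
  refine h1.sub ?_
  have := (MvPolynomial.isHomogeneous_C (Fin 2) e).mul h2
  rwa [zero_add] at this

/-- Every quadruple lifts: `g i` is the given gcd. -/
lemma exists_tors (hx : x ∈ MtildeSet K 3 c c' a a' k) : ∃ g y y', Tors c c' a a' k x g y y' := by
  obtain ⟨h1, h2, h3, h4, -, -, h7⟩ := hx
  choose n1 n2 G hG hd hd' hu using h7
  choose Y hY using hd
  choose Y' hY' using hd'
  have hy := fun i => cofactor_homogeneous (homog_sub h1 h2 (c i)) (hG i) (hY i) (n1 i)
  have hy' := fun i => cofactor_homogeneous (homog_sub h3 h4 (c' i)) (hG i) (hY' i) (n2 i)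
  have G0 : ∀ i, G i ≠ 0 := fun i h => n1 i (by rw [hY i, h, zero_mul])
  have Y0 : ∀ i, Y i ≠ 0 := fun i h => n1 i (by rw [hY i, h, mul_zero])
  have Y0' : ∀ i, Y' i ≠ 0 := fun i h => n2 i (by rw [hY' i, h, mul_zero])
  have ne : ∀ {n : ℕ} {F : BForm K}, F.IsHomogeneous n → F ≠ 0 → deh F ≠ 0 := fun hF h0 h =>
    h0 (deh_inj hF (MvPolynomial.isHomogeneous_zero _ _ _) (by rw [h]; simp [deh]))
  refine ⟨fun i => deh (G i), fun i => deh (Y i), fun i => deh (Y' i), fun i => hom_mem (hG i),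
    fun i => hom_mem (hy i).2, fun i => hom_mem (hy' i).2, fun i => ne (hG i) (G0 i),
    fun i => ne (hy i).2 (Y0 i), fun i => ne (hy' i).2 (Y0' i), fun i => ?_, fun i => ?_, fun i => ?_⟩
  · rw [← form_sub, hY i]; exact map_mul _ _ _
  · rw [← form_sub, hY' i]; exact map_mul _ _ _
  · rw [hom_deh (hy i).2, hom_deh (hy' i).2]
    intro d e1 e2
    have := hu i (G i * d) (by rw [hY i]; exact mul_dvd_mul_left _ e1) (by rw [hY' i]; exact mul_dvd_mul_left _ e2)
    exact isUnit_of_dvd_one ((mul_dvd_mul_iff_left (G0 i)).1 (by rwa [mul_one]))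

/-- The lift is unique up to the action of the torus `(K^×)³`. -/
lemma tors_unique (hk : ∀ i, k i ≤ a) (hk' : ∀ i, k i ≤ a') (hx : x ∈ MtildeSet K 3 c c' a a' k)
    {g2 y2 y2' : Fin 3 → K[X]} (h : Tors c c' a a' k x g y y') (h2 : Tors c c' a a' k x g2 y2 y2') :
    ∃ u : Fin 3 → Kˣ, (fun i => C (u i : K) * g i) = g2 ∧ (fun i => C ((u i)⁻¹ : K) * y i) = y2 ∧
      (fun i => C ((u i)⁻¹ : K) * y' i) = y2' := by
  obtain ⟨m1, m2, m3, m4, -⟩ := hx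
  have key : ∀ {g y y' g2 y2 y2' : Fin 3 → K[X]}, Tors c c' a a' k x g y y' → Tors c c' a a' k x g2 y2 y2' → ∀ i,
      (g i).homogenize (k i) ∣ (g2 i).homogenize (k i) := by
    intro g y y' g2 y2 y2' h h2 i
    refine dvd_of_relPrime (h2.rp i) ?_ ?_
    · rw [← h2.eqF hk m1 m2, h.eqF hk m1 m2]; exact dvd_mul_right _ _
    · rw [← h2.eqF' hk' m3 m4, h.eqF' hk' m3 m4]; exact dvd_mul_right _ _
  have hu : ∀ i, ∃ u : Kˣ, C (u : K) * g i = g2 i := by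
    intro i
    obtain ⟨v, hv⟩ := associated_of_dvd_dvd (key h h2 i) (key h2 h i)
    have e := congrArg (deh (K := K)) hv
    rw [deh, deh, map_mul] at e
    have e1 := deh_hom (nd (h.gd i))
    have e2 := deh_hom (nd (h2.gd i))
    rw [deh] at e1 e2
    rw [e1, e2] at e
    obtain ⟨w, hw, hw'⟩ := isUnit_iff.1 (v.isUnit.map (MvPolynomial.aeval (R := K) ![(X : K[X]), 1]))
    refine ⟨hw.unit, ?_⟩
    rw [← e, ← hw']; simp [mul_comm]
  choose u hu using hu
  have aux : ∀ i, ∀ {z z2 : K[X]}, g i * z = g2 i * z2 → C ((u i)⁻¹ : K) * z = z2 := by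
    intro i z z2 e
    rw [← hu i, mul_comm (C _) (g i), mul_assoc] at e
    rw [mul_left_cancel₀ (h.g0 i) e, ← mul_assoc, ← C_mul]
    simp
  refine ⟨u, funext hu, funext fun i => aux i ?_, funext fun i => aux i ?_⟩
  · rw [← h.F, ← h2.F]
  · rw [← h.F', ← h2.F']

lemma C_mul_mem {n : ℕ} {f : K[X]} (e : K) (h : f ∈ degreeLT K n) : C e * f ∈ degreeLT K n := by
  rw [← smul_eq_C_mul]; exact Submodule.smul_mem _ _ h

lemma Tors.smul (h : Tors c c' a a' k x g y y') (u : Fin 3 → Kˣ) :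
    Tors c c' a a' k x (fun i => C (u i : K) * g i) (fun i => C ((u i)⁻¹ : K) * y i)
      (fun i => C ((u i)⁻¹ : K) * y' i) := by
  have hu : ∀ i, (C (u i : K) : K[X]) ≠ 0 := fun i => C_ne_zero.2 (u i).ne_zero
  have hu' : ∀ i, (C ((u i)⁻¹ : K) : K[X]) ≠ 0 := fun i => C_ne_zero.2 (inv_ne_zero (u i).ne_zero)
  have e : ∀ i (z : K[X]), g i * z = C (u i : K) * g i * (C ((u i)⁻¹ : K) * z) := by
    intro i z
    have : (C (u i : K) : K[X]) * C ((u i)⁻¹ : K) = 1 := by rw [← C_mul]; simp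
    linear_combination (-(g i * z)) * this
  refine ⟨fun i => C_mul_mem _ (h.gd i), fun i => C_mul_mem _ (h.yd i), fun i => C_mul_mem _ (h.yd' i),
    fun i => mul_ne_zero (hu i) (h.g0 i), fun i => mul_ne_zero (hu' i) (h.y0 i),
    fun i => mul_ne_zero (hu' i) (h.y0' i), fun i => by rw [h.F, e], fun i => by rw [h.F', e], fun i => ?_⟩
  rw [homogenize_C_mul, homogenize_C_mul]
  have hv : IsUnit (MvPolynomial.C ((u i)⁻¹ : K) : BForm K) := (IsUnit.mk0 _ (inv_ne_zero (u i).ne_zero)).map _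
  exact (isRelPrime_mul_unit_left_left hv).2 ((isRelPrime_mul_unit_left_right hv).2 (h.rp i))

lemma tors_inj (hc : Function.Injective c) (hc' : Function.Injective c') {x2 : BForm K × BForm K × BForm K × BForm K}
    (hx : x ∈ MtildeSet K 3 c c' a a' k) (hx2 : x2 ∈ MtildeSet K 3 c c' a a' k)
    (h : Tors c c' a a' k x g y y') (h2 : Tors c c' a a' k x2 g y y') : x = x2 := by
  obtain ⟨m1, m2, m3, m4, -⟩ := hx
  obtain ⟨l1, l2, l3, l4, -⟩ := hx2
  have key : ∀ {c : Fin 3 → K}, Function.Injective c → ∀ {s t s2 t2 : K[X]} {F : Fin 3 → K[X]},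
      (∀ i, s - C (c i) * t = F i) → (∀ i, s2 - C (c i) * t2 = F i) → s = s2 ∧ t = t2 := by
    intro c hc s t s2 t2 F e1 e2
    have a0 := (e1 0).trans (e2 0).symm
    have a1 := (e1 1).trans (e2 1).symm
    have h0 : (C (c 0) - C (c 1) : K[X]) * (t - t2) = 0 := by linear_combination a1 - a0
    rw [← C_sub, mul_eq_zero, C_eq_zero, sub_eq_zero, sub_eq_zero] at h0
    have ht := h0.resolve_left fun h => by simpa using hc h
    subst ht
    exact ⟨by linear_combination a0, rfl⟩
  obtain ⟨k1, k2⟩ := key hc h.F h2.F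
  obtain ⟨k3, k4⟩ := key hc' h.F' h2.F'
  exact Prod.ext (deh_inj m1 l1 k1) (Prod.ext (deh_inj m2 l2 k2) (Prod.ext (deh_inj m3 l3 k3) (deh_inj m4 l4 k4)))

variable [Fintype K]

/-- A lift of a quadruple is a point of the torsor. -/
lemma tors_mem (hc : Function.Injective c) (hc' : Function.Injective c') (hk : ∀ i, k i ≤ a) (hk' : ∀ i, k i ≤ a') (hx : x ∈ MtildeSet K 3 c c' a a' k)
    (h : Tors c c' a a' k x g y y') :
    (⟨g, (y, y')⟩ : Σ _ : (Fin 3 → K[X]), (Fin 3 → K[X]) × (Fin 3 → K[X])) ∈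
      ((GF K k).filter (fun g => ∀ i, g i ≠ 0)).sigma (Fib (gam c) (gam c') k a a') := by
  obtain ⟨m1, m2, m3, m4, r1, r2, -⟩ := hx
  have rel : ∀ {c : Fin 3 → K} {s t : K[X]} {F : Fin 3 → K[X]}, (∀ i, s - C (c i) * t = F i) →
      ∑ i, C (gam c i) * F i = 0 := by
    intro c s t F e
    rw [Fin.sum_univ_three, ← e, ← e, ← e]
    simp only [gam, C_sub]
    simp only [Fin.isValue, zero_add, show (1 : Fin 3) + 1 = 2 from rfl, show (1 : Fin 3) + 2 = 0 from rfl,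
      show (2 : Fin 3) + 1 = 0 from rfl, show (2 : Fin 3) + 2 = 1 from rfl]
    ring
  have lam : ∀ {c : Fin 3 → K} {a : ℕ} {y : Fin 3 → K[X]} {s t : K[X]}, (∀ i, k i ≤ a) →
      (∀ i, y i ∈ degreeLT K (a - k i + 1)) → (∀ i, y i ≠ 0) → (∀ i, s - C (c i) * t = g i * y i) →
      y ∈ LamNZ k (tw (gam c) g) (a + 1) := by
    intro c a y s t hk hy h0 e
    refine mem_LamNZ.2 ⟨mem_Lam.2 ⟨fun i => ?_, ?_⟩, h0⟩
    · rw [Nat.sub_add_comm (hk i)]; exact hy i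
    · rw [← rel e]
      refine Finset.sum_congr rfl fun i _ => ?_
      rw [tw, mul_assoc]
  have z1 := lam hk h.yd h.y0 h.F
  have z2 := lam hk' h.yd' h.y0' h.F'
  have nv : ∀ {c : Fin 3 → K} {a : ℕ} {y : Fin 3 → K[X]} {s t : BForm K}, Function.Injective c → (∀ i, k i ≤ a) →
      s.IsHomogeneous a → t.IsHomogeneous a → (∀ d, d ∣ s → d ∣ t → IsUnit d) →
      (∀ i, y i ∈ degreeLT K (a - k i + 1)) → (∀ i, deh s - C (c i) * deh t = g i * y i) → ∀ p : ClosedPoint K,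
      ∃ i, redT p k g i * redT p (fun i => a - k i) y i ≠ 0 := by
    intro c a y s t hc hk hs ht hr hy e p
    by_contra hcon
    push Not at hcon
    have h0 : ∀ i, red p a (deh s - C (c i) * deh t) = 0 := by
      intro i
      have h1 := red_mul p (h.gd i) (hy i)
      rw [Nat.add_sub_cancel' (hk i)] at h1
      rw [e, h1]
      exact hcon i
    have h2 : red p a (deh t) = 0 := by
      have h3 : red p a (C (c 0 - c 1) * deh t) = 0 := by
        rw [show C (c 0 - c 1) * deh t = (deh s - C (c 1) * deh t) - (deh s - C (c 0) * deh t) by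
          rw [C_sub]; ring, map_sub, h0, h0, sub_zero]
      rw [red_C_mul, mul_eq_zero, algMap_eq_zero, sub_eq_zero] at h3
      exact h3.resolve_left fun h => by simpa using hc h
    have h4 : red p a (deh s) = 0 := by
      have h3 := h0 0
      rwa [map_sub, red_C_mul, h2, mul_zero, sub_zero] at h3
    have h5 := (relPrime_iff (natDegree_deh hs) (natDegree_deh ht)).1 (by
      rw [hom_deh hs, hom_deh ht]; exact fun d => hr d) p
    exact h5 ⟨h4, h2⟩
  refine Finset.mem_sigma.2 ⟨Finset.mem_filter.2 ⟨mem_GF.2 h.gd, h.g0⟩, Finset.mem_filter.2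
    ⟨Finset.mem_product.2 ⟨z1, z2⟩, fun p => ⟨red_rel hk h.gd (mem_LamNZ.1 z1).1 p,
      red_rel hk' h.gd (mem_LamNZ.1 z2).1 p, nv hc hk m1 m2 r1 h.yd h.F p, nv hc' hk' m3 m4 r2 h.yd' h.F' p,
      fun i => (relPrime_iff (nd (h.yd i)) (nd (h.yd' i))).1 (h.rp i) p⟩⟩⟩

/-- Every point of the torsor comes from a quadruple: by the linear relation, `s₁` and `s₂` are recovered
from two of the three products. -/
lemma mem_tors (hc : Function.Injective c) (hc' : Function.Injective c') (hk : ∀ i, k i ≤ a) (hk' : ∀ i, k i ≤ a')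
    (h : (⟨g, (y, y')⟩ : Σ _ : (Fin 3 → K[X]), (Fin 3 → K[X]) × (Fin 3 → K[X])) ∈
      ((GF K k).filter (fun g => ∀ i, g i ≠ 0)).sigma (Fib (gam c) (gam c') k a a')) :
    ∃ x ∈ MtildeSet K 3 c c' a a' k, Tors c c' a a' k x g y y' := by
  obtain ⟨h1, h2⟩ := Finset.mem_sigma.1 h
  obtain ⟨h2, h3⟩ := Finset.mem_filter.1 h2
  obtain ⟨h4, h5⟩ := Finset.mem_product.1 h2
  obtain ⟨gd, g0⟩ := Finset.mem_filter.1 h1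
  have gd := mem_GF.1 gd
  obtain ⟨h4, y0⟩ := mem_LamNZ.1 h4
  obtain ⟨h5, y0'⟩ := mem_LamNZ.1 h5
  simp only at h4 y0 h5 y0' h3 gd g0
  have yd : ∀ {a : ℕ} {G y : Fin 3 → K[X]}, (∀ i, k i ≤ a) → y ∈ Lam k G (a + 1) → ∀ i, y i ∈ degreeLT K (a - k i + 1) := by
    intro a G y hk h i
    rw [← Nat.sub_add_comm (hk i)]; exact (mem_Lam.1 h).1 i
  have deg : ∀ {a : ℕ} {y : Fin 3 → K[X]}, (∀ i, k i ≤ a) → (∀ i, y i ∈ degreeLT K (a - k i + 1)) → ∀ i,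
      g i * y i ∈ degreeLT K (a + 1) := by
    intro a y hk hy i
    refine mem_degreeLT_iff.2 (Or.inr ?_)
    have e1 := nd (gd i)
    have e2 := nd (hy i)
    have e3 := natDegree_mul_le (p := g i) (q := y i)
    have := hk i
    omega
  have mk : ∀ {c : Fin 3 → K} {a : ℕ} {y : Fin 3 → K[X]}, Function.Injective c → (∀ i, k i ≤ a) →
      y ∈ Lam k (tw (gam c) g) (a + 1) →
      (∀ p : ClosedPoint K, ∃ i, redT p k g i * redT p (fun i => a - k i) y i ≠ 0) →
      ∃ s t : BForm K, s.IsHomogeneous a ∧ t.IsHomogeneous a ∧ (∀ d, d ∣ s → d ∣ t → IsUnit d) ∧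
      ∀ i, deh s - C (c i) * deh t = g i * y i := by
    intro c a y hc hk hy hv
    have hyd := deg hk (yd hk hy)
    have hrel : ∑ i, C (gam c i) * (g i * y i) = 0 := by
      rw [← hy.2]; exact Finset.sum_congr rfl fun i _ => by rw [tw, mul_assoc]
    obtain ⟨F, hF⟩ : ∃ F : Fin 3 → K[X], F = fun i => g i * y i := ⟨_, rfl⟩
    have hFi : ∀ i, g i * y i = F i := fun i => by rw [hF]
    simp only [hFi] at hyd hrel ⊢
    rw [Fin.sum_univ_three] at hrel
    simp only [gam, C_sub] at hrel
    simp only [Fin.isValue, zero_add, show (1 : Fin 3) + 1 = 2 from rfl, show (1 : Fin 3) + 2 = 0 from rfl,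
      show (2 : Fin 3) + 1 = 0 from rfl, show (2 : Fin 3) + 2 = 1 from rfl] at hrel
    have hne : c 1 - c 0 ≠ 0 := sub_ne_zero.2 fun h => by simpa using hc h
    have he : (C (c 1) - C (c 0) : K[X]) * C ((c 1 - c 0)⁻¹) = 1 := by
      rw [← C_sub, ← C_mul, mul_inv_cancel₀ hne, C_1]
    obtain ⟨T, hT⟩ : ∃ T, T = C ((c 1 - c 0)⁻¹) * (F 0 - F 1) := ⟨_, rfl⟩
    have hTd : T ∈ degreeLT K (a + 1) := by
      rw [hT]; exact C_mul_mem _ (Submodule.sub_mem _ (hyd 0) (hyd 1))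
    have hSd : F 0 + C (c 0) * T ∈ degreeLT K (a + 1) := Submodule.add_mem _ (hyd 0) (C_mul_mem _ hTd)
    have hi : ∀ i, F 0 + C (c 0) * T - C (c i) * T = F i := by
      intro i
      fin_cases i
      · simp
      · simp only [hT, Fin.mk_one, Fin.isValue]
        linear_combination (F 1 - F 0) * he
      · simp only [hT, Fin.reduceFinMk, Fin.isValue]
        linear_combination (F 2 - F 0) * he + C ((c 1 - c 0)⁻¹) * hrel
    refine ⟨(F 0 + C (c 0) * T).homogenize a, T.homogenize a, isHomogeneous_homogenize _, isHomogeneous_homogenize _, ?_, ?_⟩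
    · have := (relPrime_iff (nd hSd) (nd hTd)).2 fun p hp => ?_
      · exact fun d h1 h2 => this h1 h2
      obtain ⟨i, hi'⟩ := hv p
      apply hi'
      have e1 := red_mul p (gd i) (yd hk hy i)
      rw [Nat.add_sub_cancel' (hk i)] at e1
      rw [← e1, hFi, ← hi i, map_sub, red_C_mul, hp.1, hp.2, mul_zero, sub_zero]
    · intro i
      rw [deh_hom (nd hSd), deh_hom (nd hTd), hi]
  obtain ⟨s, t, hs, ht, r, e⟩ := mk hc hk h4 fun p => (h3 p).2.2.1
  obtain ⟨s', t', hs', ht', r', e'⟩ := mk hc' hk' h5 fun p => (h3 p).2.2.2.1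
  have tors : Tors c c' a a' k (s, t, s', t') g y y' := ⟨gd, yd hk h4, yd hk' h5, g0, y0, y0', e, e', fun i =>
    (relPrime_iff (nd (yd hk h4 i)) (nd (yd hk' h5 i))).2 fun p => (h3 p).2.2.2.2 i⟩
  refine ⟨(s, t, s', t'), ⟨hs, ht, hs', ht', r, r', fun i => ?_⟩, tors⟩
  have E := tors.eqF hk hs ht i
  have E' := tors.eqF' hk' hs' ht' i
  simp only at E E' ⊢
  have G0 : (g i).homogenize (k i) ≠ 0 := fun h => g0 i (eq_zero_of_homogenize_eq_zero (nd (gd i)) h)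
  refine ⟨?_, ?_, (g i).homogenize (k i), isHomogeneous_homogenize _, ?_, ?_, ?_⟩
  · rw [E]; exact mul_ne_zero G0 fun h => y0 i (eq_zero_of_homogenize_eq_zero (nd (yd hk h4 i)) h)
  · rw [E']; exact mul_ne_zero G0 fun h => y0' i (eq_zero_of_homogenize_eq_zero (nd (yd hk' h5 i)) h)
  · rw [E]; exact dvd_mul_right _ _
  · rw [E']; exact dvd_mul_right _ _
  · intro d d1 d2
    rw [E] at d1
    rw [E'] at d2
    exact dvd_of_relPrime (tors.rp i) d1 d2

/-- The quadruples counted with multiplicity `(q-1)^3` are the torsor points. -/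
theorem card_Mtilde (hc : Function.Injective c) (hc' : Function.Injective c') (hk : ∀ i, k i ≤ a)
    (hk' : ∀ i, k i ≤ a') :
    (MtildeSet K 3 c c' a a' k).ncard * (qK K - 1) ^ 3 = cX (gam c) (gam c') k a a' := by
  have h1 : cX (gam c) (gam c') k a a' =
      (((GF K k).filter (fun g => ∀ i, g i ≠ 0)).sigma (Fib (gam c) (gam c') k a a')).card := by
    rw [Finset.card_sigma, cX]
  have h2 : (Set.univ : Set (Fin 3 → Kˣ)).ncard = (qK K - 1) ^ 3 := by
    rw [Set.ncard_univ, Nat.card_eq_fintype_card, Fintype.card_fun, Fintype.card_units, Fintype.card_fin]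
  rw [h1, ← h2, ← Set.ncard_prod, ← Set.ncard_coe_finset]
  choose! g y y' hT using fun x (hx : x ∈ MtildeSet K 3 c c' a a' k) => exists_tors hx
  refine Set.ncard_congr (fun z _ => ⟨fun i => C (z.2 i : K) * g z.1 i, (fun i => C ((z.2 i)⁻¹ : K) * y z.1 i,
    fun i => C ((z.2 i)⁻¹ : K) * y' z.1 i)⟩) ?_ ?_ ?_
  · rintro ⟨x, u⟩ ⟨hx, -⟩
    exact Finset.mem_coe.2 (tors_mem hc hc' hk hk' hx ((hT x hx).smul u))
  · rintro ⟨x, u⟩ ⟨x2, u2⟩ ⟨hx, -⟩ ⟨hx2, -⟩ h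
    simp only [Sigma.mk.injEq, heq_eq_eq, Prod.mk.injEq] at h
    obtain ⟨e1, e2, e3⟩ := h
    have t1 := (hT x hx).smul u
    have t2 := (hT x2 hx2).smul u2
    rw [← e1, ← e2, ← e3] at t2
    obtain rfl := tors_inj hc hc' hx hx2 t1 t2
    congr 1
    funext i
    have e := congrFun e1 i
    exact Units.ext (C_injective (mul_right_cancel₀ ((hT x hx).g0 i) e))
  · rintro ⟨g2, y2, y2'⟩ hz
    obtain ⟨x, hx, t⟩ := mem_tors hc hc' hk hk' (Finset.mem_coe.1 hz)
    obtain ⟨u, e1, e2, e3⟩ := tors_unique hk hk' hx (hT x hx) t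
    exact ⟨(x, u), ⟨hx, Set.mem_univ _⟩, by simp only [e1, e2, e3]⟩

end dP5

/-! ### The nef cone and its slices -/

namespace dP5
open scoped Classical

/-- The invariants `(a, a', k)` of a class. -/
abbrev Cls := ℕ × ℕ × (Fin 3 → ℕ)

lemma inter_three (x y : Fin 5 → ℤ) :
    inter 3 x y = x 0 * y 1 + x 1 * y 0 - (x 2 * y 2 + x 3 * y 3 + x 4 * y 4) := by
  have : (Finset.univ.filter fun i : Fin (3 + 2) => 2 ≤ (i : ℕ)) = {2, 3, 4} := by decide
  rw [inter, this, Finset.sum_insert (by decide), Finset.sum_insert (by decide), Finset.sum_singleton]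
  ring

lemma minusOne_three (v : Fin 5 → ℤ) : minusOneClass 3 v ↔
    2 * (v 0 * v 1) - (v 2 * v 2 + v 3 * v 3 + v 4 * v 4) = -1 ∧
    2 * v 0 + 2 * v 1 + v 2 + v 3 + v 4 = 1 := by
  rw [minusOneClass, inter_three, inter_three]
  have e : antiK 3 0 = 2 ∧ antiK 3 1 = 2 ∧ antiK 3 2 = -1 ∧ antiK 3 3 = -1 ∧ antiK 3 4 = -1 := by decide
  obtain ⟨e0, e1, e2, e3, e4⟩ := e
  rw [e0, e1, e2, e3, e4]
  constructor <;> rintro ⟨h1, h2⟩ <;> constructor <;> linarith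

lemma inter_vecOf (x : Cls) (v : Fin 5 → ℤ) :
    inter 3 (vecOf 3 x.1 x.2.1 x.2.2) v =
      x.2.1 * v 1 + x.1 * v 0 + (x.2.2 0 * v 2 + x.2.2 1 * v 3 + x.2.2 2 * v 4) := by
  rw [inter_three]
  have e0 : vecOf 3 x.1 x.2.1 x.2.2 0 = x.2.1 := rfl
  have e1 : vecOf 3 x.1 x.2.1 x.2.2 1 = x.1 := rfl
  have e2 : vecOf 3 x.1 x.2.1 x.2.2 2 = -x.2.2 0 := rfl
  have e3 : vecOf 3 x.1 x.2.1 x.2.2 3 = -x.2.2 1 := rfl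
  have e4 : vecOf 3 x.1 x.2.1 x.2.2 4 = -x.2.2 2 := rfl
  rw [e0, e1, e2, e3, e4]; ring

/-- The exceptional classes are `eᵢ`, `f - eᵢ`, `f' - eᵢ` and `f + f' - e₁ - e₂ - e₃`. -/
lemma nef_iff (x : Cls) (h : x.2.2 0 + x.2.2 1 + x.2.2 2 ≤ x.1 + x.2.1) :
    nefVec 3 (vecOf 3 x.1 x.2.1 x.2.2) ↔ (∀ i, x.2.2 i ≤ x.1) ∧ (∀ i, x.2.2 i ≤ x.2.1) := by
  constructor
  · intro hn
    have key : ∀ v : Fin 5 → ℤ, _ → _ := fun v hv => inter_vecOf x v ▸ hn v ((minusOne_three v).2 hv)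
    have h1 := key ![1, 0, -1, 0, 0] (by decide)
    have h2 := key ![1, 0, 0, -1, 0] (by decide)
    have h3 := key ![1, 0, 0, 0, -1] (by decide)
    have h4 := key ![0, 1, -1, 0, 0] (by decide)
    have h5 := key ![0, 1, 0, -1, 0] (by decide)
    have h6 := key ![0, 1, 0, 0, -1] (by decide)
    simp at h1 h2 h3 h4 h5 h6
    constructor
    · intro i; fin_cases i <;> simp <;> omega
    · intro i; fin_cases i <;> simp <;> omega
  · rintro ⟨h1, h2⟩ v hv
    rw [inter_vecOf]
    obtain ⟨e1, e2⟩ := (minusOne_three v).1 hv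
    have a0 := h1 0; have a1 := h1 1; have a2 := h1 2
    have b0 := h2 0; have b1 := h2 1; have b2 := h2 2
    obtain ⟨a, a', k⟩ := x
    simp only at *
    generalize v 0 = p at *
    generalize v 1 = r at *
    generalize v 2 = z at *
    generalize v 3 = w at *
    generalize v 4 = u at *
    generalize k 0 = k0 at *
    generalize k 1 = k1 at *
    generalize k 2 = k2 at *
    have s1 : p + r ≤ 2 := by
      nlinarith [sq_nonneg (z - w), sq_nonneg (w - u), sq_nonneg (z - u), sq_nonneg (p - r), sq_nonneg (p + r)]
    have s2 : 0 ≤ p + r := by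
      nlinarith [sq_nonneg (z - w), sq_nonneg (w - u), sq_nonneg (z - u), sq_nonneg (p - r), sq_nonneg (p + r)]
    have s3 : 0 ≤ p * r := by
      by_contra hc
      have : p * r ≤ -1 := by omega
      nlinarith [mul_self_nonneg z, mul_self_nonneg w, mul_self_nonneg u]
    have p0 : 0 ≤ p := by by_contra hc; nlinarith
    have r0 : 0 ≤ r := by by_contra hc; nlinarith
    have p2 : p ≤ 2 := by omega
    have r2 : r ≤ 2 := by omega
    have pr : p * r ≤ 1 := by nlinarith [sq_nonneg (p - r)]
    have bd : ∀ t : ℤ, t * t ≤ 3 → -1 ≤ t ∧ t ≤ 1 := fun t ht => by constructor <;> nlinarith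
    obtain ⟨z1, z2⟩ := bd z (by nlinarith [mul_self_nonneg z, mul_self_nonneg w, mul_self_nonneg u])
    obtain ⟨w1, w2⟩ := bd w (by nlinarith [mul_self_nonneg z, mul_self_nonneg w, mul_self_nonneg u])
    obtain ⟨u1, u2⟩ := bd u (by nlinarith [mul_self_nonneg z, mul_self_nonneg w, mul_self_nonneg u])
    interval_cases p <;> interval_cases r <;> first | omega | (interval_cases z <;> interval_cases w <;> first | omega | (interval_cases u <;> omega))

/-- The inequalities defining the lattice points of height `n` in the cone; `ht` says that the height is
`n`, and `ka`, `ka'` are the nef conditions not implied by the others. -/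
structure InSlice (ε : ℚ) (n : ℕ) (x : Cls) : Prop where
  ka : ∀ i, x.2.2 i ≤ x.1
  ka' : ∀ i, x.2.2 i ≤ x.2.1
  ht : x.2.2 0 + x.2.2 1 + x.2.2 2 + n = 2 * x.1 + 2 * x.2.1
  ha : 32 * ε * n + (x.2.2 0 + x.2.2 1 + x.2.2 2) ≤ 2 * x.1
  ha' : 32 * ε * n + (x.2.2 0 + x.2.2 1 + x.2.2 2) ≤ 2 * x.2.1
  kn : ∀ i, ε * n ≤ x.2.2 i

lemma InSlice.s1 {ε : ℚ} {n : ℕ} {x : Cls} (hε : 0 < ε) (h : InSlice ε n x) :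
    x.2.2 0 + x.2.2 1 + x.2.2 2 ≤ 2 * x.1 := by
  have h1 := h.ha
  have h2 : (0:ℚ) ≤ 32 * ε * n := by positivity
  have : ((x.2.2 0 : ℚ) + x.2.2 1 + x.2.2 2) ≤ 2 * x.1 := by linarith
  exact_mod_cast this

lemma InSlice.s2 {ε : ℚ} {n : ℕ} {x : Cls} (hε : 0 < ε) (h : InSlice ε n x) :
    x.2.2 0 + x.2.2 1 + x.2.2 2 ≤ 2 * x.2.1 := by
  have h1 := h.ha'
  have h2 : (0:ℚ) ≤ 32 * ε * n := by positivity
  have : ((x.2.2 0 : ℚ) + x.2.2 1 + x.2.2 2) ≤ 2 * x.2.1 := by linarith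
  exact_mod_cast this

lemma InSlice.aa {ε : ℚ} {n : ℕ} {x : Cls} (hε : 0 < ε) (h : InSlice ε n x) :
    x.1 + x.2.1 ≤ n := by
  have := h.s1 hε; have := h.s2 hε; have := h.ht; omega

/-- The lattice points of the cone of height exactly `n`, as a finite set. -/
def slice (ε : ℚ) (n : ℕ) : Finset Cls :=
  (Finset.range (n + 1) ×ˢ (Finset.range (n + 1) ×ˢ Fintype.piFinset fun _ => Finset.range (n + 1))).filter
    (InSlice ε n)

lemma mem_slice {ε : ℚ} (hε : 0 < ε) {n : ℕ} {x : Cls} : x ∈ slice ε n ↔ InSlice ε n x := by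
  rw [slice, Finset.mem_filter, and_iff_right_iff_imp]
  intro h
  have := h.aa hε
  rw [Finset.mem_product, Finset.mem_product, Fintype.mem_piFinset]
  refine ⟨Finset.mem_range.2 (by omega), Finset.mem_range.2 (by omega), fun i => Finset.mem_range.2 ?_⟩
  have := h.ka i
  omega

lemma mem_coneSet {ε : ℚ} (hε : 0 < ε) {d : ℕ} {x : Cls} :
    x ∈ coneSet 3 (32 * ε) ε d ↔ ∃ n ∈ Finset.Icc 1 d, x ∈ slice ε n := by
  have hs : ∑ i, (x.2.2 i : ℚ) = x.2.2 0 + x.2.2 1 + x.2.2 2 := Fin.sum_univ_three _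
  simp only [mem_slice hε]
  constructor
  · rintro ⟨h1, h2, h3, h4, h5, h6⟩
    have hp : 0 < 32 * ε * hQ 3 x := by positivity
    have t1 : x.2.2 0 + x.2.2 1 + x.2.2 2 ≤ 2 * x.1 := by
      have : (x.2.2 0 : ℚ) + x.2.2 1 + x.2.2 2 ≤ 2 * x.1 := by rw [← hs]; linarith
      exact_mod_cast this
    have t2 : x.2.2 0 + x.2.2 1 + x.2.2 2 ≤ 2 * x.2.1 := by
      have : (x.2.2 0 : ℚ) + x.2.2 1 + x.2.2 2 ≤ 2 * x.2.1 := by rw [← hs]; linarith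
      exact_mod_cast this
    obtain ⟨n, hn⟩ : ∃ n, x.2.2 0 + x.2.2 1 + x.2.2 2 + n = 2 * x.1 + 2 * x.2.1 :=
      ⟨_, Nat.add_sub_cancel' (by omega)⟩
    have hh : hQ 3 x = n := by
      rw [hQ, hs]
      have : (x.2.2 0 : ℚ) + x.2.2 1 + x.2.2 2 + n = 2 * x.1 + 2 * x.2.1 := by exact_mod_cast hn
      linarith
    rw [hh] at h2 h3 h4 h5 h6
    rw [hs] at h2 h3
    obtain ⟨n1, n2⟩ := (nef_iff x (by omega)).1 h1
    have h5 : 0 < n := by exact_mod_cast h5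
    have h6 : n ≤ d := by exact_mod_cast h6
    exact ⟨n, Finset.mem_Icc.2 ⟨h5, h6⟩, n1, n2, hn, by linarith, by linarith, h4⟩
  · rintro ⟨n, hn, h⟩
    rw [Finset.mem_Icc] at hn
    have hh : hQ 3 x = n := by
      rw [hQ, hs]
      have : (x.2.2 0 : ℚ) + x.2.2 1 + x.2.2 2 + n = 2 * x.1 + 2 * x.2.1 := by exact_mod_cast h.ht
      linarith
    have := h.s1 hε; have := h.s2 hε
    have q1 := h.ha
    have q2 := h.ha'
    refine ⟨(nef_iff x (by omega)).2 ⟨h.ka, h.ka'⟩, ?_, ?_, ?_, ?_, ?_⟩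
    · rw [hh, hs]; linarith
    · rw [hh, hs]; linarith
    · rw [hh]; exact h.kn
    · rw [hh]; exact_mod_cast (by omega : 0 < n)
    · rw [hh]; exact_mod_cast hn.2

lemma hN_slice {ε : ℚ} {n : ℕ} {x : Cls} (h : InSlice ε n x) : hN 3 x = n := by
  have := h.ht
  rw [hN, Fin.sum_univ_three]; omega

lemma finsum_cone {ε : ℚ} (hε : 0 < ε) (d : ℕ) (f : Cls → ℝ) :
    ∑ᶠ x ∈ coneSet 3 (32 * ε) ε d, f x = ∑ n ∈ Finset.Icc 1 d, ∑ x ∈ slice ε n, f x := by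
  have e : coneSet 3 (32 * ε) ε d = ↑((Finset.Icc 1 d).biUnion (slice ε)) := by
    ext x
    rw [mem_coneSet hε, Finset.mem_coe, Finset.mem_biUnion]
  rw [e, finsum_mem_coe_finset, Finset.sum_biUnion]
  · intro m _ n _ hmn
    refine Finset.disjoint_left.2 fun x h1 h2 => hmn ?_
    rw [← hN_slice ((mem_slice hε).1 h1), hN_slice ((mem_slice hε).1 h2)]

/-- Few lattice points of a slice lie close to a facet `a = kᵢ` or `a' = kᵢ`. -/
lemma card_layer {ε : ℚ} (hε : 0 < ε) (H n : ℕ) :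
    ((slice ε n).filter fun x => ∃ i, x.1 < x.2.2 i + H ∨ x.2.1 < x.2.2 i + H).card ≤
      6 * (H * (n + 1) ^ 3) := by
  have hsub : ((slice ε n).filter fun x => ∃ i, x.1 < x.2.2 i + H ∨ x.2.1 < x.2.2 i + H) ⊆
      (Finset.univ : Finset (Fin 3 × Bool)).biUnion fun s => (slice ε n).filter fun x =>
        (if s.2 then x.1 else x.2.1) < x.2.2 s.1 + H := by
    intro x hx
    obtain ⟨h1, i, h2⟩ := Finset.mem_filter.1 hx
    rw [Finset.mem_biUnion]
    rcases h2 with h2 | h2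
    · exact ⟨(i, true), Finset.mem_univ _, Finset.mem_filter.2 ⟨h1, by simpa using h2⟩⟩
    · exact ⟨(i, false), Finset.mem_univ _, Finset.mem_filter.2 ⟨h1, by simpa using h2⟩⟩
  refine (Finset.card_le_card hsub).trans (Finset.card_biUnion_le.trans ?_)
  have key : ∀ s : Fin 3 × Bool, ((slice ε n).filter fun x =>
      (if s.2 then x.1 else x.2.1) < x.2.2 s.1 + H).card ≤ H * (n + 1) ^ 3 := by
    rintro ⟨i, b⟩
    have hT : (Finset.range H ×ˢ (Finset.range (n + 1) ×ˢ (Finset.range (n + 1) ×ˢ Finset.range (n + 1)))).card =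
        H * (n + 1) ^ 3 := by
      simp only [Finset.card_product, Finset.card_range]; ring
    rw [← hT]
    refine Finset.card_le_card_of_injOn (fun x => ((if b then x.1 else x.2.1) - x.2.2 i,
      (if b then x.2.1 else x.1), x.2.2 i, x.2.2 (i + 1))) ?_ ?_
    · intro x hx
      obtain ⟨h1, h2⟩ := Finset.mem_filter.1 (Finset.mem_coe.1 hx)
      have h := (mem_slice hε).1 h1
      have a1 := h.ka i; have a2 := h.ka (i + 1); have a3 := h.ka' i; have a4 := h.aa hε
      simp only [Finset.coe_product, Finset.coe_range, Set.mem_prod, Set.mem_Iio]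
      cases b <;> simp only [if_true, if_false, Bool.false_eq_true] at h2 ⊢ <;> omega
    · intro x hx y hy he
      have h := (mem_slice hε).1 (Finset.mem_filter.1 (Finset.mem_coe.1 hx)).1
      have h' := (mem_slice hε).1 (Finset.mem_filter.1 (Finset.mem_coe.1 hy)).1
      have a1 := h.ka i; have a3 := h.ka' i
      have b1 := h'.ka i; have b3 := h'.ka' i
      have c1 := h.ht; have c2 := h'.ht
      obtain ⟨a, a', k⟩ := x
      obtain ⟨l, l', m⟩ := y
      simp only [Prod.mk.injEq] at *
      obtain ⟨e1, e2, e3, e4⟩ := he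
      have : a = l ∧ a' = l' := by
        cases b <;> simp only [if_true, if_false, Bool.false_eq_true] at e1 e2 <;> omega
      refine ⟨this.1, this.2, ?_⟩
      obtain ⟨rfl, rfl⟩ := this
      funext j
      fin_cases i <;> simp at e3 e4 <;> fin_cases j <;> simp <;> (try simp at e3 e4) <;> first | assumption | omega
  refine (Finset.sum_le_card_nsmul _ _ _ fun s _ => key s).trans ?_
  simp
end dP5

/-! ### Lattice points in a slice -/

namespace dP5
open scoped Classical Topology Pointwise
open MeasureTheory

/-- The section of the real cone by the hyperplane `h = 1`, in the coordinates
`(a, a', k₁, k₂)`; the last coordinate is `k₃ = 2a + 2a' - k₁ - k₂ - 1`. -/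
def reg (ε : ℝ) : Set (Fin 4 → ℝ) :=
  {p | p 2 ≤ p 0 ∧ p 3 ≤ p 0 ∧ p 0 + 2 * p 1 - p 2 - p 3 ≤ 1 ∧
    p 2 ≤ p 1 ∧ p 3 ≤ p 1 ∧ 2 * p 0 + p 1 - p 2 - p 3 ≤ 1 ∧
    32 * ε + 2 * p 1 ≤ 1 ∧ 32 * ε + 2 * p 0 ≤ 1 ∧
    ε ≤ p 2 ∧ ε ≤ p 3 ∧ ε + 1 ≤ 2 * p 0 + 2 * p 1 - p 2 - p 3}

lemma reg_convex (ε : ℝ) : Convex ℝ (reg ε) := by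
  rintro x ⟨a1, a2, a3, a4, a5, a6, a7, a8, a9, a10, a11⟩ y ⟨b1, b2, b3, b4, b5, b6, b7, b8, b9, b10, b11⟩ s t hs ht hst
  have key : ∀ {u v u' v' : ℝ}, u ≤ v → u' ≤ v' → s * u + t * u' ≤ s * v + t * v' := fun h h' =>
    add_le_add (mul_le_mul_of_nonneg_left h hs) (mul_le_mul_of_nonneg_left h' ht)
  have e : ∀ r : ℝ, s * r + t * r = r := fun r => by rw [← add_mul, hst, one_mul]
  have e1 := e 1
  have e2 := e (32 * ε)
  have e3 := e ε
  have c1 := key a1 b1; have c2 := key a2 b2; have c3 := key a3 b3; have c4 := key a4 b4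
  have c5 := key a5 b5; have c6 := key a6 b6; have c7 := key a7 b7; have c8 := key a8 b8
  have c9 := key a9 b9; have c10 := key a10 b10; have c11 := key a11 b11
  simp only [reg, Set.mem_ofPred_eq, Pi.add_apply, Pi.smul_apply, smul_eq_mul]
  refine ⟨?_, ?_, ?_, ?_, ?_, ?_, ?_, ?_, ?_, ?_, ?_⟩ <;> linarith

lemma reg_closed (ε : ℝ) : IsClosed (reg ε) := by
  simp only [reg, Set.ofPred_and]
  repeat' first | refine IsClosed.inter ?_ ?_ | exact isClosed_le (by fun_prop) (by fun_prop)

lemma reg_bounded {ε : ℝ} (hε : 0 < ε) : Bornology.IsBounded (reg ε) := by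
  refine (Metric.isBounded_Icc (0 : Fin 4 → ℝ) 1).subset ?_
  rintro x ⟨a1, a2, a3, a4, a5, a6, a7, a8, a9, a10, a11⟩
  constructor <;> intro i <;> fin_cases i <;> simp <;> linarith

lemma reg_volume_pos {ε : ℝ} (hε' : ε ≤ 1 / 1000) : 0 < volume.real (reg ε) ∨ volume (reg ε) = ⊤ := by
  have h : (0 : ENNReal) < volume (reg ε) := by
    refine Measure.measure_pos_of_mem_nhds volume (x := ![1/3, 1/3, 1/9, 1/9]) ?_
    have : {p : Fin 4 → ℝ | p 2 < p 0 ∧ p 3 < p 0 ∧ p 0 + 2 * p 1 - p 2 - p 3 < 1 ∧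
      p 2 < p 1 ∧ p 3 < p 1 ∧ 2 * p 0 + p 1 - p 2 - p 3 < 1 ∧
      32 * ε + 2 * p 1 < 1 ∧ 32 * ε + 2 * p 0 < 1 ∧
      ε < p 2 ∧ ε < p 3 ∧ ε + 1 < 2 * p 0 + 2 * p 1 - p 2 - p 3} ∈ 𝓝 (![1/3, 1/3, 1/9, 1/9] : Fin 4 → ℝ) := by
      refine IsOpen.mem_nhds ?_ ?_
      · simp only [Set.ofPred_and]
        repeat' first | refine IsOpen.inter ?_ ?_ | exact isOpen_lt (by fun_prop) (by fun_prop)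
      · simp only [Set.mem_ofPred_eq]
        have e0 : (![1/3, 1/3, 1/9, 1/9] : Fin 4 → ℝ) 0 = 1/3 := rfl
        have e1 : (![1/3, 1/3, 1/9, 1/9] : Fin 4 → ℝ) 1 = 1/3 := rfl
        have e2 : (![1/3, 1/3, 1/9, 1/9] : Fin 4 → ℝ) 2 = 1/9 := rfl
        have e3 : (![1/3, 1/3, 1/9, 1/9] : Fin 4 → ℝ) 3 = 1/9 := rfl
        rw [e0, e1, e2, e3]
        refine ⟨?_, ?_, ?_, ?_, ?_, ?_, ?_, ?_, ?_, ?_, ?_⟩ <;> linarith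
    refine mem_of_superset this ?_
    rintro x ⟨a1, a2, a3, a4, a5, a6, a7, a8, a9, a10, a11⟩
    exact ⟨a1.le, a2.le, a3.le, a4.le, a5.le, a6.le, a7.le, a8.le, a9.le, a10.le, a11.le⟩
  by_cases ht : volume (reg ε) = ⊤
  · exact Or.inr ht
  · exact Or.inl (ENNReal.toReal_pos h.ne' ht)

/-- Projection away from `k₃` identifies the slice of height `n` with the points of `n⁻¹ ℤ⁴` in the polytope. -/
lemma card_slice {ε : ℚ} (hε : 0 < ε) {n : ℕ} (hn : 0 < n) :
    Nat.card ↑(reg ε ∩ (n : ℝ)⁻¹ • (Submodule.span ℤ (Set.range (Pi.basisFun ℝ (Fin 4))) : Set (Fin 4 → ℝ))) =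
      (slice ε n).card := by
  have : NeZero n := ⟨hn.ne'⟩
  have latt : ∀ v : Fin 4 → ℝ,
      v ∈ (n : ℝ)⁻¹ • (Submodule.span ℤ (Set.range (Pi.basisFun ℝ (Fin 4))) : Set (Fin 4 → ℝ)) ↔
        ∀ i, n * v i ∈ Set.range (algebraMap ℤ ℝ) :=
    fun v => BoxIntegral.unitPartition.mem_smul_span_iff
  have hnR : (0:ℝ) < n := by exact_mod_cast hn
  rw [Nat.card_coe_set_eq, ← Set.ncard_coe_finset]
  symm
  have iff : ∀ x : Cls, x ∈ slice ε n → (x.2.2 0 : ℝ) + x.2.2 1 + x.2.2 2 + n = 2 * x.1 + 2 * x.2.1 := fun x hx => by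
    exact_mod_cast ((mem_slice hε).1 hx).ht
  refine Set.ncard_congr (fun x _ => (n:ℝ)⁻¹ • ![(x.1 : ℝ), x.2.1, x.2.2 0, x.2.2 1]) ?_ ?_ ?_
  · intro x hx
    have hx := Finset.mem_coe.1 hx
    have ht := iff x hx
    have h := (mem_slice hε).1 hx
    refine ⟨?_, ?_⟩
    · have a0 : (x.2.2 0 : ℝ) ≤ x.1 := by exact_mod_cast h.ka 0
      have a1 : (x.2.2 1 : ℝ) ≤ x.1 := by exact_mod_cast h.ka 1
      have a2 : (x.2.2 2 : ℝ) ≤ x.1 := by exact_mod_cast h.ka 2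
      have b0 : (x.2.2 0 : ℝ) ≤ x.2.1 := by exact_mod_cast h.ka' 0
      have b1 : (x.2.2 1 : ℝ) ≤ x.2.1 := by exact_mod_cast h.ka' 1
      have b2 : (x.2.2 2 : ℝ) ≤ x.2.1 := by exact_mod_cast h.ka' 2
      have c1 : 32 * (ε:ℝ) * n + (x.2.2 0 + x.2.2 1 + x.2.2 2) ≤ 2 * x.1 := by exact_mod_cast h.ha
      have c2 : 32 * (ε:ℝ) * n + (x.2.2 0 + x.2.2 1 + x.2.2 2) ≤ 2 * x.2.1 := by exact_mod_cast h.ha'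
      have d0 : (ε:ℝ) * n ≤ x.2.2 0 := by exact_mod_cast h.kn 0
      have d1 : (ε:ℝ) * n ≤ x.2.2 1 := by exact_mod_cast h.kn 1
      have d2 : (ε:ℝ) * n ≤ x.2.2 2 := by exact_mod_cast h.kn 2
      have key : ∀ {u v : ℝ}, n * u ≤ n * v → u ≤ v := fun h => le_of_mul_le_mul_left h hnR
      have f : ∀ y : ℝ, n * ((n:ℝ)⁻¹ * y) = y := fun y => by field_simp
      simp only [reg, Set.mem_ofPred_eq, Pi.smul_apply, smul_eq_mul, Matrix.cons_val]
      refine ⟨key ?_, key ?_, key ?_, key ?_, key ?_, key ?_, key ?_, key ?_, key ?_, key ?_, key ?_⟩ <;>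
        simp only [mul_add, mul_sub, mul_left_comm (n:ℝ) 2, f] <;> linarith
    · rw [latt]
      intro i
      rw [Pi.smul_apply, smul_eq_mul, mul_inv_cancel_left₀ hnR.ne']
      fin_cases i
      · exact ⟨x.1, by simp⟩
      · exact ⟨x.2.1, by simp⟩
      · exact ⟨x.2.2 0, by simp⟩
      · exact ⟨x.2.2 1, by simp⟩
  · intro x y hx hy he
    have hx := iff x (Finset.mem_coe.1 hx)
    have hy := iff y (Finset.mem_coe.1 hy)
    have he := smul_right_injective _ (inv_ne_zero hnR.ne') he
    have e0 : (x.1 : ℝ) = y.1 := congrFun he 0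
    have e1 : (x.2.1 : ℝ) = y.2.1 := congrFun he 1
    have e2 : (x.2.2 0 : ℝ) = y.2.2 0 := congrFun he 2
    have e3 : (x.2.2 1 : ℝ) = y.2.2 1 := congrFun he 3
    have e4 : (x.2.2 2 : ℝ) = y.2.2 2 := by linarith
    refine Prod.ext (by exact_mod_cast e0) (Prod.ext (by exact_mod_cast e1) (funext fun i => ?_))
    fin_cases i
    · exact_mod_cast e2
    · exact_mod_cast e3
    · exact_mod_cast e4
  · rintro p ⟨⟨a1, a2, a3, a4, a5, a6, a7, a8, a9, a10, a11⟩, hp⟩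
    rw [latt] at hp
    have hεR : (0:ℝ) < ε := by exact_mod_cast hε
    have nat : ∀ i, 0 ≤ p i → ∃ m : ℕ, n * p i = m := by
      intro i hi
      obtain ⟨z, hz⟩ := hp i
      have hz : (z:ℝ) = n * p i := by simpa using hz
      have : (0:ℝ) ≤ z := by rw [hz]; positivity
      have : 0 ≤ z := by exact_mod_cast this
      obtain ⟨m, rfl⟩ := Int.eq_ofNat_of_zero_le this
      exact ⟨m, by rw [← hz]; simp⟩
    obtain ⟨a, ha⟩ := nat 0 (by linarith)
    obtain ⟨a', ha'⟩ := nat 1 (by linarith)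
    obtain ⟨k0, hk0⟩ := nat 2 (by linarith)
    obtain ⟨k1, hk1⟩ := nat 3 (by linarith)
    have key : ∀ {u v : ℝ}, u ≤ v → n * u ≤ n * v := fun h => mul_le_mul_of_nonneg_left h hnR.le
    have b1 := key a1; have b2 := key a2; have b3 := key a3; have b4 := key a4; have b5 := key a5
    have b6 := key a6; have b7 := key a7; have b8 := key a8; have b9 := key a9; have b10 := key a10
    have b11 := key a11
    simp only [mul_add, mul_sub, mul_left_comm (n:ℝ) 2, ha, ha', hk0, hk1, mul_one] at b1 b2 b3 b4 b5 b6 b7 b8 b9 b10 b11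
    have hnε : 0 < n * (ε:ℝ) := by positivity
    obtain ⟨k2, hk2⟩ : ∃ k2 : ℕ, k0 + k1 + k2 + n = 2 * a + 2 * a' := by
      have : (k0:ℝ) + k1 + n ≤ 2 * a + 2 * a' := by linarith
      have : k0 + k1 + n ≤ 2 * a + 2 * a' := by exact_mod_cast this
      exact ⟨2 * a + 2 * a' - (k0 + k1 + n), by omega⟩
    have hk2R : (k0:ℝ) + k1 + k2 + n = 2 * a + 2 * a' := by exact_mod_cast hk2
    refine ⟨(a, a', ![k0, k1, k2]), Finset.mem_coe.2 ((mem_slice hε).2 ⟨?_, ?_, hk2, ?_, ?_, ?_⟩), ?_⟩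
    · intro i; fin_cases i
      · exact_mod_cast b1
      · exact_mod_cast b2
      · have : (k2:ℝ) ≤ a := by linarith
        exact_mod_cast this
    · intro i; fin_cases i
      · exact_mod_cast b4
      · exact_mod_cast b5
      · have : (k2:ℝ) ≤ a' := by linarith
        exact_mod_cast this
    · have : 32 * (ε:ℝ) * n + (k0 + k1 + k2) ≤ 2 * a := by linarith
      show 32 * ε * n + ((k0:ℚ) + k1 + k2) ≤ 2 * (a:ℚ)
      exact_mod_cast this
    · have : 32 * (ε:ℝ) * n + (k0 + k1 + k2) ≤ 2 * a' := by linarith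
      show 32 * ε * n + ((k0:ℚ) + k1 + k2) ≤ 2 * (a':ℚ)
      exact_mod_cast this
    · intro i
      rw [mul_comm]
      fin_cases i
      · show (n:ℚ) * ε ≤ k0
        exact_mod_cast b9
      · show (n:ℚ) * ε ≤ k1
        exact_mod_cast b10
      · have : n * (ε:ℝ) ≤ k2 := by linarith
        show (n:ℚ) * ε ≤ k2
        exact_mod_cast this
    · funext i
      rw [Pi.smul_apply, smul_eq_mul, inv_mul_eq_iff_eq_mul₀ hnR.ne']
      fin_cases i
      · exact ha.symm
      · exact ha'.symm
      · exact hk0.symm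
      · exact hk1.symm

/-- The slices of the cone have `~ V n⁴` lattice points, `V` being the volume of a
full-dimensional polytope. -/
theorem slice_asymp {ε : ℚ} (hε : 0 < ε) (hε' : ε ≤ 1 / 1000) : ∃ V : ℝ, 0 < V ∧
    Tendsto (fun n : ℕ => ((slice ε n).card : ℝ) / (n:ℝ) ^ 4) atTop (𝓝 V) := by
  have hεR : (0:ℝ) < ε := by exact_mod_cast hε
  have hεR' : (ε:ℝ) ≤ 1 / 1000 := by
    have : ((ε:ℚ):ℝ) ≤ ((1 / 1000 : ℚ) : ℝ) := by exact_mod_cast hε'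
    simpa using this
  refine ⟨volume.real (reg ε), (reg_volume_pos hεR').resolve_right (reg_bounded hεR).measure_lt_top.ne, ?_⟩
  have := tendsto_card_div_pow_atTop_volume (reg (ε:ℝ)) (reg_bounded hεR) (reg_closed _).measurableSet
    ((reg_convex _).addHaar_frontier volume)
  refine this.congr' ?_
  filter_upwards [eventually_gt_atTop 0] with n hn
  rw [card_slice hε hn, Fintype.card_fin]
end dP5

/-! ### Summation over the cone -/

namespace dP5
open scoped Classical Topology
variable {K : Type} [Field K] [Fintype K]

/-- Geometric averaging: a sum of `qⁿ uₙ` with `uₙ ~ V n⁴` is dominated by its last terms. -/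
lemma geom_average {q : ℝ} (hq : 1 < q) {u : ℕ → ℝ} {V : ℝ}
    (hu : Tendsto (fun n : ℕ => u n / (n : ℝ) ^ 4) atTop (𝓝 V)) :
    Tendsto (fun d : ℕ => (q ^ d)⁻¹ * ((d : ℝ) ^ 4)⁻¹ * ∑ n ∈ Finset.Icc 1 d, q ^ n * u n) atTop
      (𝓝 (V * (1 - q⁻¹)⁻¹)) := by
  have hq0 : 0 < q := by linarith
  obtain ⟨B, hB⟩ := (Metric.isBounded_range_of_tendsto _ hu).exists_norm_le
  have hB : ∀ n : ℕ, |u n / (n : ℝ) ^ 4| ≤ B := fun n => hB _ ⟨n, rfl⟩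
  have hB0 : 0 ≤ B := (abs_nonneg _).trans (hB 0)
  obtain ⟨F, hF⟩ : ∃ F : ℕ → ℕ → ℝ, F = fun d m => if m < d then
    q⁻¹ ^ m * ((((d - m : ℕ) : ℝ) / d) ^ 4 * (u (d - m) / ((d - m : ℕ) : ℝ) ^ 4)) else 0 := ⟨_, rfl⟩
  have hsum : ∀ d, ∑' m, F d m = (q ^ d)⁻¹ * ((d : ℝ) ^ 4)⁻¹ * ∑ n ∈ Finset.Icc 1 d, q ^ n * u n := by
    intro d
    rw [tsum_eq_sum (s := Finset.range d) (fun m hm => by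
      rw [hF]; exact if_neg fun h => hm (Finset.mem_range.2 h)), Finset.mul_sum]
    refine Finset.sum_nbij' (fun m => d - m) (fun n => d - n) ?_ ?_ ?_ ?_ ?_
    · intro m hm; have := Finset.mem_range.1 hm; exact Finset.mem_Icc.2 (by omega)
    · intro m hm; have := Finset.mem_Icc.1 hm; exact Finset.mem_range.2 (by omega)
    · intro m hm; have := Finset.mem_range.1 hm; omega
    · intro m hm; have := Finset.mem_Icc.1 hm; omega
    · intro m hm
      have hm := Finset.mem_range.1 hm
      simp only [hF]
      rw [if_pos hm]
      obtain ⟨n, hn⟩ : ∃ n, d = n + m := ⟨d - m, by omega⟩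
      have hnd : d - m = n := by omega
      have hn0 : (n:ℝ) ≠ 0 := by
        have : n ≠ 0 := by omega
        exact_mod_cast this
      have hd0 : (d:ℝ) ≠ 0 := by
        have : d ≠ 0 := by omega
        exact_mod_cast this
      rw [hnd]
      have e : q ^ d = q ^ n * q ^ m := by rw [hn, pow_add]
      rw [e, inv_pow]
      field_simp
  have hgeo : HasSum (fun m : ℕ => V * q⁻¹ ^ m) (V * (1 - q⁻¹)⁻¹) :=
    (hasSum_geometric_of_lt_one (by positivity) (inv_lt_one_of_one_lt₀ hq)).mul_left V
  have hT : Tendsto (fun d => ∑' m, F d m) atTop (𝓝 (∑' m : ℕ, V * q⁻¹ ^ m)) := by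
    refine tendsto_tsum_of_dominated_convergence (bound := fun m : ℕ => B * q⁻¹ ^ m) ?_ ?_ ?_
    · exact (summable_geometric_of_lt_one (by positivity) (inv_lt_one_of_one_lt₀ hq)).mul_left B
    · intro m
      have h1 : Tendsto (fun d : ℕ => u (d - m) / ((d - m : ℕ) : ℝ) ^ 4) atTop (𝓝 V) :=
        hu.comp (tendsto_sub_atTop_nat m)
      have h2 : Tendsto (fun d : ℕ => ((((d - m : ℕ) : ℝ) / d) ^ 4)) atTop (𝓝 ((1 - 0) ^ 4)) := by
        refine Tendsto.pow ?_ 4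
        refine ((tendsto_const_nhds (x := (1:ℝ))).sub (tendsto_const_div_atTop_nhds_zero_nat (m:ℝ))).congr' ?_
        filter_upwards [eventually_gt_atTop m] with d hd
        have hd0 : (d:ℝ) ≠ 0 := by
          have : d ≠ 0 := by omega
          exact_mod_cast this
        rw [Nat.cast_sub hd.le]
        field_simp
      have h3 := (h2.mul h1).const_mul (q⁻¹ ^ m)
      rw [sub_zero, one_pow, one_mul, mul_comm] at h3
      refine h3.congr' ?_
      filter_upwards [eventually_gt_atTop m] with d hd
      rw [hF]; exact (if_pos hd).symm
    · refine Eventually.of_forall fun d m => ?_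
      rw [hF]
      simp only
      split_ifs with h
      · rw [Real.norm_eq_abs, abs_mul, abs_mul, abs_of_nonneg (by positivity : 0 ≤ q⁻¹ ^ m),
          abs_of_nonneg (by positivity : 0 ≤ (((d - m : ℕ) : ℝ) / d) ^ 4), mul_comm B]
        refine mul_le_mul_of_nonneg_left ?_ (by positivity)
        have hd0 : (0:ℝ) < d := by
          have : 0 < d := by omega
          exact_mod_cast this
        have : (((d - m : ℕ) : ℝ) / d) ^ 4 ≤ 1 := by
          refine pow_le_one₀ (by positivity) ?_
          rw [div_le_one hd0]
          exact_mod_cast Nat.sub_le d m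
        calc _ ≤ 1 * B := mul_le_mul this (hB _) (abs_nonneg _) zero_le_one
          _ = B := one_mul B
      · rw [norm_zero]; positivity
  rw [hgeo.tsum_eq] at hT
  exact hT.congr hsum

/-- The torsor counts, normalised by their expected size. -/
def avg (γ γ' : Fin 3 → K) (ε : ℚ) (n : ℕ) : ℝ :=
  ∑ x ∈ slice ε n, (cX γ γ' x.2.2 x.1 x.2.1 : ℝ) / (qK K : ℝ) ^ (n + 7)

/-- The Euler product in the Tamagawa number. -/
def tau (K : Type) [Field K] [Fintype K] : ℝ := ∏' c : ClosedPoint K, tauFactor (qK K) 3 (cpDeg c)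

/-- `qⁿ` beats `8ʰ` as soon as `q^ε > 96`. -/
lemma big_pow {ε : ℚ} (hε : 0 < ε) (hC : (96:ℝ) < (qK K : ℝ) ^ (ε : ℝ)) (H : ℝ) (hH : 0 ≤ H) :
    ∀ᶠ n : ℕ in atTop, ∀ s ≤ n, H * (qK K * 8 ^ (s + 2)) ≤ (qK K : ℝ) ^ ⌊ε * n⌋₊ := by
  have hq0 := qR_pos (K := K)
  have hq1 : (1:ℝ) ≤ qK K := by linarith [two_le_qR (K := K)]
  have h12 := (tendsto_pow_atTop_atTop_of_one_lt (r := (12:ℝ)) (by norm_num)).eventually_ge_atTop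
    (H * (qK K * qK K * 64))
  filter_upwards [h12] with n hn s hs
  -- `96 = 12 * 8`: the factor `8 ^ n` absorbs `8 ^ s`, and `12 ^ n` absorbs the constant
  have h1 : (96:ℝ) ^ n ≤ (qK K : ℝ) ^ (⌊ε * n⌋₊ + 1) := by
    calc (96:ℝ) ^ n ≤ ((qK K : ℝ) ^ (ε : ℝ)) ^ n := pow_le_pow_left₀ (by norm_num) hC.le n
      _ = (qK K : ℝ) ^ ((ε : ℝ) * n) := by rw [Real.rpow_mul hq0.le, Real.rpow_natCast]
      _ ≤ (qK K : ℝ) ^ (((⌊ε * n⌋₊ + 1 : ℕ) : ℝ)) := by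
          refine Real.rpow_le_rpow_of_exponent_le hq1 ?_
          have := (Nat.lt_floor_add_one (ε * n)).le
          have h : ((ε * n : ℚ) : ℝ) ≤ ((⌊ε * n⌋₊ + 1 : ℚ) : ℝ) := by exact_mod_cast this
          push_cast at h ⊢
          exact h
      _ = _ := Real.rpow_natCast _ _
  rw [pow_succ] at h1
  have h2 : (8:ℝ) ^ s ≤ 8 ^ n := pow_le_pow_right₀ (by norm_num) hs
  have h3 : (96:ℝ) ^ n = 12 ^ n * 8 ^ n := by rw [← mul_pow]; norm_num
  refine le_of_mul_le_mul_right ?_ hq0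
  calc H * (qK K * 8 ^ (s + 2)) * qK K = H * (qK K * qK K * 64) * 8 ^ s := by ring
    _ ≤ 12 ^ n * 8 ^ n := mul_le_mul hn h2 (by positivity) (by positivity)
    _ ≤ _ := by rw [← h3]; exact h1

/-- Off the layer near the facets the torsor count is close to its expected value. -/
lemma avg_close (γ γ' : Fin 3 → K) (hγ : ∀ i, γ i ≠ 0) (hγ' : ∀ i, γ' i ≠ 0) {ε : ℚ} (hε : 0 < ε)
    (hC : (96:ℝ) < (qK K : ℝ) ^ (ε : ℝ)) (δ : ℝ) (hδ : 0 < δ) : ∃ H : ℕ, ∀ᶠ n : ℕ in atTop,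
    |avg γ γ' ε n - tau K * (slice ε n).card| ≤
      δ * (slice ε n).card + (1 + |tau K|) * (6 * (H * (n + 1) ^ 3)) := by
  obtain ⟨H, hH⟩ := asymp γ γ' hγ hγ' δ hδ
  refine ⟨H, ?_⟩
  have hq0 := qR_pos (K := K)
  have hfl : ∀ᶠ n : ℕ in atTop, H ≤ ⌊ε * n⌋₊ := by
    obtain ⟨N, hN⟩ := exists_nat_ge ((H : ℚ) / ε)
    filter_upwards [eventually_ge_atTop N] with n hn
    refine Nat.le_floor ?_
    rw [div_le_iff₀' hε] at hN
    have : (N:ℚ) ≤ n := by exact_mod_cast hn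
    nlinarith
  filter_upwards [big_pow hε hC H H.cast_nonneg, hfl] with n hn hf
  have hx : ∀ x ∈ slice ε n, |(cX γ γ' x.2.2 x.1 x.2.1 : ℝ) / (qK K : ℝ) ^ (n + 7) - tau K| ≤
      δ + if ∃ i, x.1 < x.2.2 i + H ∨ x.2.1 < x.2.2 i + H then (1 + |tau K|) else 0 := by
    intro x hx
    have h := (mem_slice hε).1 hx
    have s1 := h.s1 hε
    have s2 := h.s2 hε
    have ht := h.ht
    have hsum : ∑ i, x.2.2 i = x.2.2 0 + x.2.2 1 + x.2.2 2 := Fin.sum_univ_three _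
    have hex : 2 * x.1 + 2 * x.2.1 - ∑ i, x.2.2 i + 7 = n + 7 := by rw [hsum]; omega
    have hP : (0:ℝ) < (qK K : ℝ) ^ (n + 7) := by positivity
    split_ifs with hl
    · have h1 := cX_le hγ hγ' h.ka h.ka' (by rw [hsum]; exact s1) (by rw [hsum]; exact s2)
      rw [hex] at h1
      have h2 : (cX γ γ' x.2.2 x.1 x.2.1 : ℝ) / (qK K : ℝ) ^ (n + 7) ≤ 1 := by
        rw [div_le_one hP]; exact_mod_cast h1
      have h3 : (0:ℝ) ≤ (cX γ γ' x.2.2 x.1 x.2.1 : ℝ) / (qK K : ℝ) ^ (n + 7) := by positivity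
      refine (abs_sub _ _).trans ?_
      rw [abs_of_nonneg h3]
      linarith
    · push Not at hl
      have fl : ((⌊ε * n⌋₊ : ℕ) : ℚ) ≤ ε * n := Nat.floor_le (by positivity)
      have h1 := hH x.2.2 x.1 x.2.1 ⌊ε * n⌋₊ ⟨fun i => (hl i).1, fun i => (hl i).2, fun i => ?_, hf, ?_, ?_⟩ 
        (hn _ (h.aa hε))
      · rw [hex] at h1
        have e : (cX γ γ' x.2.2 x.1 x.2.1 : ℝ) / (qK K : ℝ) ^ (n + 7) - tau K =
          ((cX γ γ' x.2.2 x.1 x.2.1 : ℝ) - (qK K : ℝ) ^ (n + 7) * tau K) / (qK K : ℝ) ^ (n + 7) := by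
          field_simp
        rw [e, abs_div, abs_of_pos hP, div_le_iff₀ hP, add_zero]
        exact h1
      · have := fl.trans (h.kn i)
        exact_mod_cast this
      · have : (x.2.2 0 + x.2.2 1 + x.2.2 2 : ℚ) + 32 * (⌊ε * n⌋₊ : ℕ) ≤ 2 * x.1 := by
          have := h.ha; linarith
        rw [hsum]
        exact_mod_cast this
      · have : (x.2.2 0 + x.2.2 1 + x.2.2 2 : ℚ) + 32 * (⌊ε * n⌋₊ : ℕ) ≤ 2 * x.2.1 := by
          have := h.ha'; linarith
        rw [hsum]
        exact_mod_cast this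
  have e : avg γ γ' ε n - tau K * (slice ε n).card =
      ∑ x ∈ slice ε n, ((cX γ γ' x.2.2 x.1 x.2.1 : ℝ) / (qK K : ℝ) ^ (n + 7) - tau K) := by
    rw [Finset.sum_sub_distrib, Finset.sum_const, nsmul_eq_mul, avg, mul_comm]
  rw [e]
  refine (Finset.abs_sum_le_sum_abs _ _).trans ((Finset.sum_le_sum hx).trans ?_)
  rw [Finset.sum_add_distrib, Finset.sum_const, ← Finset.sum_filter, Finset.sum_const, nsmul_eq_mul,
    nsmul_eq_mul, mul_comm, mul_comm _ (1 + |tau K|)]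
  have := card_layer hε H n
  have h6 : ((((slice ε n).filter fun x => ∃ i, x.1 < x.2.2 i + H ∨ x.2.1 < x.2.2 i + H).card : ℕ) : ℝ) ≤
      6 * (H * (n + 1) ^ 3) := by exact_mod_cast this
  have h7 : 0 ≤ 1 + |tau K| := by positivity
  have := mul_le_mul_of_nonneg_left h6 h7
  linarith

/-- The layer near the facets has `O(n³)` points, so it does not affect the leading term. -/
lemma avg_asymp (γ γ' : Fin 3 → K) (hγ : ∀ i, γ i ≠ 0) (hγ' : ∀ i, γ' i ≠ 0) {ε : ℚ} (hε : 0 < ε)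
    (hC : (96:ℝ) < (qK K : ℝ) ^ (ε : ℝ)) {V : ℝ} (hV0 : 0 < V)
    (hV : Tendsto (fun n : ℕ => ((slice ε n).card : ℝ) / (n:ℝ) ^ 4) atTop (𝓝 V)) :
    Tendsto (fun n : ℕ => avg γ γ' ε n / (n:ℝ) ^ 4) atTop (𝓝 (tau K * V)) := by
  have h0 : Tendsto (fun n : ℕ => (avg γ γ' ε n - tau K * (slice ε n).card) / (n:ℝ) ^ 4) atTop (𝓝 0) := by
    rw [Metric.tendsto_atTop']
    intro η hη
    obtain ⟨H, hH⟩ := avg_close γ γ' hγ hγ' hε hC (η / (4 * V)) (by positivity)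
    have hl : Tendsto (fun n : ℕ => (1 + |tau K|) * (6 * (H * 8)) / (n:ℝ)) atTop (𝓝 0) :=
      tendsto_const_div_atTop_nhds_zero_nat _
    have hev := (hH.and ((hV.eventually_le_const (by linarith : V < 2 * V)).and
      ((hl.eventually_lt_const (by positivity : 0 < η / 2)).and (eventually_gt_atTop 0))))
    obtain ⟨N, hN⟩ := eventually_atTop.1 hev
    refine ⟨N, fun n hn => ?_⟩
    obtain ⟨h1, h2, h3, h4⟩ := hN n hn.le
    have hnR : (1:ℝ) ≤ n := by exact_mod_cast h4
    have hn0 : (0:ℝ) < n := by linarith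
    rw [Real.dist_eq, sub_zero, abs_div, abs_of_pos (by positivity : (0:ℝ) < (n:ℝ) ^ 4)]
    have hn3 : ((n:ℝ) + 1) ^ 3 ≤ 8 * n ^ 3 := by
      calc ((n:ℝ) + 1) ^ 3 ≤ (2 * n) ^ 3 := pow_le_pow_left₀ (by positivity) (by linarith) 3
        _ = 8 * n ^ 3 := by ring
    calc |avg γ γ' ε n - tau K * (slice ε n).card| / (n:ℝ) ^ 4
        ≤ (η / (4 * V) * (slice ε n).card + (1 + |tau K|) * (6 * (H * (8 * n ^ 3)))) / (n:ℝ) ^ 4 := by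
          gcongr
          refine h1.trans ?_
          gcongr
      _ = η / (4 * V) * ((slice ε n).card / (n:ℝ) ^ 4) + (1 + |tau K|) * (6 * (H * 8)) / n := by
          field_simp
      _ < η / (4 * V) * (2 * V) + η / 2 := by
          refine add_lt_add_of_le_of_lt ?_ h3
          gcongr
      _ = η := by field_simp; ring
  have h1 := h0.add (hV.const_mul (tau K))
  rw [zero_add] at h1
  refine h1.congr fun n => ?_
  ring

/-- The asymptotic formula, with `α(𝒞_ε) = V / (1 - q⁻¹)` for the volume `V` of the polytope. -/
theorem tendsto_count {c c' : Fin 3 → K} (hc : Function.Injective c) (hc' : Function.Injective c') {ε : ℚ} (hε : 0 < ε)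
    (hε' : ε ≤ 1 / 1000) (hC : (96:ℝ) < (qK K : ℝ) ^ (ε : ℝ)) :
    ∃ A : ℝ, 0 < A ∧
      Tendsto (fun d : ℕ => ((qK K : ℝ) ^ d)⁻¹ * ((d : ℝ) ^ 4)⁻¹ *
        ∑ᶠ x ∈ coneSet 3 (32 * ε) ε d, (qK K : ℝ) ^ (hN 3 x)) atTop (𝓝 A) ∧
      Tendsto (fun d : ℕ => (((qK K : ℝ) - 1) ^ 2)⁻¹ * (∑ᶠ x ∈ coneSet 3 (32 * ε) ε d,
          ((MtildeSet K 3 c c' x.1 x.2.1 x.2.2).ncard : ℝ)) / ((qK K : ℝ) ^ d * (d : ℝ) ^ 4))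
        atTop (𝓝 (A * tauNumber K 3)) := by
  have hq := two_le_qR (K := K)
  have hq0 := qR_pos (K := K)
  have hq1 : (0:ℝ) < qK K - 1 := by linarith
  have hinv : (0:ℝ) < 1 - (qK K : ℝ)⁻¹ := by
    have : (qK K : ℝ)⁻¹ < 1 := inv_lt_one_of_one_lt₀ (by linarith)
    linarith
  obtain ⟨V, hV0, hV⟩ := slice_asymp hε hε'
  refine ⟨V * (1 - (qK K : ℝ)⁻¹)⁻¹, by positivity, ?_, ?_⟩
  · refine (geom_average (by linarith) hV).congr fun d => ?_
    rw [finsum_cone hε]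
    congr 1
    refine Finset.sum_congr rfl fun n _ => ?_
    rw [Finset.sum_congr rfl fun x hx => by rw [hN_slice ((mem_slice hε).1 hx)], Finset.sum_const, nsmul_eq_mul,
      mul_comm]
  · have h1 := geom_average (q := qK K) (by linarith)
      (avg_asymp (gam c) (gam c') (gam_ne hc) (gam_ne hc') hε hC hV0 hV)
    have h2 := h1.const_mul ((qK K : ℝ) ^ 7 * (((qK K : ℝ) - 1) ^ 5)⁻¹)
    have e : (qK K : ℝ) ^ 7 * (((qK K : ℝ) - 1) ^ 5)⁻¹ * (tau K * V * (1 - (qK K : ℝ)⁻¹)⁻¹) =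
        V * (1 - (qK K : ℝ)⁻¹)⁻¹ * tauNumber K 3 := by
      have e1 : 1 - (qK K : ℝ)⁻¹ = ((qK K : ℝ) - 1) / qK K := by field_simp
      have e2 : tauNumber K 3 = (qK K : ℝ) ^ 2 * ((1 - (qK K : ℝ)⁻¹) ^ 5)⁻¹ * tau K := rfl
      rw [e2, e1]
      field_simp
    rw [e] at h2
    refine h2.congr fun d => ?_
    rw [finsum_cone hε]
    have e3 : ∑ n ∈ Finset.Icc 1 d, (qK K : ℝ) ^ n * avg (gam c) (gam c') ε n =
        ((qK K : ℝ) - 1) ^ 3 * ((qK K : ℝ) ^ 7)⁻¹ *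
        ∑ n ∈ Finset.Icc 1 d, ∑ x ∈ slice ε n, ((MtildeSet K 3 c c' x.1 x.2.1 x.2.2).ncard : ℝ) := by
      rw [Finset.mul_sum]
      refine Finset.sum_congr rfl fun n _ => ?_
      rw [avg, Finset.mul_sum, Finset.mul_sum]
      refine Finset.sum_congr rfl fun x hx => ?_
      have h := (mem_slice hε).1 hx
      have h3 : ((MtildeSet K 3 c c' x.1 x.2.1 x.2.2).ncard : ℝ) * ((qK K : ℝ) - 1) ^ 3 =
          cX (gam c) (gam c') x.2.2 x.1 x.2.1 := by
        rw [← card_Mtilde hc hc' h.ka h.ka']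
        push_cast
        rw [Nat.cast_sub (by have := one_lt_qK (K := K); omega)]
        simp
      rw [← h3, pow_add]
      field_simp
    rw [e3]
    field_simp
end dP5

/-- Peyre's all-heights Manin conjecture for split quintic del Pezzo surfaces over
`𝔽_q(t)`: there are uniform constants `C, C₃ ≥ 1` and a uniform `ε₀ > 0` such that for
every finite field of cardinality `q`, all choices of pairwise distinct blow-up
coordinates, and every rational `0 < ε ≤ ε₀` with `q^ε > C` and `q > C₃`, the alpha
constant `α(𝒞_ε) = lim_d q^{−d} d^{−4} Σ_{α ∈ 𝒞_ε, 0 < h(α) ≤ d} q^{h(α)}` exists and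
is positive, and `N(𝒞_ε, d)/(q^d d⁴) → α(𝒞_ε) τ₃(q)`. -/
theorem manin_peyre_quintic_delPezzo :
    ∃ C C₃ : ℝ, 1 ≤ C ∧ 1 ≤ C₃ ∧ ∃ ε₀ : ℚ, 0 < ε₀ ∧
      ∀ (K : Type) [Field K] [Fintype K],
      ∀ (c c' : Fin 3 → K), Function.Injective c → Function.Injective c' →
      ∀ ε : ℚ, 0 < ε → ε ≤ ε₀ →
        C < (Fintype.card K : ℝ) ^ (ε : ℝ) →
        C₃ < (Fintype.card K : ℝ) →
        ∃ A : ℝ, 0 < A ∧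
          Tendsto (fun d : ℕ =>
              ((Fintype.card K : ℝ) ^ d)⁻¹ * ((d : ℝ) ^ 4)⁻¹ *
                ∑ᶠ x ∈ coneSet 3 (32 * ε) ε d, (Fintype.card K : ℝ) ^ (hN 3 x))
            atTop (nhds A) ∧
          Tendsto (fun d : ℕ =>
              (((Fintype.card K : ℝ) - 1) ^ 2)⁻¹ *
                (∑ᶠ x ∈ coneSet 3 (32 * ε) ε d,
                  ((MtildeSet K 3 c c' x.1 x.2.1 x.2.2).ncard : ℝ)) /
                ((Fintype.card K : ℝ) ^ d * (d : ℝ) ^ 4))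
            atTop (nhds (A * tauNumber K 3)) := by
  refine ⟨96, 1, by norm_num, le_rfl, 1 / 1000, by norm_num, ?_⟩
  intro K _ _ c c' hc hc' ε hε hε' hC _
  exact dP5.tendsto_count hc hc' hε hε' hC

end
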